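/- For every nonnegative integer n and every k with 0 ≤ k ≤ 6, N(k,7,7n+5) = p(7n+5)/7. -/

import Mathlib

/-- The rank of a partition: its largest part minus its number of parts. -/
def Nat.Partition.rank {n : ℕ} (π : Nat.Partition n) : ℤ :=
  (π.parts.sup : ℤ) - (Multiset.card π.parts : ℤ)

/-!
Dyson's adjoint of a partition yields a recurrence for the number of partitions of rank at least
`m`, whence the generating functions of the rank counts are those of `p(n)` times Lambert type
series. Equidistribution of the rank modulo seven is equivalent to three linear relations between
`p(n)` and the rank counts, and for each of them the generating function of the defect is a
product `P(q) S(q)`, where `S` is an Appell sum and `1 / P` is Euler's pentagonal number series.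

The part of `P(q) S(q)` supported on the exponents `7 n + 5` is the average of
`t ^ 2 P(t q) S(t q)` over the seventh roots of unity `t`. By the quintuple product identity,
Euler's series at `t q` is a polynomial in a power `τ` of `t` whose coefficients are values of the
theta function of nome `q ^ 49` at powers of `q ^ 7`. The Appell sum in `z`, cleared of its
denominators, and four products of theta functions are quasi-periodic of degree four, hence
linearly dependent; a linear functional combining a derivative at `1` with values at powers of
`q ^ 7` turns this dependence into an expression of `S(t q)` as a polynomial in `τ` of the same
kind. The average then vanishes, on dividing by Euler's series by means of its circulant
determinant and using Klein's quartic relation between the theta values. The denominators which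
occur do not vanish for small positive `q`, which is enough to compare coefficients.
-/

namespace DysonRank

/-! ### Dyson's adjoint of a partition -/

section Adjoint

open Multiset

theorem sup_mem_of_ne_zero {s : Multiset ℕ} (hs : s ≠ 0) : s.sup ∈ s := by
  induction s using Multiset.induction_on with
  | empty => exact absurd rfl hs
  | cons a s ih =>
    rcases eq_or_ne s 0 with rfl | hs'
    · simp
    · rw [sup_cons]
      rcases le_total a s.sup with h | h
      · rw [sup_of_le_right h]
        exact mem_cons_of_mem (ih hs')
      · rw [sup_of_le_left h]
        exact mem_cons_self a s

theorem sup_le_sum (s : Multiset ℕ) : s.sup ≤ s.sum :=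
  Multiset.sup_le.mpr fun _ hb => le_sum_of_mem hb

theorem sum_map_succ (s : Multiset ℕ) : (s.map Nat.succ).sum = s.sum + card s := by
  simp [Nat.succ_eq_add_one, sum_map_add]

theorem map_succ_map_pred {s : Multiset ℕ} (hs : ∀ i ∈ s, 0 < i) :
    (s.map Nat.pred).map Nat.succ = s := by
  rw [map_map]
  exact (map_congr rfl fun i hi => Nat.succ_pred_eq_of_pos (hs i hi)).trans (map_id s)

theorem sum_map_pred_add_card {s : Multiset ℕ} (hs : ∀ i ∈ s, 0 < i) :
    (s.map Nat.pred).sum + card s = s.sum := by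
  conv_rhs => rw [← map_succ_map_pred hs, sum_map_succ, card_map]

theorem card_le_sum {s : Multiset ℕ} (hs : ∀ i ∈ s, 0 < i) : card s ≤ s.sum :=
  sum_map_pred_add_card hs ▸ Nat.le_add_left _ _

theorem sum_filter_pos (s : Multiset ℕ) : (filter (0 < ·) s).sum = s.sum := by
  have hzero : (filter (¬ 0 < ·) s).sum = 0 :=
    Multiset.sum_eq_zero fun i hi => Nat.eq_zero_of_not_pos (mem_filter.mp hi).2
  conv_rhs => rw [← filter_add_not (0 < ·) s, sum_add, hzero, add_zero]

theorem map_succ_filter_pred (s : Multiset ℕ) :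
    (filter (0 < ·) (s.map Nat.pred)).map Nat.succ = filter (1 < ·) s := by
  rw [filter_map, map_map]
  refine (map_congr (filter_congr fun i _ => Nat.lt_pred_iff) fun i hi => ?_).trans (map_id _)
  exact Nat.succ_pred_eq_of_pos (pos_of_gt (mem_filter.mp hi).2)

theorem filter_one_lt_add_replicate {s : Multiset ℕ} (hs : ∀ i ∈ s, 0 < i) :
    filter (1 < ·) s + replicate (card s - card (filter (1 < ·) s)) 1 = s := by
  have hones : filter (¬ 1 < ·) s = replicate (card (filter (¬ 1 < ·) s)) 1 :=
    eq_replicate_card.mpr fun i hi =>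
      le_antisymm (not_lt.mp (mem_filter.mp hi).2) (hs i (mem_filter.mp hi).1)
  have hsplit := filter_add_not (1 < ·) s
  have hcard := congrArg card hsplit
  rw [card_add] at hcard
  rw [← Nat.eq_sub_of_add_eq' hcard, ← hones, hsplit]

/-- Remove the first column of a Ferrers diagram (each row loses a cell) and add a row of
length `b`. -/
def columnToRow (b : ℕ) (s : Multiset ℕ) : Multiset ℕ :=
  filter (0 < ·) (b ::ₘ s.map Nat.pred)

/-- Remove the largest row of a Ferrers diagram and add a first column of height `c`; the height
is correct as soon as `c` is at least the number of remaining rows. -/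
def rowToColumn (c : ℕ) (u : Multiset ℕ) : Multiset ℕ :=
  (u.erase u.sup).map Nat.succ + replicate (c - card (u.erase u.sup)) 1

theorem pos_of_mem_columnToRow {b i : ℕ} {s : Multiset ℕ} (hi : i ∈ columnToRow b s) : 0 < i :=
  (mem_filter.mp hi).2

theorem sum_columnToRow (b : ℕ) {s : Multiset ℕ} (hs : ∀ i ∈ s, 0 < i) :
    (columnToRow b s).sum + card s = b + s.sum := by
  rw [columnToRow, sum_filter_pos, sum_cons, add_assoc, sum_map_pred_add_card hs]

theorem card_columnToRow_le (b : ℕ) (s : Multiset ℕ) : card (columnToRow b s) ≤ card s + 1 :=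
  (card_le_card (filter_le _ _)).trans (by simp)

theorem sup_columnToRow {b : ℕ} {s : Multiset ℕ} (h : s.sup ≤ b + 1) :
    (columnToRow b s).sup = b := by
  refine le_antisymm (Multiset.sup_le.mpr fun i hi => ?_) ?_
  · rcases mem_cons.mp (mem_filter.mp hi).1 with rfl | hi
    · exact le_rfl
    · obtain ⟨j, hj, rfl⟩ := mem_map.mp hi
      exact Nat.pred_le_iff.mpr ((le_sup hj).trans h)
  · rcases Nat.eq_zero_or_pos b with rfl | hb
    · exact Nat.zero_le _
    · exact le_sup (mem_filter.mpr ⟨mem_cons_self _ _, hb⟩)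

theorem erase_sup_columnToRow {b : ℕ} {s : Multiset ℕ} (h : s.sup ≤ b + 1) :
    (columnToRow b s).erase (columnToRow b s).sup = filter (0 < ·) (s.map Nat.pred) := by
  rw [sup_columnToRow h, columnToRow]
  rcases Nat.eq_zero_or_pos b with rfl | hb
  · rw [filter_cons_of_neg _ (lt_irrefl 0), erase_of_notMem (by simp)]
  · rw [filter_cons_of_pos (p := (0 < ·)) _ hb, erase_cons_head]

theorem rowToColumn_columnToRow {b : ℕ} {s : Multiset ℕ} (hs : ∀ i ∈ s, 0 < i)
    (h : s.sup ≤ b + 1) : rowToColumn (card s) (columnToRow b s) = s := by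
  rw [rowToColumn, erase_sup_columnToRow h, map_succ_filter_pred,
    ← card_map Nat.succ (filter _ _), map_succ_filter_pred, filter_one_lt_add_replicate hs]

theorem pos_of_mem_rowToColumn {c i : ℕ} {u : Multiset ℕ} (hi : i ∈ rowToColumn c u) :
    0 < i := by
  rcases mem_add.mp hi with hi | hi
  · obtain ⟨j, -, rfl⟩ := mem_map.mp hi
    exact j.succ_pos
  · exact eq_of_mem_replicate hi ▸ one_pos

theorem card_erase_sup_le {c : ℕ} {u : Multiset ℕ} (h : card u ≤ c + 1) :
    card (u.erase u.sup) ≤ c := by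
  rcases eq_or_ne u 0 with rfl | hu
  · simp
  · rw [card_erase_of_mem (sup_mem_of_ne_zero hu)]
    exact Nat.pred_le_iff.mpr h

theorem card_rowToColumn {c : ℕ} {u : Multiset ℕ} (h : card u ≤ c + 1) :
    card (rowToColumn c u) = c := by
  rw [rowToColumn, card_add, card_map, card_replicate, Nat.add_sub_cancel' (card_erase_sup_le h)]

theorem sum_rowToColumn {c : ℕ} {u : Multiset ℕ} (h : card u ≤ c + 1) :
    (rowToColumn c u).sum + u.sup = u.sum + c := by
  have hsum : u.sup + (u.erase u.sup).sum = u.sum := by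
    rcases eq_or_ne u 0 with rfl | hu
    · simp
    · exact sum_erase (sup_mem_of_ne_zero hu)
  have hcard := card_erase_sup_le h
  rw [rowToColumn, sum_add, sum_map_succ, sum_replicate, smul_eq_mul, mul_one]
  lia

theorem sup_rowToColumn_le (c : ℕ) (u : Multiset ℕ) : (rowToColumn c u).sup ≤ u.sup + 1 := by
  refine Multiset.sup_le.mpr fun i hi => ?_
  rcases mem_add.mp hi with hi | hi
  · obtain ⟨j, hj, rfl⟩ := mem_map.mp hi
    exact Nat.succ_le_succ (le_sup (mem_of_mem_erase hj))
  · rw [eq_of_mem_replicate hi]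
    exact Nat.le_add_left 1 _

theorem filter_map_pred_rowToColumn (c : ℕ) {u : Multiset ℕ} (hu : ∀ i ∈ u, 0 < i) :
    filter (0 < ·) ((rowToColumn c u).map Nat.pred) = u.erase u.sup := by
  have hcomp : Nat.pred ∘ Nat.succ = id := rfl
  have hones (k : ℕ) : filter (0 < ·) (replicate k (Nat.pred 1)) = 0 :=
    filter_eq_nil.mpr fun i hi => by simp [eq_of_mem_replicate hi]
  rw [rowToColumn, Multiset.map_add, filter_add, map_map, hcomp, map_id, map_replicate, hones,
    add_zero, filter_eq_self]
  exact fun i hi => hu i (mem_of_mem_erase hi)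

theorem columnToRow_rowToColumn (c : ℕ) {u : Multiset ℕ} (hu : ∀ i ∈ u, 0 < i) :
    columnToRow u.sup (rowToColumn c u) = u := by
  rw [columnToRow, filter_cons, filter_map_pred_rowToColumn c hu]
  rcases eq_or_ne u 0 with rfl | h0
  · simp
  · rw [if_pos (hu _ (sup_mem_of_ne_zero h0)), singleton_add, cons_erase (sup_mem_of_ne_zero h0)]

theorem parts_eq_zero_or_pos {n : ℕ} (π : Nat.Partition n) :
    π.parts = 0 ∨ 0 < π.parts.sup ∧ 0 < card π.parts :=
  (eq_or_ne π.parts 0).imp_right fun h =>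
    ⟨π.parts_pos (sup_mem_of_ne_zero h), card_pos.mpr h⟩

theorem eq_zero_of_parts_eq_zero {n : ℕ} {π : Nat.Partition n} (h : π.parts = 0) : n = 0 := by
  rw [← π.parts_sum, h, sum_zero]

theorem card_parts_add_nonneg {n : ℕ} {π : Nat.Partition n} {r : ℤ} (hr : 0 ≤ n + r)
    (hπ : π.rank ≤ r + 1) : 0 ≤ card π.parts + r := by
  unfold Nat.Partition.rank at hπ
  rcases parts_eq_zero_or_pos π with h | h
  · have := eq_zero_of_parts_eq_zero h
    lia
  · lia

theorem sup_parts_sub_nonneg {n : ℕ} {π : Nat.Partition n} {r : ℤ} (hr : 0 ≤ n - r)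
    (hπ : r - 1 ≤ π.rank) : 0 ≤ π.parts.sup - r := by
  unfold Nat.Partition.rank at hπ
  rcases parts_eq_zero_or_pos π with h | h
  · have := eq_zero_of_parts_eq_zero h
    lia
  · lia

/-- Dyson's adjoint of a partition of rank at most `r + 1`: the first column becomes a row which
is `r` longer. -/
def adjoint {n m : ℕ} {r : ℤ} (hnm : (m : ℤ) = n + r) (π : Nat.Partition n)
    (hπ : π.rank ≤ r + 1) : Nat.Partition m where
  parts := columnToRow (card π.parts + r).toNat π.parts
  parts_pos := pos_of_mem_columnToRow
  parts_sum := by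
    have hb := card_parts_add_nonneg (by lia) hπ
    have hsum := sum_columnToRow (card π.parts + r).toNat fun _ => π.parts_pos
    rw [π.parts_sum] at hsum
    lia

/-- The inverse of `adjoint`: the largest row becomes a column which is `r` shorter. -/
def coadjoint {n m : ℕ} {r : ℤ} (hnm : (m : ℤ) = n + r) (π : Nat.Partition m)
    (hπ : r - 1 ≤ π.rank) : Nat.Partition n where
  parts := rowToColumn (π.parts.sup - r).toNat π.parts
  parts_pos := pos_of_mem_rowToColumn
  parts_sum := by
    have hc := sup_parts_sub_nonneg (by lia) hπ
    have hsum := sum_rowToColumn (c := (π.parts.sup - r).toNat) (u := π.parts)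
      (by unfold Nat.Partition.rank at hπ; lia)
    rw [π.parts_sum] at hsum
    lia

theorem sup_parts_adjoint {n m : ℕ} {r : ℤ} (hnm : (m : ℤ) = n + r) {π : Nat.Partition n}
    (hπ : π.rank ≤ r + 1) : ((adjoint hnm π hπ).parts.sup : ℤ) = card π.parts + r := by
  have hb := card_parts_add_nonneg (by lia) hπ
  have hsup := sup_columnToRow (b := (card π.parts + r).toNat) (s := π.parts)
    (by unfold Nat.Partition.rank at hπ; lia)
  exact (congrArg Nat.cast hsup).trans (Int.toNat_of_nonneg hb)

theorem card_parts_coadjoint {n m : ℕ} {r : ℤ} (hnm : (m : ℤ) = n + r) {π : Nat.Partition m}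
    (hπ : r - 1 ≤ π.rank) : (card (coadjoint hnm π hπ).parts : ℤ) = π.parts.sup - r := by
  have hc := sup_parts_sub_nonneg (by lia) hπ
  have hcard := card_rowToColumn (c := (π.parts.sup - r).toNat) (u := π.parts)
    (by unfold Nat.Partition.rank at hπ; lia)
  exact (congrArg Nat.cast hcard).trans (Int.toNat_of_nonneg hc)

theorem le_rank_adjoint {n m : ℕ} {r : ℤ} (hnm : (m : ℤ) = n + r) {π : Nat.Partition n}
    (hπ : π.rank ≤ r + 1) : r - 1 ≤ (adjoint hnm π hπ).rank := by
  have hcard : card (adjoint hnm π hπ).parts ≤ card π.parts + 1 := card_columnToRow_le _ _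
  rw [Nat.Partition.rank, sup_parts_adjoint hnm hπ]
  lia

theorem rank_coadjoint_le {n m : ℕ} {r : ℤ} (hnm : (m : ℤ) = n + r) {π : Nat.Partition m}
    (hπ : r - 1 ≤ π.rank) : (coadjoint hnm π hπ).rank ≤ r + 1 := by
  have hsup : (coadjoint hnm π hπ).parts.sup ≤ π.parts.sup + 1 := sup_rowToColumn_le _ _
  rw [Nat.Partition.rank, card_parts_coadjoint hnm hπ]
  lia

theorem coadjoint_adjoint {n m : ℕ} {r : ℤ} (hnm : (m : ℤ) = n + r) {π : Nat.Partition n}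
    (hπ : π.rank ≤ r + 1) :
    coadjoint hnm (adjoint hnm π hπ) (le_rank_adjoint hnm hπ) = π := by
  ext1
  have hc : (((adjoint hnm π hπ).parts.sup : ℤ) - r).toNat = card π.parts := by
    rw [sup_parts_adjoint hnm hπ]
    lia
  refine (congrArg (rowToColumn · _) hc).trans (rowToColumn_columnToRow (fun _ => π.parts_pos) ?_)
  unfold Nat.Partition.rank at hπ
  lia

theorem adjoint_coadjoint {n m : ℕ} {r : ℤ} (hnm : (m : ℤ) = n + r) {π : Nat.Partition m}
    (hπ : r - 1 ≤ π.rank) :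
    adjoint hnm (coadjoint hnm π hπ) (rank_coadjoint_le hnm hπ) = π := by
  ext1
  have hb : (card (coadjoint hnm π hπ).parts + r).toNat = π.parts.sup := by
    rw [card_parts_coadjoint hnm hπ]
    lia
  exact (congrArg (columnToRow · _) hb).trans (columnToRow_rowToColumn _ fun _ => π.parts_pos)

theorem card_rank_le_eq_card_le_rank {r : ℤ} {n m : ℕ} (hnm : (m : ℤ) = n + r) :
    (Finset.univ.filter fun π : Nat.Partition n => π.rank ≤ r + 1).card =
      (Finset.univ.filter fun π : Nat.Partition m => r - 1 ≤ π.rank).card :=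
  Finset.card_bij' (fun π hπ => adjoint hnm π (Finset.mem_filter.mp hπ).2)
    (fun π hπ => coadjoint hnm π (Finset.mem_filter.mp hπ).2)
    (fun _ _ => Finset.mem_filter.mpr ⟨Finset.mem_univ _, le_rank_adjoint hnm _⟩)
    (fun _ _ => Finset.mem_filter.mpr ⟨Finset.mem_univ _, rank_coadjoint_le hnm _⟩)
    (fun _ _ => coadjoint_adjoint hnm _) (fun _ _ => adjoint_coadjoint hnm _)

end Adjoint

/-! ### Counting partitions by rank -/

section Counting

open Finset

/-- The number of partitions of `n` with rank at least `m`. -/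
def countRankGe (m : ℤ) (n : ℕ) : ℕ :=
  #{π : Nat.Partition n | m ≤ π.rank}

/-- The number of partitions of `n` with rank at most `m`. -/
def countRankLe (m : ℤ) (n : ℕ) : ℕ :=
  #{π : Nat.Partition n | π.rank ≤ m}

theorem countRankLe_add_countRankGe (m : ℤ) (n : ℕ) :
    countRankLe m n + countRankGe (m + 1) n = Fintype.card (Nat.Partition n) := by
  rw [countRankLe, countRankGe, ← card_univ,
    ← card_filter_add_card_filter_not (s := univ) fun π : Nat.Partition n => π.rank ≤ m]
  simp only [not_le, Int.add_one_le_iff]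

theorem abs_rank_le {n : ℕ} (π : Nat.Partition n) : |π.rank| ≤ n := by
  have hsup := sup_le_sum π.parts
  have hcard := card_le_sum fun _ => π.parts_pos
  rw [π.parts_sum] at hsup hcard
  rw [Nat.Partition.rank, abs_le]
  lia

theorem abs_rank_lt {n : ℕ} (hn : 0 < n) (π : Nat.Partition n) : |π.rank| < n := by
  have hsup := sup_le_sum π.parts
  have hcard := card_le_sum fun _ => π.parts_pos
  rw [π.parts_sum] at hsup hcard
  have hpos := (parts_eq_zero_or_pos π).resolve_left fun h => hn.ne' (eq_zero_of_parts_eq_zero h)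
  rw [Nat.Partition.rank, abs_lt]
  lia

theorem abs_rank_lt_of_le {m : ℤ} {n : ℕ} (hm : 1 ≤ m) (hn : n ≤ m) (π : Nat.Partition n) :
    |π.rank| < m := by
  rcases n.eq_zero_or_pos with rfl | hpos
  · exact (abs_rank_le π).trans_lt (by lia)
  · exact (abs_rank_lt hpos π).trans_le hn

theorem countRankGe_eq_zero {m : ℤ} {n : ℕ} (hm : 1 ≤ m) (hn : n ≤ m) : countRankGe m n = 0 :=
  card_eq_zero.mpr <| filter_eq_empty_iff.mpr fun π _ =>
    not_le.mpr (abs_lt.mp (abs_rank_lt_of_le hm hn π)).2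

theorem countRankLe_neg_eq_zero {m : ℤ} {n : ℕ} (hm : 1 ≤ m) (hn : n ≤ m) :
    countRankLe (-m) n = 0 :=
  card_eq_zero.mpr <| filter_eq_empty_iff.mpr fun π _ =>
    not_le.mpr (abs_lt.mp (abs_rank_lt_of_le hm hn π)).1

theorem countRankGe_recurrence {m : ℤ} {n k : ℕ} (hk : (n : ℤ) = k + (m + 1)) :
    countRankGe m n + countRankGe (m + 3) k = Fintype.card (Nat.Partition k) := by
  have hadj := card_rank_le_eq_card_le_rank hk
  rw [add_sub_cancel_right] at hadj
  rw [countRankGe, ← hadj, ← countRankLe_add_countRankGe (m + 1 + 1) k, countRankLe]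
  ring_nf

theorem countRankLe_recurrence {m : ℤ} {n k : ℕ} (hk : (n : ℤ) = k + (m + 1)) :
    countRankLe (-m) n + countRankLe (-(m + 3)) k = Fintype.card (Nat.Partition k) := by
  have hadj := card_rank_le_eq_card_le_rank (r := -m - 1) (n := n) (m := k) (by lia)
  rw [sub_add_cancel] at hadj
  rw [countRankLe, hadj, ← countRankLe_add_countRankGe (-(m + 3)) k, countRankGe, add_comm]
  ring_nf

theorem countRankLe_neg (n : ℕ) (m : ℤ) (hm : 1 ≤ m) :
    countRankLe (-m) n = countRankGe m n := by
  induction n using Nat.strong_induction_on generalizing m with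
  | _ n ih =>
    rcases le_or_gt (n : ℤ) m with h | h
    · rw [countRankGe_eq_zero hm h, countRankLe_neg_eq_zero hm h]
    · obtain ⟨k, hk⟩ : ∃ k : ℕ, (n : ℤ) = k + (m + 1) := ⟨(n - (m + 1)).toNat, by lia⟩
      have hge := countRankGe_recurrence hk
      have hle := countRankLe_recurrence hk
      have hind := ih k (by lia) (m + 3) (by lia)
      lia

theorem countRankGe_one_add (n : ℕ) :
    Fintype.card (Nat.Partition (n + 1)) + countRankGe 3 n =
      countRankGe 1 (n + 1) + Fintype.card (Nat.Partition n) := by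
  have hsplit := countRankLe_add_countRankGe 0 (n + 1)
  have hrec := countRankLe_recurrence (m := 0) (n := n + 1) (k := n) (by simp)
  have hneg := countRankLe_neg n 3 (by norm_num)
  norm_num at hsplit hrec hneg
  lia

theorem card_partition_le (n : ℕ) : Fintype.card (Nat.Partition n) ≤ 2 ^ n := by
  refine (Fintype.card_le_of_surjective _ Nat.Partition.ofComposition_surj).trans ?_
  rw [composition_card]
  exact Nat.pow_le_pow_right two_pos (Nat.sub_le _ _)

theorem countRankGe_le (m : ℤ) (n : ℕ) : countRankGe m n ≤ 2 ^ n :=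
  (card_filter_le _ _).trans (card_partition_le n)

/-- The number of partitions of `n` with rank exactly `m`. -/
def countRankEq (m : ℤ) (n : ℕ) : ℕ :=
  #{π : Nat.Partition n | π.rank = m}

theorem countRankGe_eq_add (m : ℤ) (n : ℕ) :
    countRankGe m n = countRankEq m n + countRankGe (m + 1) n := by
  rw [countRankGe, countRankEq, countRankGe, ← card_union_of_disjoint]
  · congr 1
    ext π
    simp only [mem_filter, mem_univ, true_and, mem_union]
    lia
  · exact disjoint_filter.mpr fun π _ h => by lia

theorem countRankEq_neg {m : ℤ} (hm : 1 ≤ m) (n : ℕ) : countRankEq (-m) n = countRankEq m n := by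
  have hge := countRankGe_eq_add m n
  have hsplit := countRankLe_add_countRankGe (-m) n
  have hsplit' := countRankLe_add_countRankGe (-(m + 1)) n
  have hge' := countRankGe_eq_add (-m) n
  rw [countRankLe_neg n _ (by lia), show -(m + 1) + 1 = -m by ring] at hsplit'
  rw [countRankLe_neg n m hm] at hsplit
  lia

/-- The sum of the numbers of partitions of `n` with rank at least `c`, `c + t`, `c + 2 * t`, …;
for `0 < t` and `0 < c` the terms left out vanish. -/
def sumRankGe (t c n : ℕ) : ℕ := ∑ j ∈ range (n + 1), countRankGe (c + t * j) n

theorem sumRankGe_eq_add (t c n : ℕ) :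
    sumRankGe t c n = ∑ j ∈ range (n + 1), countRankEq (c + t * j) n + sumRankGe t (c + 1) n := by
  rw [sumRankGe, sumRankGe, ← sum_add_distrib]
  refine sum_congr rfl fun j _ => ?_
  rw [countRankGe_eq_add]
  push_cast
  ring_nf

theorem sum_ite_eq_add_mul {t n : ℕ} (ht : 0 < t) {c ρ : ℤ} (h : ρ - c ≤ n) :
    ∑ j ∈ range (n + 1), (if ρ = c + t * j then 1 else 0) =
      if c ≤ ρ ∧ ρ ≡ c [ZMOD t] then 1 else 0 := by
  split_ifs with hρ
  · obtain ⟨d, hd⟩ := hρ.2.symm.dvd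
    have hd0 : 0 ≤ d := nonneg_of_mul_nonneg_right (hd ▸ sub_nonneg.mpr hρ.1) (by lia)
    have hdn : d ≤ n := (le_mul_of_one_le_left hd0 (by lia)).trans (hd ▸ h)
    lift d to ℕ using hd0
    rw [sum_eq_single d, if_pos (by lia)]
    · intro j _ hj
      refine if_neg fun hρj => hj ?_
      have : (t : ℤ) * j = t * d := by lia
      exact_mod_cast mul_left_cancel₀ (by lia) this
    · exact fun hd' => absurd (mem_range.mpr (by lia)) hd'
  · refine sum_eq_zero fun j _ => if_neg ?_
    rintro rfl
    exact hρ ⟨le_add_of_nonneg_right (by positivity), by simp [Int.ModEq]⟩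

theorem sum_countRankEq {t c n : ℕ} (ht : 0 < t) :
    ∑ j ∈ range (n + 1), countRankEq (c + t * j) n =
      #{π : Nat.Partition n | c ≤ π.rank ∧ π.rank ≡ c [ZMOD t]} := by
  simp only [countRankEq, card_filter]
  rw [sum_comm]
  refine sum_congr rfl fun π _ => sum_ite_eq_add_mul ht ?_
  have := (abs_le.mp (abs_rank_le π)).2
  lia

theorem sum_countRankEq_neg {t c n : ℕ} (ht : 0 < t) (hc : 1 ≤ c) :
    ∑ j ∈ range (n + 1), countRankEq (c + t * j) n =
      #{π : Nat.Partition n | c ≤ -π.rank ∧ -π.rank ≡ c [ZMOD t]} := by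
  trans ∑ j ∈ range (n + 1), countRankEq (-(c + t * j)) n
  · refine sum_congr rfl fun j _ => (countRankEq_neg ?_ n).symm
    have : 0 ≤ (t : ℤ) * j := by positivity
    lia
  simp only [countRankEq, card_filter, eq_neg_iff_add_eq_zero, ← neg_eq_iff_add_eq_zero]
  rw [sum_comm]
  refine sum_congr rfl fun π _ => sum_ite_eq_add_mul ht ?_
  have := (abs_le.mp (abs_rank_le π)).1
  lia

theorem modEq_and_lt_iff {t k : ℕ} (hkt : k < t) (ρ : ℤ) :
    ρ ≡ k [ZMOD t] ∧ ¬ (k : ℤ) ≤ ρ ↔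
      ((t - k : ℕ) : ℤ) ≤ -ρ ∧ -ρ ≡ ((t - k : ℕ) : ℤ) [ZMOD t] := by
  have hmod : -ρ ≡ ((t - k : ℕ) : ℤ) [ZMOD t] ↔ ρ ≡ k [ZMOD t] := by
    rw [Int.modEq_iff_dvd, Int.modEq_iff_dvd, ← dvd_neg, Nat.cast_sub hkt.le,
      ← dvd_add_left (dvd_refl (t : ℤ))]
    ring_nf
  rw [hmod, and_comm, and_congr_left_iff]
  intro hρ
  rw [Nat.cast_sub hkt.le, not_le]
  refine ⟨fun hlt => ?_, fun hle => by lia⟩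
  have := Int.le_of_dvd (sub_pos.mpr hlt) hρ.dvd
  lia

theorem card_rank_modEq_add {t k n : ℕ} (hk : 1 ≤ k) (hkt : k < t) :
    #{π : Nat.Partition n | π.rank ≡ k [ZMOD t]} +
        (sumRankGe t (k + 1) n + sumRankGe t (t - k + 1) n) =
      sumRankGe t k n + sumRankGe t (t - k) n := by
  rw [sumRankGe_eq_add t k, sumRankGe_eq_add t (t - k), sum_countRankEq (by lia),
    sum_countRankEq_neg (by lia) (by lia),
    ← card_filter_add_card_filter_not (s := {π : Nat.Partition n | π.rank ≡ k [ZMOD t]})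
      fun π => (k : ℤ) ≤ π.rank, filter_filter, filter_filter]
  simp only [modEq_and_lt_iff hkt, and_comm (a := (k : ℤ) ≤ _)]
  ring

theorem sum_card_rank_modEq {t : ℕ} (ht : 0 < t) (n : ℕ) :
    ∑ k ∈ range t, #{π : Nat.Partition n | π.rank ≡ k [ZMOD t]} =
      Fintype.card (Nat.Partition n) := by
  have hemod (ρ : ℤ) : 0 ≤ ρ % t ∧ ρ % t < t :=
    ⟨Int.emod_nonneg _ (by lia), Int.emod_lt_of_pos _ (by lia)⟩
  rw [← card_univ, card_eq_sum_card_fiberwise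
    (f := fun π : Nat.Partition n => (π.rank % t).toNat) (t := range t)]
  · refine sum_congr rfl fun k hk => congrArg card (filter_congr fun π _ => ?_)
    rw [Int.ModEq, Int.emod_eq_of_lt (a := (k : ℤ)) (by lia) (by simpa using hk)]
    have := hemod π.rank
    lia
  · intro π _
    have := hemod π.rank
    simp only [coe_range, Set.mem_Iio]
    lia

theorem card_mul_eq_sumRankGe_sub {t n : ℕ}
    (h : ∀ c : ℕ, 1 ≤ c → 2 * c ≤ t → (t + 1 - 2 * c : ℤ) * Fintype.card (Nat.Partition n) =
      2 * t * (sumRankGe t c n - sumRankGe t (t + 1 - c) n)) {c : ℕ} (hc : 1 ≤ c) (hct : c ≤ t) :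
    (t + 1 - 2 * c : ℤ) * Fintype.card (Nat.Partition n) =
      2 * t * (sumRankGe t c n - sumRankGe t (t + 1 - c) n) := by
  rcases lt_trichotomy (2 * c) (t + 1) with hlt | heq | hgt
  · exact h c hc (by lia)
  · rw [show t + 1 - c = c by lia, sub_self, mul_zero, mul_eq_zero]
    exact Or.inl (by lia)
  · have hrefl := h (t + 1 - c) (by lia) (by lia)
    rw [Nat.sub_sub_self (by lia), Nat.cast_sub (by lia)] at hrefl
    push_cast at hrefl
    linear_combination -hrefl

theorem card_rank_modEq_of_sumRankGe {t n : ℕ}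
    (h : ∀ c : ℕ, 1 ≤ c → 2 * c ≤ t → (t + 1 - 2 * c : ℤ) * Fintype.card (Nat.Partition n) =
      2 * t * (sumRankGe t c n - sumRankGe t (t + 1 - c) n)) {k : ℕ} (hk : k < t) :
    t * #{π : Nat.Partition n | π.rank ≡ k [ZMOD t]} = Fintype.card (Nat.Partition n) := by
  have hpos (k : ℕ) (hk : 1 ≤ k) (hkt : k < t) :
      t * #{π : Nat.Partition n | π.rank ≡ k [ZMOD t]} = Fintype.card (Nat.Partition n) := by
    have hcard := congrArg (Nat.cast (R := ℤ)) (card_rank_modEq_add (n := n) hk hkt)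
    have hk₀ := card_mul_eq_sumRankGe_sub h hk hkt.le
    have hk₁ := card_mul_eq_sumRankGe_sub h (c := k + 1) (by lia) hkt
    rw [show t + 1 - (k + 1) = t - k by lia] at hk₁
    rw [show t + 1 - k = t - k + 1 by lia] at hk₀
    push_cast at hcard hk₀ hk₁
    zify
    refine mul_left_cancel₀ (two_ne_zero (α := ℤ)) ?_
    linear_combination 2 * t * hcard + hk₁ - hk₀
  rcases k.eq_zero_or_pos with rfl | hk0
  · have hsum := sum_card_rank_modEq hk n
    obtain ⟨s, rfl⟩ : ∃ s, t = s + 1 := ⟨t - 1, by lia⟩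
    have hrest := congrArg ((s + 1) * ·) hsum
    rw [sum_range_succ', mul_add, mul_sum, sum_congr rfl fun k hk =>
      hpos (k + 1) (by lia) (by simpa using hk), sum_const, card_range, smul_eq_mul] at hrest
    lia
  · exact hpos k hk0 hk

end Counting

/-! ### Generating functions of rank counts -/

section GeneratingFunctions

open Filter Topology

/-- The generating function of the partition numbers, as an analytic function of `x`; the
elementary bound `p(n) ≤ 2 ^ n` gives convergence for `‖x‖ < 1 / 2`. -/
noncomputable def partitionGF (x : ℂ) : ℂ :=
  ∑' n : ℕ, (Fintype.card (Nat.Partition n) : ℂ) * x ^ n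

/-- The generating function of the numbers of partitions with rank at least `m`. -/
noncomputable def rankGeGF (m : ℤ) (x : ℂ) : ℂ := ∑' n : ℕ, (countRankGe m n : ℂ) * x ^ n

theorem norm_natCast_mul_pow_le {b n : ℕ} (hb : b ≤ 2 ^ n) (x : ℂ) :
    ‖(b : ℂ) * x ^ n‖ ≤ (2 * ‖x‖) ^ n := by
  rw [norm_mul, norm_pow, mul_pow, Complex.norm_natCast]
  gcongr
  exact_mod_cast hb

theorem summable_mul_pow_of_le_two_pow {b : ℕ → ℕ} (hb : ∀ n, b n ≤ 2 ^ n) {x : ℂ}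
    (hx : ‖x‖ < 1 / 2) : Summable fun n => (b n : ℂ) * x ^ n :=
  .of_norm_bounded (summable_geometric_of_lt_one (by positivity) (by linarith))
    fun n => norm_natCast_mul_pow_le (hb n) x

variable {x : ℂ}

theorem summable_partitionGF (hx : ‖x‖ < 1 / 2) :
    Summable fun n => (Fintype.card (Nat.Partition n) : ℂ) * x ^ n :=
  summable_mul_pow_of_le_two_pow card_partition_le hx

theorem summable_rankGeGF (m : ℤ) (hx : ‖x‖ < 1 / 2) :
    Summable fun n => (countRankGe m n : ℂ) * x ^ n :=
  summable_mul_pow_of_le_two_pow (countRankGe_le m) hx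

theorem norm_rankGeGF_le (m : ℤ) (hx : ‖x‖ < 1 / 2) : ‖rankGeGF m x‖ ≤ (1 - 2 * ‖x‖)⁻¹ :=
  tsum_of_norm_bounded (hasSum_geometric_of_lt_one (by positivity) (by linarith))
    fun n => norm_natCast_mul_pow_le (countRankGe_le m n) x

theorem rankGeGF_recurrence {m : ℕ} (hm : 1 ≤ m) (hx : ‖x‖ < 1 / 2) :
    rankGeGF m x = x ^ (m + 1) * (partitionGF x - rankGeGF (m + 3 : ℕ) x) := by
  rw [rankGeGF, ← (summable_rankGeGF m hx).sum_add_tsum_nat_add (m + 1), Finset.sum_eq_zero,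
    zero_add, partitionGF, rankGeGF, ← (summable_partitionGF hx).tsum_sub (summable_rankGeGF _ hx),
    ← tsum_mul_left]
  · refine tsum_congr fun k => ?_
    rw [← countRankGe_recurrence (m := m) (n := k + (m + 1)) (by push_cast; ring)]
    push_cast
    ring
  · intro n hn
    rw [countRankGe_eq_zero (by lia) (by have := Finset.mem_range.mp hn; lia), Nat.cast_zero,
      zero_mul]

/-- The `k`-th term of the signed series which multiplies `partitionGF` in the generating
function of the partitions with rank at least `c`. -/
noncomputable def rankTerm (c : ℕ) (x : ℂ) (k : ℕ) : ℂ :=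
  (-1) ^ k * x ^ ((k + 1) * c + 3 * (k + 1).choose 2 + (k + 1))

theorem norm_rankTerm_le (c : ℕ) (hx : ‖x‖ < 1) (k : ℕ) :
    ‖rankTerm c x k‖ ≤ ‖x‖ ^ c * ‖x‖ ^ k := by
  rw [rankTerm, norm_mul, norm_pow, norm_pow, norm_neg, norm_one, one_pow, one_mul, ← pow_add]
  refine pow_le_pow_of_le_one (norm_nonneg x) hx.le ?_
  nlinarith

theorem summable_rankTerm (c : ℕ) (hx : ‖x‖ < 1) : Summable (rankTerm c x) :=
  .of_norm_bounded ((summable_geometric_of_lt_one (norm_nonneg x) hx).mul_left _)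
    (norm_rankTerm_le c hx)

theorem norm_tsum_rankTerm_le (c : ℕ) (hx : ‖x‖ < 1) :
    ‖∑' k, rankTerm c x k‖ ≤ (1 - ‖x‖)⁻¹ :=
  tsum_of_norm_bounded (hasSum_geometric_of_lt_one (norm_nonneg x) hx) fun k =>
    (norm_rankTerm_le c hx k).trans <|
      mul_le_of_le_one_left (by positivity) (pow_le_one₀ (norm_nonneg x) hx.le)

theorem rankTerm_succ (c : ℕ) (x : ℂ) (k : ℕ) :
    rankTerm c x (k + 1) = -(x ^ (c + 1) * rankTerm (c + 3) x k) := by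
  rw [rankTerm, rankTerm, Nat.choose_succ_succ' (k + 1) 1, Nat.choose_one_right]
  ring

theorem tsum_rankTerm_recurrence (c : ℕ) (hx : ‖x‖ < 1) :
    ∑' k, rankTerm c x k = x ^ (c + 1) * (1 - ∑' k, rankTerm (c + 3) x k) := by
  have hzero : rankTerm c x 0 = x ^ (c + 1) := by simp [rankTerm]
  rw [(summable_rankTerm c hx).tsum_eq_zero_add, hzero]
  simp only [rankTerm_succ]
  rw [tsum_neg, tsum_mul_left]
  ring

theorem eq_zero_of_norm_le_mul_norm_add {δ : ℕ → ℂ} {r B : ℝ} {d : ℕ} (hr0 : 0 ≤ r) (hr1 : r < 1)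
    (hB : ∀ c, ‖δ c‖ ≤ B) (hδ : ∀ c, 1 ≤ c → ‖δ c‖ ≤ r * ‖δ (c + d)‖) {m : ℕ} (hm : 1 ≤ m) :
    δ m = 0 := by
  have hiter (K c : ℕ) (hc : 1 ≤ c) : ‖δ c‖ ≤ r ^ K * B := by
    induction K generalizing c with
    | zero => simpa using hB c
    | succ K ih =>
      rw [pow_succ', mul_assoc]
      exact (hδ c hc).trans (mul_le_mul_of_nonneg_left (ih _ (by lia)) hr0)
  have hlim : Tendsto (fun K : ℕ => r ^ K * B) atTop (𝓝 0) := by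
    simpa using (tendsto_pow_atTop_nhds_zero_of_lt_one hr0 hr1).mul_const B
  exact norm_le_zero_iff.mp (ge_of_tendsto' hlim fun K => hiter K m hm)

theorem rankGeGF_eq {m : ℕ} (hm : 1 ≤ m) (hx : ‖x‖ < 1 / 2) :
    rankGeGF m x = partitionGF x * ∑' k, rankTerm m x k := by
  have hx1 : ‖x‖ < 1 := by linarith
  refine sub_eq_zero.mp (eq_zero_of_norm_le_mul_norm_add
    (δ := fun c => rankGeGF c x - partitionGF x * ∑' k, rankTerm c x k) (d := 3)
    (B := (1 - 2 * ‖x‖)⁻¹ + ‖partitionGF x‖ * (1 - ‖x‖)⁻¹) (norm_nonneg x) hx1 ?_ ?_ hm)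
  · intro c
    refine (norm_sub_le _ _).trans (add_le_add (norm_rankGeGF_le _ hx) ?_)
    rw [norm_mul]
    exact mul_le_mul_of_nonneg_left (norm_tsum_rankTerm_le c hx1) (norm_nonneg _)
  · intro c hc
    have hrec : rankGeGF c x - partitionGF x * ∑' k, rankTerm c x k = -(x ^ (c + 1) *
        (rankGeGF (c + 3 : ℕ) x - partitionGF x * ∑' k, rankTerm (c + 3) x k)) := by
      rw [rankGeGF_recurrence hc hx, tsum_rankTerm_recurrence c hx1]
      ring
    rw [hrec, norm_neg, norm_mul, norm_pow]
    exact mul_le_mul_of_nonneg_right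
      (pow_le_of_le_one (norm_nonneg x) hx1.le c.succ_ne_zero) (norm_nonneg _)

theorem tsum_card_succ_add (hx : ‖x‖ < 1 / 2) :
    ∑' n : ℕ, (Fintype.card (Nat.Partition (n + 1)) : ℂ) * x ^ (n + 1) + x * rankGeGF 3 x =
      rankGeGF 1 x + x * partitionGF x := by
  have hone : rankGeGF 1 x = ∑' n : ℕ, (countRankGe 1 (n + 1) : ℂ) * x ^ (n + 1) := by
    rw [rankGeGF, (summable_rankGeGF 1 hx).tsum_eq_zero_add,
      countRankGe_eq_zero le_rfl zero_le_one, Nat.cast_zero, zero_mul, zero_add]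
  rw [hone, rankGeGF, partitionGF, ← tsum_mul_left, ← tsum_mul_left,
    ← ((summable_nat_add_iff 1).mpr (summable_partitionGF hx)).tsum_add
      ((summable_rankGeGF 3 hx).mul_left x),
    ← ((summable_nat_add_iff 1).mpr (summable_rankGeGF 1 hx)).tsum_add
      ((summable_partitionGF hx).mul_left x)]
  refine tsum_congr fun n => ?_
  have hcount : (Fintype.card (Nat.Partition (n + 1)) : ℂ) + countRankGe 3 n =
      countRankGe 1 (n + 1) + Fintype.card (Nat.Partition n) := by
    exact_mod_cast countRankGe_one_add n
  linear_combination x ^ (n + 1) * hcount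

theorem partitionGF_mul_one_sub (hx : ‖x‖ < 1 / 2) :
    partitionGF x * (1 - ∑' k, rankTerm 1 x k - ∑' k, rankTerm 0 x k) = 1 := by
  have hsplit : partitionGF x =
      1 + ∑' n : ℕ, (Fintype.card (Nat.Partition (n + 1)) : ℂ) * x ^ (n + 1) := by
    rw [partitionGF, (summable_partitionGF hx).tsum_eq_zero_add]
    simp
  have hrec := tsum_rankTerm_recurrence 0 (x := x) (by linarith)
  have hone := rankGeGF_eq le_rfl hx
  have hthree := rankGeGF_eq (m := 3) (by norm_num) hx
  rw [Nat.cast_one] at hone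
  rw [Nat.cast_ofNat] at hthree
  rw [zero_add, zero_add, pow_one] at hrec
  rw [hrec]
  linear_combination hsplit + tsum_card_succ_add hx - x * hthree + hone

/-- The Lambert type series obtained by summing the series of `rankTerm (c + t * j)` over `j`. -/
noncomputable def lambertSeries (t c : ℕ) (x : ℂ) : ℂ :=
  ∑' k, rankTerm c x k / (1 - x ^ (t * (k + 1)))

theorem tsum_rankTerm_add_mul {t : ℕ} (ht : 0 < t) (c k : ℕ) (hx : ‖x‖ < 1) :
    ∑' j, rankTerm (c + t * j) x k = rankTerm c x k / (1 - x ^ (t * (k + 1))) := by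
  have hy : ‖x ^ (t * (k + 1))‖ < 1 := by
    rw [norm_pow]
    exact pow_lt_one₀ (norm_nonneg x) hx (by positivity)
  rw [div_eq_mul_inv, ← tsum_geometric_of_norm_lt_one hy, ← tsum_mul_left]
  refine tsum_congr fun j => ?_
  rw [rankTerm, rankTerm]
  ring

theorem hasSum_tsum_rankTerm {t : ℕ} (ht : 0 < t) (c : ℕ) (hx : ‖x‖ < 1) :
    HasSum (fun j : ℕ => ∑' k, rankTerm (c + t * j) x k) (lambertSeries t c x) := by
  have hs : Summable fun jk : ℕ × ℕ => rankTerm (c + t * jk.1) x jk.2 := by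
    have hg := summable_geometric_of_lt_one (norm_nonneg x) hx
    refine .of_norm_bounded (hg.mul_of_nonneg hg (fun _ => by positivity)
      (fun _ => by positivity)) fun jk => (norm_rankTerm_le _ hx _).trans ?_
    gcongr ?_ * _
    exact pow_le_pow_of_le_one (norm_nonneg x) hx.le (by nlinarith)
  rw [lambertSeries]
  simp only [← tsum_rankTerm_add_mul ht c _ hx]
  rw [Summable.tsum_comm (f := fun j k => rankTerm (c + t * j) x k) hs]
  exact hs.prod.hasSum

theorem countRankGe_add_mul_eq_zero {t c n j : ℕ} (ht : 0 < t) (hc : 1 ≤ c) (hj : n ≤ j) :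
    countRankGe (c + t * j) n = 0 := by
  have : j ≤ t * j := Nat.le_mul_of_pos_left j ht
  exact countRankGe_eq_zero (by lia) (by lia)

theorem summable_countRankGe_add_mul {t c : ℕ} (ht : 0 < t) (hc : 1 ≤ c) (hx : ‖x‖ < 1 / 2) :
    Summable fun nj : ℕ × ℕ => (countRankGe (c + t * nj.2) nj.1 : ℂ) * x ^ nj.1 := by
  -- Only `j ≤ n` contributes, where `(2‖x‖) ^ n = r ^ n * r ^ n` is at most `r ^ n * r ^ j`.
  set r := √(2 * ‖x‖) with hr
  have hr1 : r < 1 := by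
    rw [hr, Real.sqrt_lt' one_pos]
    linarith
  have hg := summable_geometric_of_lt_one (Real.sqrt_nonneg _) hr1
  refine .of_norm_bounded (hg.mul_of_nonneg hg (fun _ => by positivity)
    (fun _ => by positivity)) fun nj => ?_
  rcases le_or_gt nj.1 nj.2 with h | h
  · rw [countRankGe_add_mul_eq_zero ht hc h, Nat.cast_zero, zero_mul, norm_zero]
    positivity
  · calc ‖(countRankGe (c + t * nj.2) nj.1 : ℂ) * x ^ nj.1‖ ≤ (2 * ‖x‖) ^ nj.1 :=
        norm_natCast_mul_pow_le (countRankGe_le _ _) x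
      _ = r ^ nj.1 * r ^ nj.1 := by rw [← mul_pow, Real.mul_self_sqrt (by positivity)]
      _ ≤ r ^ nj.1 * r ^ nj.2 := by
        gcongr ?_ * ?_
        exact pow_le_pow_of_le_one (Real.sqrt_nonneg _) hr1.le h.le

theorem hasSum_sumRankGe {t c : ℕ} (ht : 0 < t) (hc : 1 ≤ c) (hx : ‖x‖ < 1 / 2) :
    HasSum (fun n => (sumRankGe t c n : ℂ) * x ^ n) (partitionGF x * lambertSeries t c x) := by
  have hs := summable_countRankGe_add_mul ht hc hx
  have hcoeff (n : ℕ) : (sumRankGe t c n : ℂ) * x ^ n =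
      ∑' j : ℕ, (countRankGe (c + t * j) n : ℂ) * x ^ n := by
    rw [tsum_eq_sum (s := Finset.range (n + 1)), sumRankGe, Nat.cast_sum, Finset.sum_mul]
    intro j hj
    rw [countRankGe_add_mul_eq_zero ht hc (by simp at hj; lia), Nat.cast_zero, zero_mul]
  have hsum : partitionGF x * lambertSeries t c x =
      ∑' (n : ℕ) (j : ℕ), (countRankGe (c + t * j) n : ℂ) * x ^ n := by
    rw [← (hasSum_tsum_rankTerm ht c (by linarith)).tsum_eq, ← tsum_mul_left,
      ← Summable.tsum_comm (f := fun n (j : ℕ) => (countRankGe (c + t * j) n : ℂ) * x ^ n) hs]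
    refine tsum_congr fun j => ?_
    rw [← rankGeGF_eq (by lia) hx, rankGeGF]
    push_cast
    rfl
  simp only [hcoeff]
  rw [hsum]
  exact hs.prod.hasSum

end GeneratingFunctions

/-! ### Quasi-periodic functions on an annulus -/

section QuasiPeriodic

open Set Metric

/-- The open annulus of radii `p` and `p⁻¹` around the origin. -/
def annulus (p : ℝ) : Set ℂ := {z | p < ‖z‖ ∧ ‖z‖ < p⁻¹}

theorem isOpen_annulus (p : ℝ) : IsOpen (annulus p) :=
  (isOpen_lt continuous_const continuous_norm).inter (isOpen_lt continuous_norm continuous_const)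

theorem one_mem_annulus {p : ℝ} (hp : 0 < p) (hp1 : p < 1) : (1 : ℂ) ∈ annulus p :=
  ⟨by simpa using hp1, by simpa using (one_lt_inv₀ hp).mpr hp1⟩

/-- Theta functions of degree `d` and multiplier `χ` for the lattice `p ^ ℤ`: holomorphic functions
on an annulus satisfying `F (p z) = χ z⁻ᵈ F z` wherever both sides make sense. -/
structure IsQuasiPeriodic (p : ℝ) (d : ℕ) (χ : ℂ) (F : ℂ → ℂ) : Prop where
  differentiableOn : DifferentiableOn ℂ F (annulus p)
  map_mul : ∀ z : ℂ, 1 < ‖z‖ → ‖z‖ < p⁻¹ → F (p * z) = χ * z ^ (-(d : ℤ)) * F z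

/-- The `k`-th Laurent coefficient of `F`, up to a factor `2πi`, computed on the circle of
radius `r`. -/
noncomputable def laurentCoeff (F : ℂ → ℂ) (r : ℝ) (k : ℤ) : ℂ :=
  ∮ z in C(0, r), F z * z ^ (-k - 1)

local instance : Fact (0 < 2 * Real.pi) := ⟨Real.two_pi_pos⟩

theorem fourier_coe_mul_radius_zpow (r θ : ℝ) (k : ℤ) :
    (fourier k (θ : AddCircle (2 * Real.pi)) : ℂ) * (r : ℂ) ^ k = circleMap 0 r θ ^ k := by
  have hpi : (Real.pi : ℂ) ≠ 0 := Complex.ofReal_ne_zero.mpr Real.pi_ne_zero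
  rw [fourier_coe_apply, circleMap_zero, mul_zpow, ← Complex.exp_int_mul, mul_comm]
  congr 2
  push_cast
  field_simp

theorem laurentCoeff_eq_fourierCoeff {F : ℂ → ℂ} {r : ℝ} (hr : 0 < r)
    {f : AddCircle (2 * Real.pi) → ℂ} (hf : ∀ θ : ℝ, f θ = F (circleMap 0 r θ)) (k : ℤ) :
    laurentCoeff F r k = 2 * Real.pi * Complex.I * (r : ℂ) ^ (-k) * fourierCoeff f k := by
  have hpi : (Real.pi : ℂ) ≠ 0 := Complex.ofReal_ne_zero.mpr Real.pi_ne_zero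
  have hintegrand (θ : ℝ) : deriv (circleMap 0 r) θ • (F (circleMap 0 r θ) *
      circleMap 0 r θ ^ (-k - 1)) = Complex.I * (r : ℂ) ^ (-k) *
        (fourier (-k) (θ : AddCircle (2 * Real.pi)) • f θ) := by
    have hcircle : circleMap 0 r θ ≠ 0 := circleMap_ne_center hr.ne'
    rw [hf, deriv_circleMap, smul_eq_mul, smul_eq_mul, zpow_sub_one₀ hcircle,
      ← fourier_coe_mul_radius_zpow]
    field_simp
  rw [laurentCoeff, circleIntegral, fourierCoeff_eq_intervalIntegral _ _ 0, zero_add]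
  simp only [hintegrand]
  rw [intervalIntegral.integral_const_mul, Complex.real_smul]
  push_cast
  field_simp

theorem eq_zero_of_laurentCoeff_eq_zero {F : ℂ → ℂ} {r : ℝ} (hr : 0 < r)
    (hF : ContinuousOn F (sphere 0 r)) (h : ∀ k, laurentCoeff F r k = 0) {z : ℂ} (hz : ‖z‖ = r) :
    F z = 0 := by
  have hper : Function.Periodic (fun θ : ℝ => F (circleMap 0 r θ)) (2 * Real.pi) := fun θ => by
    simp only [periodic_circleMap 0 r θ]
  have hcont : Continuous (fun θ : ℝ => F (circleMap 0 r θ)) :=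
    hF.comp_continuous (continuous_circleMap 0 r) fun θ => circleMap_mem_sphere 0 hr.le θ
  let f : C(AddCircle (2 * Real.pi), ℂ) := ⟨hper.lift, continuous_coinduced_dom.mpr hcont⟩
  have hf (θ : ℝ) : f θ = F (circleMap 0 r θ) := rfl
  have hcoeff : fourierCoeff f = 0 := by
    funext k
    have hk := (laurentCoeff_eq_fourierCoeff hr hf k).symm.trans (h k)
    refine (mul_eq_zero.mp hk).resolve_left (mul_ne_zero Complex.two_pi_I_ne_zero ?_)
    exact zpow_ne_zero _ (Complex.ofReal_ne_zero.mpr hr.ne')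
  have hsum := hasSum_fourier_series_of_summable (f := f) (hcoeff ▸ summable_zero)
  simp only [hcoeff, Pi.zero_apply, zero_smul] at hsum
  obtain ⟨θ, rfl⟩ : ∃ θ, circleMap 0 r θ = z :=
    ⟨z.arg, by rw [circleMap_zero, ← hz, Complex.norm_mul_exp_arg_mul_I]⟩
  rw [← hf, hsum.unique hasSum_zero, ContinuousMap.zero_apply]

theorem laurentCoeff_neg_of_odd {F : ℂ → ℂ} (hF : ∀ z : ℂ, ‖z‖ = 1 → F z⁻¹ = -F z) (k : ℤ) :
    laurentCoeff F 1 (-k) = -laurentCoeff F 1 k := by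
  rw [laurentCoeff, laurentCoeff, circleIntegral, circleIntegral]
  set g : ℝ → ℂ := fun θ => deriv (circleMap 0 1) θ • (F (circleMap 0 1 θ) *
    circleMap 0 1 θ ^ (-k - 1)) with hg
  have hper : Function.Periodic g (2 * Real.pi) := fun θ => by
    simp only [hg, deriv_circleMap, periodic_circleMap 0 1 θ]
  have hreflect (θ : ℝ) : deriv (circleMap 0 1) θ • (F (circleMap 0 1 θ) *
      circleMap 0 1 θ ^ (-(-k) - 1)) = -g (-θ) := by
    have hinv : circleMap 0 1 (-θ) = (circleMap 0 1 θ)⁻¹ := by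
      simp [circleMap, Complex.exp_neg]
    have hcircle : circleMap 0 1 θ ≠ 0 := circleMap_ne_center one_ne_zero
    simp only [hg, deriv_circleMap, hinv, smul_eq_mul]
    rw [hF _ (by simp [norm_circleMap_zero]), zpow_sub_one₀ hcircle,
      zpow_sub_one₀ (inv_ne_zero hcircle), inv_zpow', neg_neg]
    field_simp
  simp only [hreflect]
  have hshift := hper.intervalIntegral_add_eq (-(2 * Real.pi)) 0
  rw [neg_add_cancel, zero_add] at hshift
  rw [intervalIntegral.integral_neg, intervalIntegral.integral_comp_neg, neg_zero, hshift]

variable {p : ℝ} {d : ℕ} {χ : ℂ} {F : ℂ → ℂ} (hp : 0 < p)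

include hp in
theorem ne_zero_of_mem_annulus {z : ℂ} (hz : z ∈ annulus p) : z ≠ 0 :=
  norm_pos_iff.mp (hp.trans hz.1)

theorem sphere_subset_annulus {r : ℝ} (hr : p < r) (hr' : r < p⁻¹) :
    sphere (0 : ℂ) r ⊆ annulus p := fun z hz => by
  rw [mem_sphere_zero_iff_norm] at hz
  exact ⟨hz ▸ hr, hz ▸ hr'⟩

include hp in
theorem differentiableOn_mul_zpow (hF : DifferentiableOn ℂ F (annulus p)) (k : ℤ) :
    DifferentiableOn ℂ (fun z => F z * z ^ k) (annulus p) :=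
  hF.mul fun _ hz => (differentiableAt_zpow.mpr
    (Or.inl (ne_zero_of_mem_annulus hp hz))).differentiableWithinAt

include hp in
theorem laurentCoeff_congr_radius_of_le (hF : DifferentiableOn ℂ F (annulus p)) {r s : ℝ}
    (hr : p < r) (hrs : r ≤ s) (hs : s < p⁻¹) (k : ℤ) :
    laurentCoeff F s k = laurentCoeff F r k := by
  have hG := differentiableOn_mul_zpow hp hF (-k - 1)
  refine Complex.circleIntegral_eq_of_differentiable_on_annulus_off_countable (hp.trans hr) hrs
    countable_empty (hG.continuousOn.mono ?_) ?_
  · rintro z ⟨hzs, hzr⟩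
    rw [mem_closedBall_zero_iff] at hzs
    rw [mem_ball_zero_iff, not_lt] at hzr
    exact ⟨hr.trans_le hzr, hzs.trans_lt hs⟩
  · rintro z ⟨⟨hzs, hzr⟩, -⟩
    rw [mem_ball_zero_iff] at hzs
    rw [mem_closedBall_zero_iff, not_le] at hzr
    exact hG.differentiableAt ((isOpen_annulus p).mem_nhds ⟨hr.trans hzr, hzs.trans hs⟩)

include hp in
theorem laurentCoeff_congr_radius (hF : DifferentiableOn ℂ F (annulus p)) {r s : ℝ}
    (hr : p < r) (hr' : r < p⁻¹) (hs : p < s) (hs' : s < p⁻¹) (k : ℤ) :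
    laurentCoeff F s k = laurentCoeff F r k := by
  rcases le_total r s with hrs | hsr
  · exact laurentCoeff_congr_radius_of_le hp hF hr hrs hs' k
  · exact (laurentCoeff_congr_radius_of_le hp hF hs hsr hr' k).symm

include hp in
theorem laurentCoeff_sum {ι : Type*} (s : Finset ι) (c : ι → ℂ) {F : ι → ℂ → ℂ}
    (hF : ∀ i, DifferentiableOn ℂ (F i) (annulus p)) {r : ℝ} (hr : p < r) (hr' : r < p⁻¹)
    (k : ℤ) :
    laurentCoeff (fun z => ∑ i ∈ s, c i * F i z) r k = ∑ i ∈ s, c i * laurentCoeff (F i) r k := by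
  have hint (i : ι) : CircleIntegrable (fun z => F i z * z ^ (-k - 1)) 0 r :=
    ((differentiableOn_mul_zpow hp (hF i) _).continuousOn.mono
      (sphere_subset_annulus hr hr')).circleIntegrable (hp.trans hr).le
  have hint_mul (i : ι) : CircleIntegrable (fun z => c i * (F i z * z ^ (-k - 1))) 0 r :=
    (hint i).const_mul (c i)
  simp only [laurentCoeff, Finset.sum_mul, mul_assoc]
  rw [circleIntegral.integral_fun_sum fun i _ => hint_mul i]
  simp only [circleIntegral.integral_const_mul]

namespace IsQuasiPeriodic

theorem sum {ι : Type*} (s : Finset ι) (c : ι → ℂ) {F : ι → ℂ → ℂ}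
    (hF : ∀ i, IsQuasiPeriodic p d χ (F i)) :
    IsQuasiPeriodic p d χ (fun z => ∑ i ∈ s, c i * F i z) where
  differentiableOn := .fun_sum fun i _ => (hF i).differentiableOn.const_mul (c i)
  map_mul z hz hz' := by
    rw [Finset.mul_sum]
    refine Finset.sum_congr rfl fun i _ => ?_
    rw [(hF i).map_mul z hz hz']
    ring

include hp in
theorem laurentCoeff_mul_radius (hF : IsQuasiPeriodic p d χ F) {r : ℝ} (hr : 1 < r)
    (hr' : r < p⁻¹) (k : ℤ) :
    laurentCoeff F (p * r) k = χ * (p : ℂ) ^ (-k) * laurentCoeff F r (k + d) := by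
  rw [laurentCoeff, laurentCoeff, circleIntegral, circleIntegral,
    ← intervalIntegral.integral_const_mul]
  congr 1
  funext θ
  have hscale : circleMap 0 (p * r) θ = p * circleMap 0 r θ := by
    simp [circleMap, mul_assoc]
  have hcircle : circleMap 0 r θ ≠ 0 := circleMap_ne_center (by linarith)
  have hp0 : (p : ℂ) ≠ 0 := Complex.ofReal_ne_zero.mpr hp.ne'
  have hnorm : ‖circleMap 0 r θ‖ = r := by rw [norm_circleMap_zero, abs_of_pos (by linarith)]
  have hexp : circleMap 0 r θ ^ (-(k + (d : ℤ)) - 1) =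
      circleMap 0 r θ ^ (-(d : ℤ)) * circleMap 0 r θ ^ (-k - 1) := by
    rw [← zpow_add₀ hcircle]
    ring_nf
  rw [deriv_circleMap, deriv_circleMap, hscale, hF.map_mul _ (by rwa [hnorm])
    (by rwa [hnorm]), mul_zpow, zpow_sub_one₀ hp0, hexp, smul_eq_mul, smul_eq_mul]
  field_simp

include hp in
theorem laurentCoeff_eq_mul (hF : IsQuasiPeriodic p d χ F) {r : ℝ} (hr : p < r)
    (hr' : r < p⁻¹) (k : ℤ) :
    laurentCoeff F r k = χ * (p : ℂ) ^ (-k) * laurentCoeff F r (k + d) := by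
  have hp1 : 1 < p⁻¹ := by
    rw [one_lt_inv₀ hp]
    by_contra! h
    exact (hr.trans hr').not_ge (inv_le_one_of_one_le₀ h |>.trans h)
  obtain ⟨s, hs, hs'⟩ := exists_between hp1
  have hps : p * s < 1 := (lt_inv_mul_iff₀ hp).mp (by rwa [mul_one])
  have hcongr (k : ℤ) : laurentCoeff F r k = laurentCoeff F s k :=
    laurentCoeff_congr_radius hp hF.differentiableOn (((one_lt_inv₀ hp).mp hp1).trans hs) hs' hr
      hr' k
  rw [hcongr, hcongr, ← hF.laurentCoeff_mul_radius hp hs hs']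
  exact laurentCoeff_congr_radius_of_le hp hF.differentiableOn (by nlinarith) (by nlinarith) hs' k

include hp in
theorem laurentCoeff_eq_zero_iff_add_mul (hF : IsQuasiPeriodic p d χ F) (hχ : χ ≠ 0) {r : ℝ}
    (hr : p < r) (hr' : r < p⁻¹) (k m : ℤ) :
    laurentCoeff F r k = 0 ↔ laurentCoeff F r (k + m * d) = 0 := by
  have hp0 : (p : ℂ) ≠ 0 := Complex.ofReal_ne_zero.mpr hp.ne'
  have hstep (k : ℤ) : laurentCoeff F r k = 0 ↔ laurentCoeff F r (k + d) = 0 := by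
    rw [hF.laurentCoeff_eq_mul hp hr hr' k]
    simp [hχ, zpow_ne_zero _ hp0]
  induction m using Int.induction_on with
  | zero => simp
  | succ m ih => exact ih.trans (by rw [hstep, add_mul, one_mul, add_assoc])
  | pred m ih =>
    refine ih.trans ?_
    rw [hstep (k + (-(m : ℤ) - 1) * d)]
    ring_nf

include hp in
theorem eq_zero (hF : IsQuasiPeriodic p d χ F) (hχ : χ ≠ 0) (hd : 0 < d) {r : ℝ} (hr : p < r)
    (hr' : r < p⁻¹) (l : ℤ) (h : ∀ k : ℤ, l ≤ k → k < l + d → laurentCoeff F r k = 0)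
    {z : ℂ} (hz : z ∈ annulus p) : F z = 0 := by
  have hd' : (0 : ℤ) < d := by exact_mod_cast hd
  have hall (k : ℤ) : laurentCoeff F r k = 0 := by
    rw [hF.laurentCoeff_eq_zero_iff_add_mul hp hχ hr hr' k (-((k - l) / d))]
    have hnonneg := Int.emod_nonneg (k - l) hd'.ne'
    have hlt := Int.emod_lt_of_pos (k - l) hd'
    have hdiv := Int.emod_add_mul_ediv (k - l) d
    apply h <;> nlinarith
  refine eq_zero_of_laurentCoeff_eq_zero (hp.trans hz.1)
    (hF.differentiableOn.continuousOn.mono (sphere_subset_annulus hz.1 hz.2)) (fun k => ?_) rfl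
  rw [laurentCoeff_congr_radius hp hF.differentiableOn hr hr' hz.1 hz.2, hall]

end IsQuasiPeriodic

variable (hp1 : p < 1)

include hp hp1

theorem exists_linear_relation (hd : 0 < d) (hχ : χ ≠ 0) {F : Fin (d + 1) → ℂ → ℂ}
    (hF : ∀ i, IsQuasiPeriodic p d χ (F i)) :
    ∃ c : Fin (d + 1) → ℂ, c ≠ 0 ∧ ∀ z ∈ annulus p, ∑ i, c i * F i z = 0 := by
  have hpinv : 1 < p⁻¹ := (one_lt_inv₀ hp).mpr hp1
  have hdep : ¬ LinearIndependent ℂ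
      (fun (i : Fin (d + 1)) (k : Fin d) => laurentCoeff (F i) 1 (k : ℕ)) := by
    intro h
    have := h.fintype_card_le_finrank
    simp at this
  rw [Fintype.not_linearIndependent_iff] at hdep
  obtain ⟨c, hc, i, hi⟩ := hdep
  refine ⟨c, fun h => hi (congrFun h i), fun z hz => ?_⟩
  refine (IsQuasiPeriodic.sum Finset.univ c hF).eq_zero hp hχ hd hp1 hpinv 0
    (fun k hk hk' => ?_) hz
  rw [laurentCoeff_sum hp _ _ (fun i => (hF i).differentiableOn) hp1 hpinv]
  lift k to ℕ using hk
  simpa using congrFun hc ⟨k, by lia⟩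

theorem odd_quasiPeriodic_eq_zero (hF : IsQuasiPeriodic p 4 ((p : ℂ) ^ (-2 : ℤ)) F)
    (hodd : ∀ z : ℂ, ‖z‖ = 1 → F z⁻¹ = -F z) (hone : laurentCoeff F 1 1 = 0) {z : ℂ}
    (hz : z ∈ annulus p) : F z = 0 := by
  have hp0 : (p : ℂ) ≠ 0 := Complex.ofReal_ne_zero.mpr hp.ne'
  have hpinv : 1 < p⁻¹ := (one_lt_inv₀ hp).mpr hp1
  refine hF.eq_zero hp (zpow_ne_zero _ hp0) four_pos hp1 hpinv (-1) (fun k hk hk' => ?_) hz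
  have htwo : laurentCoeff F 1 (-2) = laurentCoeff F 1 2 := by
    rw [hF.laurentCoeff_eq_mul hp hp1 hpinv, ← zpow_add₀ hp0]
    norm_num
  have hneg (j : ℤ) := laurentCoeff_neg_of_odd hodd j
  rw [Nat.cast_ofNat] at hk'
  obtain rfl | rfl | rfl | rfl : k = -1 ∨ k = 0 ∨ k = 1 ∨ k = 2 := by lia
  · rw [hneg, hone, neg_zero]
  · exact self_eq_neg.mp (by simpa using hneg 0)
  · exact hone
  · rw [hneg] at htwo
    exact neg_eq_self.mp htwo

theorem odd_quasiPeriodic_proportional {F G : ℂ → ℂ}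
    (hF : IsQuasiPeriodic p 4 ((p : ℂ) ^ (-2 : ℤ)) F)
    (hG : IsQuasiPeriodic p 4 ((p : ℂ) ^ (-2 : ℤ)) G)
    (hFodd : ∀ z : ℂ, ‖z‖ = 1 → F z⁻¹ = -F z) (hGodd : ∀ z : ℂ, ‖z‖ = 1 → G z⁻¹ = -G z)
    {z b : ℂ} (hz : z ∈ annulus p) (hb : b ∈ annulus p) : F z * G b = G z * F b := by
  have hFG : ∀ i, IsQuasiPeriodic p 4 ((p : ℂ) ^ (-2 : ℤ)) (![F, G] i) :=
    Fin.forall_fin_two.mpr ⟨hF, hG⟩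
  have hprop {w : ℂ} (hw : w ∈ annulus p) :
      laurentCoeff G 1 1 * F w = laurentCoeff F 1 1 * G w := by
    have hcoeff := laurentCoeff_sum hp Finset.univ ![laurentCoeff G 1 1, -laurentCoeff F 1 1]
      (fun i => (hFG i).differentiableOn) hp1 ((one_lt_inv₀ hp).mpr hp1) 1
    simp only [Fin.sum_univ_two, Matrix.cons_val_zero, Matrix.cons_val_one] at hcoeff
    have hzero := odd_quasiPeriodic_eq_zero hp hp1
      (IsQuasiPeriodic.sum Finset.univ ![laurentCoeff G 1 1, -laurentCoeff F 1 1] hFG)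
      (fun w hw => by
        simp only [Fin.sum_univ_two, Matrix.cons_val_zero, Matrix.cons_val_one, hFodd w hw,
          hGodd w hw]
        ring)
      (by
        simp only [Fin.sum_univ_two, Matrix.cons_val_zero, Matrix.cons_val_one]
        rw [hcoeff]
        ring) hw
    simp only [Fin.sum_univ_two, Matrix.cons_val_zero, Matrix.cons_val_one] at hzero
    linear_combination hzero
  rcases eq_or_ne (laurentCoeff G 1 1) 0 with h0 | h0
  · rw [odd_quasiPeriodic_eq_zero hp hp1 hG hGodd h0 hz,
      odd_quasiPeriodic_eq_zero hp hp1 hG hGodd h0 hb, mul_zero, zero_mul]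
  · apply mul_left_cancel₀ h0
    linear_combination G b * hprop hz - G z * hprop hb

end QuasiPeriodic

/-! ### Theta functions and the quintuple product -/

section Theta

open Set

/-- The triangular number `n (n - 1) / 2`. -/
def tri (n : ℤ) : ℤ := n * (n - 1) / 2

theorem two_mul_tri (n : ℤ) : 2 * tri n = n * (n - 1) :=
  Int.mul_ediv_cancel' (Int.even_mul_pred_self n).two_dvd

theorem tri_add_one (n : ℤ) : tri (n + 1) = tri n + n := by
  linarith [two_mul_tri n, two_mul_tri (n + 1)]

theorem tri_one_sub (n : ℤ) : tri (1 - n) = tri n := by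
  linarith [two_mul_tri n, two_mul_tri (1 - n)]

/-- The general term of the theta series. -/
noncomputable def thetaTerm (p z : ℂ) (n : ℤ) : ℂ := (-1) ^ n * p ^ tri n * z ^ n

/-- The theta function `∑ (-1)ⁿ p ^ (n (n - 1) / 2) zⁿ` of nome `p`. -/
noncomputable def theta (p z : ℂ) : ℂ := ∑' n : ℤ, thetaTerm p z n

theorem norm_thetaTerm (p z : ℂ) (n : ℤ) : ‖thetaTerm p z n‖ = ‖p‖ ^ tri n * ‖z‖ ^ n := by
  simp [thetaTerm, norm_zpow]

theorem summable_natCast_zpow_tri {ρ r : ℝ} (hρ : 0 < ρ) (hρ1 : ρ < 1) (hr : 0 < r) :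
    Summable fun n : ℕ => ρ ^ tri n * r ^ n := by
  refine summable_of_ratio_test_tendsto_lt_one (l := 0) one_pos
    (Filter.Eventually.of_forall fun n => by positivity) ?_
  have hratio : (fun n : ℕ => ‖ρ ^ tri ((n + 1 : ℕ) : ℤ) * r ^ (n + 1)‖ /
      ‖ρ ^ tri (n : ℤ) * r ^ n‖) = fun n => ρ ^ n * r := by
    funext n
    rw [Real.norm_of_nonneg (by positivity), Real.norm_of_nonneg (by positivity), Nat.cast_succ,
      tri_add_one, zpow_add₀ hρ.ne', pow_succ r, zpow_natCast ρ n]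
    field_simp
  rw [hratio]
  simpa using (tendsto_pow_atTop_nhds_zero_of_lt_one hρ.le hρ1).mul_const r

theorem summable_zpow_tri {ρ r : ℝ} (hρ : 0 < ρ) (hρ1 : ρ < 1) (hr : 0 < r) :
    Summable fun n : ℤ => ρ ^ tri n * r ^ n := by
  refine .of_nat_of_neg_add_one (by simpa using summable_natCast_zpow_tri hρ hρ1 hr) ?_
  have hreflect (n : ℕ) : ρ ^ tri (-((n : ℤ) + 1)) * r ^ (-((n : ℤ) + 1)) =
      r * (ρ ^ tri ((n + 2 : ℕ) : ℤ) * r⁻¹ ^ (n + 2)) := by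
    rw [← tri_one_sub, show (1 : ℤ) - -((n : ℤ) + 1) = (n + 2 : ℕ) by push_cast; ring, zpow_neg,
      ← Nat.cast_succ, zpow_natCast, inv_pow, pow_succ' r (n + 1), mul_inv, mul_left_comm,
      mul_inv_cancel_left₀ hr.ne']
  simp only [hreflect]
  exact (((summable_nat_add_iff 2).mpr
    (summable_natCast_zpow_tri hρ hρ1 (inv_pos.mpr hr))).mul_left r)

theorem summable_thetaTerm {p z : ℂ} (hp : p ≠ 0) (hp1 : ‖p‖ < 1) (hz : z ≠ 0) :
    Summable (thetaTerm p z) := by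
  refine .of_norm ?_
  simp only [norm_thetaTerm]
  exact summable_zpow_tri (norm_pos_iff.mpr hp) hp1 (norm_pos_iff.mpr hz)

theorem thetaTerm_mul_left {p z : ℂ} (hp : p ≠ 0) (hz : z ≠ 0) (n : ℤ) :
    thetaTerm p (p * z) n = -z⁻¹ * thetaTerm p z (n + 1) := by
  rw [thetaTerm, thetaTerm, tri_add_one, zpow_add₀ hp, mul_zpow, zpow_add_one₀ hz,
    zpow_add_one₀ (neg_ne_zero.mpr one_ne_zero)]
  field_simp

theorem theta_mul_left {p z : ℂ} (hp : p ≠ 0) (hz : z ≠ 0) :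
    theta p (p * z) = -z⁻¹ * theta p z := by
  rw [theta, theta, ← tsum_mul_left,
    ← (Equiv.addRight (1 : ℤ)).tsum_eq fun n => -z⁻¹ * thetaTerm p z n]
  exact tsum_congr fun n => thetaTerm_mul_left hp hz n

theorem theta_mul_mul {p z : ℂ} (hp : p ≠ 0) (hz : z ≠ 0) :
    theta p (p * (p * z)) = p⁻¹ * z⁻¹ ^ 2 * theta p z := by
  rw [theta_mul_left hp (mul_ne_zero hp hz), theta_mul_left hp hz]
  field_simp

theorem neg_one_zpow_neg (n : ℤ) : (-1 : ℂ) ^ (-n) = (-1) ^ n := by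
  rw [← inv_zpow', inv_neg_one]

theorem thetaTerm_inv {p z : ℂ} (hz : z ≠ 0) (n : ℤ) :
    thetaTerm p z⁻¹ n = -z⁻¹ * thetaTerm p z (1 - n) := by
  rw [thetaTerm, thetaTerm, tri_one_sub, sub_eq_add_neg, zpow_add₀ hz, zpow_one,
    zpow_add₀ (neg_ne_zero.mpr one_ne_zero), neg_one_zpow_neg, inv_zpow']
  field_simp

theorem theta_inv {p z : ℂ} (hz : z ≠ 0) : theta p z⁻¹ = -z⁻¹ * theta p z := by
  rw [theta, theta, ← tsum_mul_left,
    ← (Equiv.subLeft (1 : ℤ)).tsum_eq fun n => -z⁻¹ * thetaTerm p z n]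
  exact tsum_congr fun n => thetaTerm_inv hz n

theorem theta_one (p : ℂ) : theta p 1 = 0 := by
  have hself := theta_inv (p := p) one_ne_zero
  rw [inv_one] at hself
  exact self_eq_neg.mp (by simpa using hself)

theorem zpow_le_zpow_add_zpow {x lo hi : ℝ} (hlo : 0 < lo) (hx : lo ≤ x) (hx' : x ≤ hi) (n : ℤ) :
    x ^ n ≤ lo ^ n + hi ^ n := by
  have hx0 := hlo.trans_le hx
  have hlon : 0 ≤ lo ^ n := by positivity
  have hhin : 0 ≤ hi ^ n := zpow_nonneg (hx0.le.trans hx') n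
  rcases le_total 0 n with hn | hn
  · linarith [zpow_le_zpow_left₀ hn hx0.le hx']
  · have hle : x ^ n ≤ lo ^ n := by
      obtain ⟨m, rfl⟩ : ∃ m, n = -m := ⟨-n, (neg_neg n).symm⟩
      rw [zpow_neg, zpow_neg]
      exact inv_anti₀ (by positivity) (zpow_le_zpow_left₀ (by lia) hlo.le hx)
    linarith

theorem differentiableOn_tsum_thetaTerm_mul {p : ℂ} (hp : p ≠ 0) (hp1 : ‖p‖ < 1) {U : Set ℂ}
    (hU : IsOpen U) {y : ℂ → ℂ} (hy : DifferentiableOn ℂ y U) {lo hi : ℝ} (hlo : 0 < lo)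
    (hy_lo : ∀ z ∈ U, lo ≤ ‖y z‖) (hy_hi : ∀ z ∈ U, ‖y z‖ ≤ hi) {h : ℤ → ℂ → ℂ}
    (hh : ∀ n, DifferentiableOn ℂ (h n) U) {C : ℝ} (hC : ∀ n, ∀ z ∈ U, ‖h n z‖ ≤ C) :
    DifferentiableOn ℂ (fun z => ∑' n, thetaTerm p (y z) n * h n z) U := by
  rcases U.eq_empty_or_nonempty with rfl | ⟨w, hw⟩
  · exact differentiableOn_empty
  have hhi : 0 < hi := hlo.trans_le ((hy_lo w hw).trans (hy_hi w hw))
  have hρ := norm_pos_iff.mpr hp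
  refine Complex.differentiableOn_tsum_of_summable_norm
    (u := fun n => ‖p‖ ^ tri n * (lo ^ n + hi ^ n) * C) ?_ (fun n => ?_) hU fun n z hz => ?_
  · simp only [mul_add]
    exact ((summable_zpow_tri hρ hp1 hlo).add (summable_zpow_tri hρ hp1 hhi)).mul_right C
  · refine DifferentiableOn.mul (DifferentiableOn.const_mul (fun z hz => ?_) _) (hh n)
    exact (hy z hz).zpow (Or.inl (norm_pos_iff.mp (hlo.trans_le (hy_lo z hz))))
  · rw [norm_mul, norm_thetaTerm]
    gcongr
    · exact zpow_le_zpow_add_zpow hlo (hy_lo z hz) (hy_hi z hz) n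
    · exact hC n z hz

theorem exists_norm_nhds {z : ℂ} (hz : z ≠ 0) :
    ∃ U : Set ℂ, IsOpen U ∧ z ∈ U ∧ ∃ lo hi : ℝ, 0 < lo ∧ ∀ w ∈ U, lo ≤ ‖w‖ ∧ ‖w‖ ≤ hi := by
  have hz' := norm_pos_iff.mpr hz
  exact ⟨{w | ‖z‖ / 2 < ‖w‖ ∧ ‖w‖ < 2 * ‖z‖}, (isOpen_lt continuous_const continuous_norm).inter
    (isOpen_lt continuous_norm continuous_const), ⟨by linarith, by linarith⟩,
    ‖z‖ / 2, 2 * ‖z‖, by linarith, fun w hw => ⟨hw.1.le, hw.2.le⟩⟩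

theorem differentiableAt_theta {p z : ℂ} (hp : p ≠ 0) (hp1 : ‖p‖ < 1) (hz : z ≠ 0) :
    DifferentiableAt ℂ (theta p) z := by
  obtain ⟨U, hU, hzU, lo, hi, hlo, hbound⟩ := exists_norm_nhds hz
  have hdiff := differentiableOn_tsum_thetaTerm_mul hp hp1 hU differentiableOn_id hlo
    (fun w hw => (hbound w hw).1) (fun w hw => (hbound w hw).2) (h := fun _ _ => 1)
    (fun _ => differentiableOn_const 1) (C := 1) (fun _ _ _ => by simp)
  simp only [mul_one, id] at hdiff
  exact hdiff.differentiableAt (hU.mem_nhds hzU)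

theorem ofReal_ne_zero_of_pos {p : ℝ} (hp : 0 < p) : (p : ℂ) ≠ 0 :=
  Complex.ofReal_ne_zero.mpr hp.ne'

theorem norm_ofReal_lt_one {p : ℝ} (hp : 0 < p) (hp1 : p < 1) : ‖(p : ℂ)‖ < 1 := by
  rwa [Complex.norm_real, Real.norm_of_nonneg hp.le]

theorem isQuasiPeriodic_of_forall {p : ℝ} (hp : 0 < p) {d : ℕ} {χ : ℂ} {F : ℂ → ℂ}
    (hd : ∀ z, z ≠ 0 → DifferentiableAt ℂ F z)
    (hF : ∀ z : ℂ, z ≠ 0 → F (p * z) = χ * z ^ (-(d : ℤ)) * F z) : IsQuasiPeriodic p d χ F where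
  differentiableOn z hz := (hd z (ne_zero_of_mem_annulus hp hz)).differentiableWithinAt
  map_mul z hz _ := hF z (norm_pos_iff.mp (one_pos.trans hz))

theorem ne_zero_of_norm_eq_one {z : ℂ} (hz : ‖z‖ = 1) : z ≠ 0 :=
  norm_ne_zero_iff.mp (hz ▸ one_ne_zero)

/-- The odd theta function `z⁻¹ θ(z²)` of degree four. -/
noncomputable def oddTheta (p z : ℂ) : ℂ := z⁻¹ * theta p (z ^ 2)

theorem oddTheta_isQuasiPeriodic {p : ℝ} (hp : 0 < p) (hp1 : p < 1) :
    IsQuasiPeriodic p 4 ((p : ℂ) ^ (-2 : ℤ)) (oddTheta p) := by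
  have hp0 := ofReal_ne_zero_of_pos hp
  refine isQuasiPeriodic_of_forall hp (fun z hz => ?_) fun z hz => ?_
  · exact (differentiableAt_inv hz).mul ((differentiableAt_theta hp0 (norm_ofReal_lt_one hp hp1)
      (pow_ne_zero 2 hz)).comp z (differentiableAt_pow 2))
  · rw [oddTheta, oddTheta, show ((p : ℂ) * z) ^ 2 = p * (p * z ^ 2) by ring,
      theta_mul_mul hp0 (pow_ne_zero 2 hz)]
    simp only [zpow_neg, Nat.cast_ofNat, zpow_ofNat]
    field_simp

theorem oddTheta_inv (p : ℂ) {z : ℂ} (hz : z ≠ 0) : oddTheta p z⁻¹ = -oddTheta p z := by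
  rw [oddTheta, oddTheta, inv_pow, theta_inv (pow_ne_zero 2 hz)]
  field_simp

/-- The theta function with cubic argument occurring in the quintuple product identity. -/
noncomputable def cubicTheta (p z : ℂ) : ℂ := theta (p ^ 3) (p ^ 2 * z ^ 3)

theorem cubicTheta_mul_left {p z : ℂ} (hp : p ≠ 0) (hz : z ≠ 0) :
    cubicTheta p (p * z) = -(p⁻¹ ^ 2 * z⁻¹ ^ 3) * cubicTheta p z := by
  rw [cubicTheta, cubicTheta, show p ^ 2 * (p * z) ^ 3 = p ^ 3 * (p ^ 2 * z ^ 3) by ring,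
    theta_mul_left (pow_ne_zero 3 hp) (by positivity)]
  field_simp

theorem cubicTheta_inv_mul {p z : ℂ} (hp : p ≠ 0) (hz : z ≠ 0) :
    cubicTheta p (p * z)⁻¹ = -(p⁻¹ * z⁻¹ ^ 3) * cubicTheta p z⁻¹ := by
  have hshift := cubicTheta_mul_left hp (inv_ne_zero (mul_ne_zero hp hz))
  rw [show p * (p * z)⁻¹ = z⁻¹ by field_simp] at hshift
  rw [hshift]
  field_simp

theorem differentiableAt_cubicTheta {p z : ℂ} (hp : p ≠ 0) (hp1 : ‖p‖ < 1) (hz : z ≠ 0) :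
    DifferentiableAt ℂ (cubicTheta p) z := by
  refine DifferentiableAt.comp z (g := theta (p ^ 3)) (differentiableAt_theta (pow_ne_zero 3 hp) ?_
    (by positivity)) ((differentiableAt_pow 3).const_mul _)
  rw [norm_pow]
  exact pow_lt_one₀ (norm_nonneg p) hp1 three_ne_zero

/-- The left-hand side of the quintuple product identity. -/
noncomputable def quintupleTheta (p z : ℂ) : ℂ :=
  (cubicTheta p z + z⁻¹ * cubicTheta p z⁻¹) * theta p z

theorem quintupleTheta_isQuasiPeriodic {p : ℝ} (hp : 0 < p) (hp1 : p < 1) :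
    IsQuasiPeriodic p 4 ((p : ℂ) ^ (-2 : ℤ)) (quintupleTheta p) := by
  have hp0 := ofReal_ne_zero_of_pos hp
  have hpn := norm_ofReal_lt_one hp hp1
  refine isQuasiPeriodic_of_forall hp (fun z hz => ?_) fun z hz => ?_
  · exact ((differentiableAt_cubicTheta hp0 hpn hz).add ((differentiableAt_inv hz).mul
      ((differentiableAt_cubicTheta hp0 hpn (inv_ne_zero hz)).comp z
        (differentiableAt_inv hz)))).mul (differentiableAt_theta hp0 hpn hz)
  · rw [quintupleTheta, quintupleTheta, cubicTheta_mul_left hp0 hz, cubicTheta_inv_mul hp0 hz,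
      theta_mul_left hp0 hz]
    simp only [zpow_neg, Nat.cast_ofNat, zpow_ofNat]
    field_simp
    ring

theorem quintupleTheta_inv (p : ℂ) {z : ℂ} (hz : z ≠ 0) :
    quintupleTheta p z⁻¹ = -quintupleTheta p z := by
  rw [quintupleTheta, quintupleTheta, theta_inv hz, inv_inv]
  field_simp
  ring

theorem quintupleTheta_mul_oddTheta {p : ℝ} (hp : 0 < p) (hp1 : p < 1) {z w : ℂ}
    (hz : z ∈ annulus p) (hw : w ∈ annulus p) :
    quintupleTheta p z * oddTheta p w = oddTheta p z * quintupleTheta p w :=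
  odd_quasiPeriodic_proportional hp hp1 (quintupleTheta_isQuasiPeriodic hp hp1)
    (oddTheta_isQuasiPeriodic hp hp1)
    (fun _ hz => quintupleTheta_inv _ (ne_zero_of_norm_eq_one hz))
    (fun _ hz => oddTheta_inv _ (ne_zero_of_norm_eq_one hz)) hz hw

/-- The quintuple product identity: both sides are odd theta functions of degree four, and the
constant is found at a primitive cube root of unity, where `cubicTheta` agrees with its value at
`1`. -/
theorem quintupleTheta_eq {p : ℝ} (hp : 0 < p) (hp1 : p < 1) {ω : ℂ} (hω : ω ^ 2 + ω + 1 = 0)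
    (hθ : theta p ω ≠ 0) {z : ℂ} (hz : z ∈ annulus p) :
    quintupleTheta p z = cubicTheta p 1 * oddTheta p z := by
  have hω3 : ω ^ 3 = 1 := by linear_combination (ω - 1) * hω
  have hωn : ‖ω‖ = 1 := Complex.norm_eq_one_of_pow_eq_one hω3 three_ne_zero
  have hω0 := ne_zero_of_norm_eq_one hωn
  have hωinv : ω⁻¹ = ω ^ 2 := inv_eq_of_mul_eq_one_right (by linear_combination hω3)
  have hωmem : ω ∈ annulus p := ⟨hωn ▸ hp1, hωn ▸ (one_lt_inv₀ hp).mpr hp1⟩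
  have hcubic : cubicTheta p ω = cubicTheta p 1 := by rw [cubicTheta, cubicTheta, hω3, one_pow]
  have hcubic_inv : cubicTheta p ω⁻¹ = cubicTheta p 1 := by
    rw [cubicTheta, cubicTheta, inv_pow, hω3, inv_one, one_pow]
  have hodd : oddTheta p ω = -ω * theta p ω := by
    rw [oddTheta, ← hωinv, theta_inv hω0, hωinv]
    linear_combination (-ω * theta p ω) * hω3
  have hprop := quintupleTheta_mul_oddTheta hp hp1 hz hωmem
  rw [hodd, quintupleTheta.eq_1 _ ω, hcubic, hcubic_inv, hωinv] at hprop
  apply mul_right_cancel₀ (mul_ne_zero (neg_ne_zero.mpr hω0) hθ)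
  linear_combination hprop + oddTheta p z * cubicTheta p 1 * theta p ω * hω

end Theta

/-! ### Logarithmic derivatives of theta functions -/

section LogDeriv

/-- The logarithmic derivative `z θ'(z) / θ(z)` of the theta function. -/
noncomputable def thetaLogDeriv (p z : ℂ) : ℂ := z * deriv (theta p) z / theta p z

theorem mul_deriv_theta {p b : ℂ} (hb : theta p b ≠ 0) :
    b * deriv (theta p) b = thetaLogDeriv p b * theta p b := by
  rw [thetaLogDeriv, div_mul_cancel₀ _ hb]

section

variable {p z : ℂ} (hp : p ≠ 0) (hp1 : ‖p‖ < 1) (hz : z ≠ 0)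
include hp hp1 hz

theorem hasDerivAt_theta_mul {b : ℂ} (hb : b ≠ 0) :
    HasDerivAt (fun w => theta p (b * w)) (deriv (theta p) (b * z) * b) z :=
  ((differentiableAt_theta hp hp1 (mul_ne_zero hb hz)).hasDerivAt).comp z
    (by simpa using (hasDerivAt_id z).const_mul b)

theorem hasDerivAt_neg_inv_mul_theta :
    HasDerivAt (fun w => -w⁻¹ * theta p w) ((z ^ 2)⁻¹ * theta p z - z⁻¹ * deriv (theta p) z) z := by
  refine ((hasDerivAt_inv hz).neg.mul
    (differentiableAt_theta hp hp1 hz).hasDerivAt).congr_deriv ?_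
  rw [Pi.neg_apply]
  ring

theorem thetaLogDeriv_mul_left (hθ : theta p z ≠ 0) :
    thetaLogDeriv p (p * z) = thetaLogDeriv p z - 1 := by
  have hderiv : deriv (theta p) (p * z) * p = (z ^ 2)⁻¹ * theta p z - z⁻¹ * deriv (theta p) z :=
    (hasDerivAt_theta_mul hp hp1 hz hp).unique
      ((hasDerivAt_neg_inv_mul_theta hp hp1 hz).congr_of_eventuallyEq
        ((isOpen_ne.eventually_mem hz).mono fun w hw => theta_mul_left hp hw))
  rw [thetaLogDeriv, thetaLogDeriv, theta_mul_left hp hz, eq_div_of_mul_eq hp hderiv]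
  field_simp
  ring

theorem thetaLogDeriv_inv (hθ : theta p z ≠ 0) : thetaLogDeriv p z⁻¹ = 1 - thetaLogDeriv p z := by
  have hderiv : deriv (theta p) z⁻¹ * -(z ^ 2)⁻¹ =
      (z ^ 2)⁻¹ * theta p z - z⁻¹ * deriv (theta p) z :=
    ((differentiableAt_theta hp hp1 (inv_ne_zero hz)).hasDerivAt.comp z (hasDerivAt_inv hz)).unique
      ((hasDerivAt_neg_inv_mul_theta hp hp1 hz).congr_of_eventuallyEq
        ((isOpen_ne.eventually_mem hz).mono fun w hw => theta_inv hw))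
  have hz2 : -(z ^ 2)⁻¹ ≠ 0 := neg_ne_zero.mpr (inv_ne_zero (pow_ne_zero 2 hz))
  rw [thetaLogDeriv, thetaLogDeriv, theta_inv hz, eq_div_of_mul_eq hz2 hderiv]
  field_simp

end

theorem hasDerivAt_sub_comp_inv_one {f : ℂ → ℂ} {f' : ℂ} (hf : HasDerivAt f f' 1) :
    HasDerivAt (fun z => f z - f z⁻¹) (2 * f') 1 := by
  have hinv : HasDerivAt (fun z : ℂ => z⁻¹) (-1) 1 := by
    simpa using hasDerivAt_inv (𝕜 := ℂ) one_ne_zero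
  exact (hf.sub (HasDerivAt.comp (1 : ℂ) (h₂ := f) (by rwa [inv_one]) hinv)).congr_deriv (by ring)

theorem isQuasiPeriodic_sub_comp_inv {p : ℝ} (hp : 0 < p) {g : ℂ → ℂ}
    (hd : ∀ z, z ≠ 0 → DifferentiableAt ℂ g z)
    (hg : ∀ z : ℂ, z ≠ 0 → g (p * z) = ((p : ℂ) ^ 2)⁻¹ * (z ^ 4)⁻¹ * g z) :
    IsQuasiPeriodic p 4 ((p : ℂ) ^ (-2 : ℤ)) fun z => g z - g z⁻¹ := by
  have hp0 := ofReal_ne_zero_of_pos hp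
  refine isQuasiPeriodic_of_forall hp (fun z hz => ?_) fun z hz => ?_
  · exact (hd z hz).sub ((hd _ (inv_ne_zero hz)).comp z (differentiableAt_inv hz))
  · have hginv := hg (p * z)⁻¹ (inv_ne_zero (mul_ne_zero hp0 hz))
    rw [show (p : ℂ) * (p * z)⁻¹ = z⁻¹ by field_simp] at hginv
    simp only [zpow_neg, Nat.cast_ofNat, zpow_ofNat]
    rw [hg z hz, hginv]
    field_simp

theorem theta_mul_mul_left {p b z : ℂ} (hp : p ≠ 0) (hb : b ≠ 0) (hz : z ≠ 0) :
    theta p (b * (p * z)) = -(b⁻¹ * z⁻¹) * theta p (b * z) := by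
  rw [mul_left_comm, theta_mul_left hp (mul_ne_zero hb hz), mul_inv]

theorem hasDerivAt_oddTheta_one {p : ℂ} (hp : p ≠ 0) (hp1 : ‖p‖ < 1) :
    HasDerivAt (oddTheta p) (2 * deriv (theta p) 1) 1 := by
  have hsq : HasDerivAt (fun z : ℂ => theta p (z ^ 2)) (deriv (theta p) 1 * 2) 1 := by
    refine HasDerivAt.comp (1 : ℂ) (h₂ := theta p) ?_ (by simpa using hasDerivAt_pow 2 (1 : ℂ))
    simpa using (differentiableAt_theta hp hp1 one_ne_zero).hasDerivAt
  exact ((hasDerivAt_inv (𝕜 := ℂ) one_ne_zero).mul hsq).congr_deriv (by simp [theta_one, mul_comm])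

/-- A product of four shifted theta functions whose shifts multiply to one. -/
noncomputable def thetaProd (p b₁ b₂ b₃ z : ℂ) : ℂ :=
  (z ^ 2)⁻¹ * (theta p (b₁ * z) * theta p (b₂ * z) * theta p (b₃ * z) *
    theta p ((b₁ * b₂ * b₃)⁻¹ * z))

section ThetaProd

variable {p : ℝ} (hp : 0 < p) (hp1 : p < 1) {b₁ b₂ b₃ : ℂ}
include hp hp1

theorem differentiableAt_thetaProd (hb₁ : b₁ ≠ 0) (hb₂ : b₂ ≠ 0) (hb₃ : b₃ ≠ 0) {z : ℂ}
    (hz : z ≠ 0) : DifferentiableAt ℂ (thetaProd p b₁ b₂ b₃) z := by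
  have hθ {b : ℂ} (hb : b ≠ 0) : DifferentiableAt ℂ (fun w => theta p (b * w)) z :=
    (hasDerivAt_theta_mul (ofReal_ne_zero_of_pos hp) (norm_ofReal_lt_one hp hp1) hz
      hb).differentiableAt
  exact (DifferentiableAt.inv (differentiableAt_pow 2 : DifferentiableAt ℂ (· ^ 2) z)
    (pow_ne_zero 2 hz)).mul ((((hθ hb₁).mul (hθ hb₂)).mul (hθ hb₃)).mul
      (hθ (inv_ne_zero (mul_ne_zero (mul_ne_zero hb₁ hb₂) hb₃))))

theorem thetaProd_sub_comp_inv_isQuasiPeriodic (hb₁ : b₁ ≠ 0) (hb₂ : b₂ ≠ 0) (hb₃ : b₃ ≠ 0) :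
    IsQuasiPeriodic p 4 ((p : ℂ) ^ (-2 : ℤ))
      fun z => thetaProd p b₁ b₂ b₃ z - thetaProd p b₁ b₂ b₃ z⁻¹ := by
  have hp0 := ofReal_ne_zero_of_pos hp
  refine isQuasiPeriodic_sub_comp_inv hp
    (fun z => differentiableAt_thetaProd hp hp1 hb₁ hb₂ hb₃) fun z hz => ?_
  rw [thetaProd, thetaProd, theta_mul_mul_left hp0 hb₁ hz, theta_mul_mul_left hp0 hb₂ hz,
    theta_mul_mul_left hp0 hb₃ hz, theta_mul_mul_left hp0 (by positivity) hz]
  field_simp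

/-- Weierstrass's three-term relation: both sides are odd theta functions of degree four, hence
proportional, and the constant is found at `z = b₁`, where one product vanishes. -/
theorem thetaProd_sub_thetaProd_inv (hb₁ : b₁ ∈ annulus p) (hb₂ : b₂ ≠ 0) (hb₃ : b₃ ≠ 0)
    (h : theta p (b₁ ^ 2) ≠ 0) {z : ℂ} (hz : z ∈ annulus p) :
    thetaProd p b₁ b₂ b₃ z - thetaProd p b₁ b₂ b₃ z⁻¹ =
      -(b₁ * b₂ * b₃)⁻¹ * (theta p (b₁ * b₂) * theta p (b₁ * b₃) * theta p (b₂ * b₃)) *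
        oddTheta p z := by
  have hb₁0 := ne_zero_of_mem_annulus hp hb₁
  have hat : thetaProd p b₁ b₂ b₃ b₁ - thetaProd p b₁ b₂ b₃ b₁⁻¹ = oddTheta p b₁ *
      (-(b₁ * b₂ * b₃)⁻¹ * (theta p (b₁ * b₂) * theta p (b₁ * b₃) * theta p (b₂ * b₃))) := by
    simp only [thetaProd, oddTheta]
    rw [mul_inv_cancel₀ hb₁0, theta_one,
      show (b₁ * b₂ * b₃)⁻¹ * b₁ = (b₂ * b₃)⁻¹ by field_simp,
      theta_inv (mul_ne_zero hb₂ hb₃), ← sq, mul_comm b₂ b₁, mul_comm b₃ b₁]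
    field_simp
    ring
  have hprop := odd_quasiPeriodic_proportional hp hp1
    (thetaProd_sub_comp_inv_isQuasiPeriodic hp hp1 hb₁0 hb₂ hb₃) (oddTheta_isQuasiPeriodic hp hp1)
    (fun z _ => by rw [inv_inv, neg_sub])
    (fun z hz => oddTheta_inv _ (ne_zero_of_norm_eq_one hz)) hz hb₁
  rw [hat] at hprop
  apply mul_right_cancel₀ (show oddTheta p b₁ ≠ 0 from mul_ne_zero (inv_ne_zero hb₁0) h)
  linear_combination hprop

theorem hasDerivAt_thetaProd_one (hb₁ : b₁ ≠ 0) (hb₂ : b₂ ≠ 0) (hb₃ : b₃ ≠ 0)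
    (h₁ : theta p b₁ ≠ 0) (h₂ : theta p b₂ ≠ 0) (h₃ : theta p b₃ ≠ 0)
    (h₄ : theta p (b₁ * b₂ * b₃) ≠ 0) :
    HasDerivAt (thetaProd p b₁ b₂ b₃) (-(b₁ * b₂ * b₃)⁻¹ *
      ((thetaLogDeriv p b₁ + thetaLogDeriv p b₂ + thetaLogDeriv p b₃ -
        thetaLogDeriv p (b₁ * b₂ * b₃) - 1) *
      (theta p b₁ * theta p b₂ * theta p b₃ * theta p (b₁ * b₂ * b₃)))) 1 := by
  have hp0 := ofReal_ne_zero_of_pos hp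
  have hpn := norm_ofReal_lt_one hp hp1
  have hB : b₁ * b₂ * b₃ ≠ 0 := mul_ne_zero (mul_ne_zero hb₁ hb₂) hb₃
  have hθ {b : ℂ} (hb : b ≠ 0) (hθb : theta p b ≠ 0) :
      HasDerivAt (fun w => theta p (b * w)) (thetaLogDeriv p b * theta p b) 1 := by
    convert hasDerivAt_theta_mul hp0 hpn one_ne_zero hb using 1
    rw [mul_one, ← mul_deriv_theta hθb, mul_comm]
  have hθinv : theta p (b₁ * b₂ * b₃)⁻¹ ≠ 0 := by
    rw [theta_inv hB]
    exact mul_ne_zero (neg_ne_zero.mpr (inv_ne_zero hB)) h₄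
  refine (((hasDerivAt_pow 2 1).inv (pow_ne_zero 2 one_ne_zero)).mul ((((hθ hb₁ h₁).mul
    (hθ hb₂ h₂)).mul (hθ hb₃ h₃)).mul (hθ (inv_ne_zero hB) hθinv))).congr_deriv ?_
  simp only [Pi.mul_apply, Pi.inv_apply, mul_one, one_pow]
  rw [thetaLogDeriv_inv hp0 hpn hB h₄, theta_inv hB]
  push_cast
  ring

theorem thetaLogDeriv_identity (hb₁ : b₁ ∈ annulus p) (hb₂ : b₂ ≠ 0) (hb₃ : b₃ ≠ 0)
    (h₁ : theta p b₁ ≠ 0) (h₂ : theta p b₂ ≠ 0) (h₃ : theta p b₃ ≠ 0)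
    (h₄ : theta p (b₁ * b₂ * b₃) ≠ 0) (h₅ : theta p (b₁ ^ 2) ≠ 0) :
    (thetaLogDeriv p b₁ + thetaLogDeriv p b₂ + thetaLogDeriv p b₃ -
        thetaLogDeriv p (b₁ * b₂ * b₃) - 1) *
      (theta p b₁ * theta p b₂ * theta p b₃ * theta p (b₁ * b₂ * b₃)) =
    deriv (theta p) 1 * (theta p (b₁ * b₂) * theta p (b₁ * b₃) * theta p (b₂ * b₃)) := by
  have hb₁0 := ne_zero_of_mem_annulus hp hb₁
  have hleft := hasDerivAt_sub_comp_inv_one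
    (hasDerivAt_thetaProd_one hp hp1 hb₁0 hb₂ hb₃ h₁ h₂ h₃ h₄)
  have hright := (hasDerivAt_oddTheta_one (ofReal_ne_zero_of_pos hp)
    (norm_ofReal_lt_one hp hp1)).const_mul (-(b₁ * b₂ * b₃)⁻¹ *
      (theta p (b₁ * b₂) * theta p (b₁ * b₃) * theta p (b₂ * b₃)))
  have hderiv := hleft.unique (hright.congr_of_eventuallyEq
    (((isOpen_annulus p).eventually_mem (one_mem_annulus hp hp1)).mono
      fun z hz => thetaProd_sub_thetaProd_inv hp hp1 hb₁ hb₂ hb₃ h₅ hz))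
  have hB : -(b₁ * b₂ * b₃)⁻¹ ≠ 0 := by simp [hb₁0, hb₂, hb₃]
  apply mul_left_cancel₀ (mul_ne_zero two_ne_zero hB)
  linear_combination hderiv

end ThetaProd

end LogDeriv

/-! ### Theta values of level seven -/

section ThetaValues

/-- The theta value at `q ^ (7 k)` for the nome `q ^ 49`, normalised so as to be odd and
antiperiodic of period seven in `k`. -/
noncomputable def chi (q : ℂ) (k : ℤ) : ℂ := q ^ tri (k - 3) * theta (q ^ 49) (q ^ (7 * k))

/-- The logarithmic derivative of the theta function at `q ^ (7 k)`, normalised so as to be odd and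
periodic of period seven in `k`. -/
noncomputable def chiLogDeriv (q : ℂ) (k : ℤ) : ℂ :=
  14 * thetaLogDeriv (q ^ 49) (q ^ (7 * k)) + 2 * k - 7

theorem tri_add_four (k : ℤ) : tri (k + 4) = tri (k - 3) + 7 * k := by
  linarith [two_mul_tri (k + 4), two_mul_tri (k - 3)]

theorem neg_one_zpow_sq (m : ℤ) : ((-1 : ℂ) ^ m) ^ 2 = 1 := by
  rw [← zpow_natCast, ← zpow_mul, mul_comm, zpow_mul]
  simp

theorem norm_pow_lt_one {q : ℂ} (hq1 : ‖q‖ < 1) {n : ℕ} (hn : n ≠ 0) : ‖q ^ n‖ < 1 := by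
  rw [norm_pow]
  exact pow_lt_one₀ (norm_nonneg q) hq1 hn

theorem theta_zpow_ne_zero {q : ℂ} {k : ℤ} (h : chi q k ≠ 0) :
    theta (q ^ 49) (q ^ (7 * k)) ≠ 0 := right_ne_zero_of_mul h

section

variable {q : ℂ} (hq : q ≠ 0)
include hq

theorem theta_zpow_eq (k : ℤ) : theta (q ^ 49) (q ^ (7 * k)) = q ^ (-tri (k - 3)) * chi q k := by
  rw [chi, zpow_neg, inv_mul_cancel_left₀ (zpow_ne_zero _ hq)]

theorem zpow_seven_mul_add_seven (k : ℤ) : q ^ (7 * (k + 7)) = q ^ 49 * q ^ (7 * k) := by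
  rw [← zpow_natCast q 49, ← zpow_add₀ hq]
  congr 1
  push_cast
  ring

theorem chi_add_seven (k : ℤ) : chi q (k + 7) = -chi q k := by
  rw [chi, chi, zpow_seven_mul_add_seven hq, theta_mul_left (pow_ne_zero _ hq) (zpow_ne_zero _ hq),
    show k + 7 - 3 = k + 4 by ring, tri_add_four, zpow_add₀ hq]
  field_simp

theorem chi_neg (k : ℤ) : chi q (-k) = -chi q k := by
  rw [chi, chi, mul_neg, zpow_neg, theta_inv (zpow_ne_zero _ hq),
    show -k - 3 = 1 - (k + 4) by ring, tri_one_sub, tri_add_four, zpow_add₀ hq]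
  field_simp

theorem chi_zero : chi q 0 = 0 :=
  self_eq_neg.mp (by simpa using chi_neg hq 0)

theorem chi_add_seven_mul (k m : ℤ) : chi q (k + 7 * m) = (-1) ^ m * chi q k := by
  induction m using Int.induction_on with
  | zero => simp
  | succ n ih =>
    rw [show k + 7 * ((n : ℤ) + 1) = k + 7 * n + 7 by ring, chi_add_seven hq, ih,
      zpow_add_one₀ (neg_ne_zero.mpr one_ne_zero)]
    ring
  | pred n ih =>
    have hpred := chi_add_seven hq (k + 7 * (-(n : ℤ) - 1))
    rw [show k + 7 * (-(n : ℤ) - 1) + 7 = k + 7 * -n by ring, ih] at hpred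
    rw [zpow_sub_one₀ (neg_ne_zero.mpr one_ne_zero), inv_neg_one]
    linear_combination hpred

section Odd

variable {a : ℤ} (ha : Odd a)
include ha

theorem chi_add_seven_mul_odd (k : ℤ) : chi q (k + 7 * a) = -chi q k := by
  rw [chi_add_seven_mul hq, ha.neg_one_zpow, neg_one_mul]

theorem chi_mul_four : chi q (4 * a) = chi q (3 * a) := by
  rw [show 4 * a = -(3 * a) + 7 * a by ring, chi_add_seven_mul_odd hq ha, chi_neg hq, neg_neg]

theorem chi_mul_five : chi q (5 * a) = chi q (2 * a) := by
  rw [show 5 * a = -(2 * a) + 7 * a by ring, chi_add_seven_mul_odd hq ha, chi_neg hq, neg_neg]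

theorem chi_mul_six : chi q (6 * a) = chi q a := by
  rw [show 6 * a = -a + 7 * a by ring, chi_add_seven_mul_odd hq ha, chi_neg hq, neg_neg]

end Odd

theorem chiLogDeriv_add_seven (hq1 : ‖q‖ < 1) {k : ℤ} (h : chi q k ≠ 0) :
    chiLogDeriv q (k + 7) = chiLogDeriv q k := by
  rw [chiLogDeriv, chiLogDeriv, zpow_seven_mul_add_seven hq,
    thetaLogDeriv_mul_left (pow_ne_zero _ hq) (norm_pow_lt_one hq1 (by norm_num))
      (zpow_ne_zero _ hq) (theta_zpow_ne_zero h)]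
  push_cast
  ring

theorem chiLogDeriv_add_seven_mul (hq1 : ‖q‖ < 1) (hχ : ∀ k : ℤ, ¬ 7 ∣ k → chi q k ≠ 0) {k : ℤ}
    (hk : ¬ 7 ∣ k) (m : ℤ) : chiLogDeriv q (k + 7 * m) = chiLogDeriv q k := by
  induction m using Int.induction_on with
  | zero => simp
  | succ n ih =>
    rw [← ih, ← chiLogDeriv_add_seven hq hq1 (hχ (k + 7 * n) (by lia))]
    ring_nf
  | pred n ih =>
    rw [← ih, ← chiLogDeriv_add_seven hq hq1 (hχ (k + 7 * (-n - 1)) (by lia))]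
    ring_nf

end

section Real

variable {q : ℝ} (hq : 0 < q) (hq1 : q < 1)
include hq hq1

theorem zpow_mem_annulus {k : ℤ} (hk : -7 < k) (hk' : k < 7) :
    (q : ℂ) ^ (7 * k) ∈ annulus (q ^ 49) := by
  have hnorm : ‖(q : ℂ) ^ (7 * k)‖ = q ^ (7 * k) := by
    rw [norm_zpow, Complex.norm_real, Real.norm_of_nonneg hq.le]
  rw [annulus, Set.mem_ofPred_eq, hnorm, ← zpow_natCast, ← zpow_neg]
  push_cast
  exact ⟨zpow_lt_zpow_right_of_lt_one₀ hq hq1 (by lia),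
    zpow_lt_zpow_right_of_lt_one₀ hq hq1 (by lia)⟩

/-- A quartic relation of Klein, obtained as the three-term theta relation at
`b₁ = b₂ = b₃ = q ^ 7` and `z = q ^ 14`. -/
theorem chi_klein (h : chi q 2 ≠ 0) :
    chi q 3 ^ 3 * chi q 1 - chi q 2 ^ 3 * chi q 3 + chi q 1 ^ 3 * chi q 2 = 0 := by
  have hq0 := ofReal_ne_zero_of_pos hq
  have hrel := thetaProd_sub_thetaProd_inv (p := q ^ 49) (by positivity)
    (pow_lt_one₀ hq.le hq1 (by norm_num)) (zpow_mem_annulus hq hq1 (k := 1) (by simp) (by simp))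
    (zpow_ne_zero (7 * 1) hq0) (zpow_ne_zero (7 * 1) hq0)
    (by rw [← zpow_natCast (_ ^ _) 2, ← zpow_mul, Complex.ofReal_pow]; exact theta_zpow_ne_zero h)
    (zpow_mem_annulus hq hq1 (k := 2) (by simp) (by simp))
  simp only [thetaProd, oddTheta, Complex.ofReal_pow, ← zpow_natCast (_ ^ (_ : ℤ)) 2, ← zpow_mul,
    ← zpow_neg, ← zpow_add₀ hq0] at hrel
  have hval (j k e : ℤ) (hj : j = 7 * k) (he : e = -tri (k - 3)) :
      theta (q ^ 49) (q ^ j) = q ^ e * chi q k := by rw [hj, he, theta_zpow_eq hq0]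
  rw [hval (7 * 1 + 7 * 2) 3 0 (by norm_num) (by simp [tri]),
    hval (-(7 * 1 + 7 * 1 + 7 * 1) + 7 * 2) (-1) (-10) (by norm_num) (by norm_num [tri]),
    hval (7 * 1 + -(7 * 2)) (-1) (-10) (by norm_num) (by norm_num [tri]),
    hval (-(7 * 1 + 7 * 1 + 7 * 1) + -(7 * 2)) (-5) (-36) (by norm_num) (by norm_num [tri]),
    hval (7 * 1 + 7 * 1) 2 (-1) (by norm_num) (by norm_num [tri]),
    hval (7 * 2 * (2 : ℕ)) 4 0 (by norm_num) (by norm_num [tri]), chi_neg hq0, chi_neg hq0,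
    show chi (q : ℂ) 5 = chi q 2 from chi_mul_five hq0 odd_one,
    show chi (q : ℂ) 4 = chi q 3 from chi_mul_four hq0 odd_one] at hrel
  norm_num [zpow_neg] at hrel
  field_simp at hrel
  linear_combination -hrel

theorem chi_klein_mul (h : chi q 2 ≠ 0) {a : ℤ} (ha : a = 1 ∨ a = 3 ∨ a = 5) :
    chi q (3 * a) ^ 3 * chi q a - chi q (2 * a) ^ 3 * chi q (3 * a) + chi q a ^ 3 * chi q (2 * a) =
      0 := by
  have hq0 := ofReal_ne_zero_of_pos hq
  have hklein := chi_klein hq hq1 h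
  have hadd (k : ℤ) : chi q (k + 7) = -chi q k := chi_add_seven hq0 k
  have h5 : chi q 5 = chi q 2 := chi_mul_five hq0 odd_one
  have h6 : chi q 6 = chi q 1 := chi_mul_six hq0 odd_one
  rcases ha with rfl | rfl | rfl
  · exact hklein
  · rw [show (3 : ℤ) * 3 = 2 + 7 by norm_num, show (2 : ℤ) * 3 = 6 by norm_num, hadd, h6]
    linear_combination hklein
  · rw [show (3 : ℤ) * 5 = 1 + 7 + 7 by norm_num, show (2 : ℤ) * 5 = 3 + 7 by norm_num, hadd, hadd,
      hadd, h5]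
    linear_combination hklein

variable (hχ : ∀ k : ℤ, ¬ 7 ∣ k → chi q k ≠ 0)
include hχ

theorem chiLogDeriv_relation {k : ℤ} (hk : 0 < k) (hk' : k < 7) :
    (2 * chiLogDeriv q k + chiLogDeriv q (2 * k) - chiLogDeriv q (4 * k)) *
      (chi q k ^ 2 * chi q (4 * k)) =
        14 * q ^ 6 * deriv (theta (q ^ 49)) 1 * chi q (3 * k) ^ 2 := by
  have hq0 := ofReal_ne_zero_of_pos hq
  have hid := thetaLogDeriv_identity (p := q ^ 49) (by positivity)
    (pow_lt_one₀ hq.le hq1 (by norm_num)) (b₁ := (q : ℂ) ^ (7 * k)) (b₂ := (q : ℂ) ^ (7 * k))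
    (b₃ := (q : ℂ) ^ (7 * (2 * k))) (zpow_mem_annulus hq hq1 (by lia) hk')
    (zpow_ne_zero _ hq0) (zpow_ne_zero _ hq0)
  rw [← zpow_natCast (_ ^ _) 2, ← zpow_mul, ← zpow_add₀ hq0, ← zpow_add₀ hq0, ← zpow_add₀ hq0,
    Complex.ofReal_pow, show 7 * k + 7 * k + 7 * (2 * k) = 7 * (4 * k) by ring,
    show 7 * k + 7 * (2 * k) = 7 * (3 * k) by ring, show 7 * k + 7 * k = 7 * (2 * k) by ring,
    show 7 * k * ((2 : ℕ) : ℤ) = 7 * (2 * k) by push_cast; ring] at hid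
  have hχ1 := hχ k (by lia)
  have hχ2 := hχ (2 * k) (by lia)
  specialize hid (theta_zpow_ne_zero hχ1) (theta_zpow_ne_zero hχ1) (theta_zpow_ne_zero hχ2)
    (theta_zpow_ne_zero (hχ (4 * k) (by lia))) (theta_zpow_ne_zero hχ2)
  simp only [theta_zpow_eq hq0] at hid
  have hpowers : (q : ℂ) ^ (-tri (3 * k - 3)) * q ^ (-tri (3 * k - 3)) =
      q ^ 6 * (q ^ (-tri (k - 3)) * q ^ (-tri (k - 3)) * q ^ (-tri (4 * k - 3))) := by
    rw [← zpow_natCast _ 6]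
    simp only [← zpow_add₀ hq0]
    congr 1
    push_cast
    linarith [two_mul_tri (k - 3), two_mul_tri (3 * k - 3), two_mul_tri (4 * k - 3)]
  have hne : (q : ℂ) ^ (-tri (k - 3)) * q ^ (-tri (k - 3)) * q ^ (-tri (4 * k - 3)) *
      q ^ (-tri (2 * k - 3)) * chi q (2 * k) ≠ 0 := mul_ne_zero (by positivity) hχ2
  apply mul_left_cancel₀ hne
  simp only [chiLogDeriv]
  push_cast
  linear_combination 14 * hid + 14 * deriv (theta (q ^ 49)) 1 * chi q (3 * k) ^ 2 *
    chi q (2 * k) * q ^ (-tri (2 * k - 3)) * hpowers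

theorem chiLogDeriv_relation_of_not_dvd {k : ℤ} (hk : ¬ 7 ∣ k) :
    (2 * chiLogDeriv q k + chiLogDeriv q (2 * k) - chiLogDeriv q (4 * k)) *
      (chi q k ^ 2 * chi q (4 * k)) =
        14 * q ^ 6 * deriv (theta (q ^ 49)) 1 * chi q (3 * k) ^ 2 := by
  have hq0 := ofReal_ne_zero_of_pos hq
  have hqn := norm_ofReal_lt_one hq hq1
  obtain ⟨r, m, hr, hr', rfl⟩ : ∃ r m : ℤ, 0 < r ∧ r < 7 ∧ k = r + 7 * m :=
    ⟨k % 7, k / 7, by lia, by lia, by lia⟩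
  rw [show 2 * (r + 7 * m) = 2 * r + 7 * (2 * m) by ring,
    show 4 * (r + 7 * m) = 4 * r + 7 * (4 * m) by ring,
    show 3 * (r + 7 * m) = 3 * r + 7 * (3 * m) by ring,
    chiLogDeriv_add_seven_mul hq0 hqn hχ (by lia), chiLogDeriv_add_seven_mul hq0 hqn hχ (by lia),
    chiLogDeriv_add_seven_mul hq0 hqn hχ (by lia), chi_add_seven_mul hq0, chi_add_seven_mul hq0,
    chi_add_seven_mul hq0, mul_pow, mul_pow, neg_one_zpow_sq, neg_one_zpow_sq,
    show 4 * m = 2 * m * (2 : ℕ) by push_cast; ring, zpow_mul, zpow_natCast, neg_one_zpow_sq,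
    one_mul, one_mul, one_mul]
  exact chiLogDeriv_relation hq hq1 hχ hr hr'

/-- The relations for `a`, `2 a` and `4 a` form a linear system of determinant `14` in the three
logarithmic derivatives at these arguments. -/
theorem chiLogDeriv_two_mul {a : ℤ} (ha : ¬ 7 ∣ a) (ha' : Odd a) :
    chiLogDeriv q (2 * a) = q ^ 6 * deriv (theta (q ^ 49)) 1 *
      (3 * (chi q (3 * a) / chi q a ^ 2) - 5 * (chi q a / chi q (2 * a) ^ 2)
        - chi q (2 * a) / chi q (3 * a) ^ 2) := by
  have hq0 := ofReal_ne_zero_of_pos hq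
  have hqn := norm_ofReal_lt_one hq hq1
  have hadd := chi_add_seven_mul_odd hq0 ha'
  have hrel1 := chiLogDeriv_relation_of_not_dvd hq hq1 hχ ha
  have hrel2 := chiLogDeriv_relation_of_not_dvd hq hq1 hχ (k := 2 * a) (by lia)
  have hrel4 := chiLogDeriv_relation_of_not_dvd hq hq1 hχ (k := 4 * a) (by lia)
  rw [chi_mul_four hq0 ha'] at hrel1
  rw [show 2 * (2 * a) = 4 * a by ring, show 4 * (2 * a) = a + 7 * a by ring,
    show 3 * (2 * a) = 6 * a by ring, chi_mul_six hq0 ha', hadd,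
    chiLogDeriv_add_seven_mul hq0 hqn hχ ha] at hrel2
  rw [show 2 * (4 * a) = a + 7 * a by ring, show 4 * (4 * a) = 2 * a + 7 * a + 7 * a by ring,
    show 3 * (4 * a) = 5 * a + 7 * a by ring, hadd, hadd, hadd, chi_mul_four hq0 ha',
    chi_mul_five hq0 ha', chiLogDeriv_add_seven_mul hq0 hqn hχ ha,
    chiLogDeriv_add_seven_mul hq0 hqn hχ (by omega),
    chiLogDeriv_add_seven_mul hq0 hqn hχ (by omega)] at hrel4
  have hχ1 := hχ a ha
  have hχ2 := hχ (2 * a) (by lia)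
  have hχ3 := hχ (3 * a) (by omega)
  rw [← eq_div_iff (by positivity)] at hrel1
  rw [← eq_div_iff (mul_ne_zero (pow_ne_zero 2 hχ2) (neg_ne_zero.mpr hχ1))] at hrel2
  rw [← eq_div_iff (mul_ne_zero (pow_ne_zero 2 hχ3) (by simpa using hχ2))] at hrel4
  have hsolve : 14 * chiLogDeriv q (2 * a) =
      3 * (2 * chiLogDeriv q a + chiLogDeriv q (2 * a) - chiLogDeriv q (4 * a)) +
      5 * (2 * chiLogDeriv q (2 * a) + chiLogDeriv q (4 * a) - chiLogDeriv q a) -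
      (2 * chiLogDeriv q (4 * a) + chiLogDeriv q a - chiLogDeriv q (2 * a)) := by ring
  rw [hrel1, hrel2, hrel4] at hsolve
  apply mul_left_cancel₀ (show (14 : ℂ) ≠ 0 by norm_num)
  rw [hsolve]
  field_simp
  ring

end Real

end ThetaValues

/-! ### Appell sums -/

section Appell

/-- The Appell sum `∑ (-1)ᵐ p ^ (3 m (m - 1) / 2) (w z³)ᵐ / (1 - z pᵐ)`; a term with vanishing
denominator is counted as zero. -/
noncomputable def appell (p w z : ℂ) : ℂ :=
  ∑' m : ℤ, thetaTerm (p ^ 3) (w * z ^ 3) m * (1 - z * p ^ m)⁻¹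

/-- The Appell sum without its central term, the only one with a pole in the annulus. -/
noncomputable def appellReg (p w z : ℂ) : ℂ :=
  ∑' m : ℤ, thetaTerm (p ^ 3) (w * z ^ 3) m * if m = 0 then 0 else (1 - z * p ^ m)⁻¹

/-- The product of the theta function and the Appell sum, with its singularity at `1` removed. -/
noncomputable def appellProd (p w z : ℂ) : ℂ :=
  theta p z * appellReg p w z - dslope (theta p) 1 z

theorem appell_mul_left {p w z : ℂ} (hp : p ≠ 0) (hw : w ≠ 0) (hz : z ≠ 0) :
    appell p w (p * z) = -(w * z ^ 3)⁻¹ * appell p w z := by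
  rw [appell, appell, ← tsum_mul_left, ← (Equiv.addRight (1 : ℤ)).tsum_eq
    fun m => -(w * z ^ 3)⁻¹ * (thetaTerm (p ^ 3) (w * z ^ 3) m * (1 - z * p ^ m)⁻¹)]
  refine tsum_congr fun m => ?_
  rw [show w * (p * z) ^ 3 = p ^ 3 * (w * z ^ 3) by ring,
    thetaTerm_mul_left (pow_ne_zero 3 hp) (by positivity), Equiv.coe_addRight, zpow_add_one₀ hp,
    show p * z * p ^ m = z * (p ^ m * p) by ring, mul_assoc]

theorem appellProd_one (p w : ℂ) : appellProd p w 1 = -deriv (theta p) 1 := by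
  rw [appellProd, theta_one, dslope_same, zero_mul, zero_sub]

theorem dslope_theta_one_of_ne {p z : ℂ} (hz : z ≠ 1) :
    dslope (theta p) 1 z = -(theta p z * (1 - z)⁻¹) := by
  rw [dslope_of_ne _ hz, slope_def_field, theta_one, sub_zero, div_eq_mul_inv,
    ← neg_sub 1 z, inv_neg, mul_neg]

theorem dslope_theta_one_inv {p z : ℂ} (hz : z ≠ 0) :
    dslope (theta p) 1 z⁻¹ = dslope (theta p) 1 z := by
  rcases eq_or_ne z 1 with rfl | hz1
  · rw [inv_one]
  · have hsub : 1 - z ≠ 0 := sub_ne_zero.mpr hz1.symm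
    rw [dslope_theta_one_of_ne hz1, dslope_theta_one_of_ne (inv_ne_one.mpr hz1), theta_inv hz,
      show 1 - z⁻¹ = -(1 - z) * z⁻¹ by field_simp; ring]
    field_simp

section Annulus

variable {p : ℝ} (hp : 0 < p)
include hp

theorem min_gap_pos {lo hi : ℝ} (hlo : p < lo) (hhi : hi < p⁻¹) :
    0 < min (lo / p - 1) (1 - hi * p) :=
  lt_min (sub_pos.mpr ((one_lt_div hp).mpr hlo))
    (sub_pos.mpr (by simpa [hp.ne'] using mul_lt_mul_of_pos_right hhi hp))

variable (hp1 : p < 1)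
include hp1

theorem min_gap_le_norm_one_sub {lo hi : ℝ} {z : ℂ} (hz : lo ≤ ‖z‖) (hz' : ‖z‖ ≤ hi) {m : ℤ}
    (hm : m ≠ 0) : min (lo / p - 1) (1 - hi * p) ≤ ‖1 - z * (p : ℂ) ^ m‖ := by
  have hnorm : ‖z * (p : ℂ) ^ m‖ = ‖z‖ * p ^ m := by
    rw [norm_mul, norm_zpow, Complex.norm_real, Real.norm_of_nonneg hp.le]
  have htri := abs_norm_sub_norm_le 1 (z * (p : ℂ) ^ m)
  rw [hnorm, norm_one] at htri
  rcases hm.lt_or_gt with hm | hm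
  · have hpow : p⁻¹ ≤ p ^ m := by
      simpa using zpow_le_zpow_right_of_le_one₀ hp hp1.le (show m ≤ -1 by lia)
    have hlarge : lo / p ≤ ‖z‖ * p ^ m := by rw [div_eq_mul_inv]; gcongr
    exact (min_le_left _ _).trans (by linarith [neg_le_abs (1 - ‖z‖ * p ^ m)])
  · have hpow : p ^ m ≤ p := by
      simpa using zpow_le_zpow_right_of_le_one₀ hp hp1.le (show 1 ≤ m by lia)
    have hsmall : ‖z‖ * p ^ m ≤ hi * p := by
      have := (norm_nonneg z).trans hz'
      gcongr
    exact (min_le_right _ _).trans (by linarith [le_abs_self (1 - ‖z‖ * p ^ m)])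

theorem one_sub_mul_zpow_ne_zero {z : ℂ} (hz : z ∈ annulus p) {m : ℤ} (hm : m ≠ 0) :
    1 - z * (p : ℂ) ^ m ≠ 0 :=
  norm_pos_iff.mp <| (min_gap_pos hp hz.1 hz.2).trans_le
    (min_gap_le_norm_one_sub hp hp1 le_rfl le_rfl hm)

theorem norm_appellReg_factor_le {lo hi : ℝ} (hlo : p < lo) (hhi : hi < p⁻¹) {z : ℂ}
    (hz : lo ≤ ‖z‖) (hz' : ‖z‖ ≤ hi) (m : ℤ) :
    ‖if m = 0 then 0 else (1 - z * (p : ℂ) ^ m)⁻¹‖ ≤ (min (lo / p - 1) (1 - hi * p))⁻¹ := by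
  have hgap := min_gap_pos hp hlo hhi
  split_ifs with hm
  · rw [norm_zero]
    exact (inv_pos.mpr hgap).le
  · rw [norm_inv]
    exact inv_anti₀ hgap (min_gap_le_norm_one_sub hp hp1 hz hz' hm)

theorem differentiableOn_dslope_theta : DifferentiableOn ℂ (dslope (theta p) 1) (annulus p) :=
  (Complex.differentiableOn_dslope
    ((isOpen_annulus p).mem_nhds (one_mem_annulus hp hp1))).mpr fun _ hz =>
      (differentiableAt_theta (ofReal_ne_zero_of_pos hp) (norm_ofReal_lt_one hp hp1)
        (ne_zero_of_mem_annulus hp hz)).differentiableWithinAt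

theorem deriv_dslope_theta_one : deriv (dslope (theta p) 1) 1 = 0 := by
  have hderiv := ((differentiableOn_dslope_theta hp hp1).differentiableAt
    ((isOpen_annulus p).mem_nhds (one_mem_annulus hp hp1))).hasDerivAt
  have hinv : HasDerivAt (fun z : ℂ => z⁻¹) (-1) 1 := by
    simpa using hasDerivAt_inv (𝕜 := ℂ) one_ne_zero
  have hcomp := HasDerivAt.comp (1 : ℂ) (h₂ := dslope (theta p) 1)
    (by simpa only [inv_one] using hderiv) hinv
  have hsymm : dslope (theta p) 1 ∘ (fun z : ℂ => z⁻¹) =ᶠ[nhds 1] dslope (theta p) 1 :=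
    (isOpen_ne.eventually_mem (one_ne_zero (α := ℂ))).mono fun _ hz => dslope_theta_one_inv hz
  have hodd := (hcomp.congr_of_eventuallyEq hsymm.symm).unique hderiv
  exact neg_eq_self.mp (by simpa using hodd)

variable {w : ℂ} (hw : w ≠ 0)
include hw

theorem summable_appellReg {z : ℂ} (hz : z ∈ annulus p) : Summable fun m : ℤ =>
    thetaTerm ((p : ℂ) ^ 3) (w * z ^ 3) m * if m = 0 then 0 else (1 - z * (p : ℂ) ^ m)⁻¹ := by
  have hz0 := ne_zero_of_mem_annulus hp hz
  have hsum := summable_thetaTerm (pow_ne_zero 3 (ofReal_ne_zero_of_pos hp))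
    (norm_pow_lt_one (norm_ofReal_lt_one hp hp1) (by norm_num)) (z := w * z ^ 3) (by positivity)
  refine (hsum.norm.mul_right (min (‖z‖ / p - 1) (1 - ‖z‖ * p))⁻¹).of_norm_bounded fun m => ?_
  rw [norm_mul]
  gcongr
  exact norm_appellReg_factor_le hp hp1 hz.1 hz.2 le_rfl le_rfl m

theorem hasSum_appell {z : ℂ} (hz : z ∈ annulus p) :
    HasSum (fun m : ℤ => thetaTerm ((p : ℂ) ^ 3) (w * z ^ 3) m * (1 - z * (p : ℂ) ^ m)⁻¹)
      ((1 - z)⁻¹ + appellReg p w z) := by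
  have hcentral : HasSum (fun m : ℤ => if m = 0 then (1 - z)⁻¹ else 0) ((1 - z)⁻¹) := by
    simpa using hasSum_ite_eq (0 : ℤ) ((1 - z)⁻¹)
  refine (hcentral.add (summable_appellReg hp hp1 hw hz).hasSum).congr_fun fun m => ?_
  split_ifs with hm
  · simp [hm, thetaTerm, tri]
  · simp

theorem appell_eq_add {z : ℂ} (hz : z ∈ annulus p) :
    appell p w z = (1 - z)⁻¹ + appellReg p w z :=
  (hasSum_appell hp hp1 hw hz).tsum_eq

theorem differentiableOn_appellReg : DifferentiableOn ℂ (appellReg p w) (annulus p) := by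
  intro z hz
  obtain ⟨lo, hlo, hlo'⟩ := exists_between hz.1
  obtain ⟨hi, hhi, hhi'⟩ := exists_between hz.2
  have hlo0 : 0 < lo := hp.trans hlo
  have hnorm (x : ℂ) : ‖w * x ^ 3‖ = ‖w‖ * ‖x‖ ^ 3 := by rw [norm_mul, norm_pow]
  let U : Set ℂ := {x | lo < ‖x‖ ∧ ‖x‖ < hi}
  have hU : IsOpen U := (isOpen_lt continuous_const continuous_norm).inter
    (isOpen_lt continuous_norm continuous_const)
  have hUp : U ⊆ annulus p := fun x hx => ⟨hlo.trans hx.1, hx.2.trans hhi'⟩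
  have hfactor (m : ℤ) :
      DifferentiableOn ℂ (fun x => if m = 0 then 0 else (1 - x * (p : ℂ) ^ m)⁻¹) U := by
    by_cases hm : m = 0
    · simp only [hm, if_true]
      exact differentiableOn_const 0
    · simp only [hm, if_false]
      exact ((differentiableOn_const 1).sub (differentiableOn_id.mul_const _)).inv
        fun x hx => one_sub_mul_zpow_ne_zero hp hp1 (hUp hx) hm
  have hdiff := differentiableOn_tsum_thetaTerm_mul (p := (p : ℂ) ^ 3)
    (pow_ne_zero 3 (ofReal_ne_zero_of_pos hp))
    (norm_pow_lt_one (norm_ofReal_lt_one hp hp1) (by norm_num)) hU (y := fun x => w * x ^ 3)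
    ((differentiableOn_pow 3).const_mul w) (lo := ‖w‖ * lo ^ 3) (hi := ‖w‖ * hi ^ 3)
    (mul_pos (norm_pos_iff.mpr hw) (by positivity))
    (fun x hx => by rw [hnorm]; gcongr; exact hx.1.le)
    (fun x hx => by rw [hnorm]; gcongr; exact hx.2.le) hfactor
    fun m x hx => norm_appellReg_factor_le hp hp1 hlo hhi' hx.1.le hx.2.le m
  exact (hdiff.differentiableAt (hU.mem_nhds ⟨hlo', hhi⟩)).differentiableWithinAt

theorem appellProd_of_ne {z : ℂ} (hz : z ∈ annulus p) (hz1 : z ≠ 1) :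
    appellProd p w z = theta p z * appell p w z := by
  rw [appellProd, dslope_theta_one_of_ne hz1, appell_eq_add hp hp1 hw hz]
  ring

theorem appellProd_isQuasiPeriodic : IsQuasiPeriodic p 4 w⁻¹ (appellProd p w) where
  differentiableOn := by
    refine DifferentiableOn.sub (DifferentiableOn.mul (fun z hz => ?_)
      (differentiableOn_appellReg hp hp1 hw)) (differentiableOn_dslope_theta hp hp1)
    exact (differentiableAt_theta (ofReal_ne_zero_of_pos hp) (norm_ofReal_lt_one hp hp1)
      (ne_zero_of_mem_annulus hp hz)).differentiableWithinAt
  map_mul z hz hz' := by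
    have hp0 := ofReal_ne_zero_of_pos hp
    have hz0 : z ≠ 0 := norm_pos_iff.mp (one_pos.trans hz)
    have hnorm : ‖(p : ℂ) * z‖ = p * ‖z‖ := by
      rw [norm_mul, Complex.norm_real, Real.norm_of_nonneg hp.le]
    have hpz : p * ‖z‖ < 1 := (lt_inv_mul_iff₀ hp).mp (by simpa using hz')
    have hmem : z ∈ annulus p := ⟨hp1.trans hz, hz'⟩
    have hmem' : (p : ℂ) * z ∈ annulus p :=
      ⟨hnorm ▸ lt_mul_of_one_lt_right hp hz, hnorm ▸ hpz.trans ((one_lt_inv₀ hp).mpr hp1)⟩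
    rw [appellProd_of_ne hp hp1 hw hmem'
        (ne_of_apply_ne norm (by rw [hnorm, norm_one]; exact hpz.ne)),
      appellProd_of_ne hp hp1 hw hmem (ne_of_apply_ne norm (by rw [norm_one]; exact hz.ne')),
      theta_mul_left hp0 hz0, appell_mul_left hp0 hw hz0]
    simp only [zpow_neg, Nat.cast_ofNat, zpow_ofNat]
    field_simp

theorem hasDerivAt_appellProd_one :
    HasDerivAt (appellProd p w) (deriv (theta p) 1 * appell p w 1) 1 := by
  have hone := one_mem_annulus hp hp1
  have hmem := (isOpen_annulus p).mem_nhds hone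
  have hderiv := (((differentiableAt_theta (ofReal_ne_zero_of_pos hp) (norm_ofReal_lt_one hp hp1)
    one_ne_zero).hasDerivAt).mul ((differentiableOn_appellReg hp hp1 hw).differentiableAt
      hmem).hasDerivAt).sub
    ((differentiableOn_dslope_theta hp hp1).differentiableAt hmem).hasDerivAt
  rw [theta_one, zero_mul, deriv_dslope_theta_one hp hp1, add_zero, sub_zero] at hderiv
  rw [appell_eq_add hp hp1 hw hone, sub_self, inv_zero, zero_add]
  exact hderiv

end Annulus

end Appell

/-! ### A linear functional on quasi-periodic functions -/

section RankFunctional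

theorem zpow_eq_zpow_of_modEq {G : Type*} [GroupWithZero G] {t : G} {N : ℕ} (hN : N ≠ 0)
    (ht : t ^ N = 1) {m n : ℤ} (h : m ≡ n [ZMOD N]) : t ^ m = t ^ n := by
  have ht0 : t ≠ 0 := ne_zero_pow hN (ht ▸ one_ne_zero)
  obtain ⟨c, hc⟩ := h.dvd
  rw [eq_add_of_sub_eq' hc, zpow_add₀ ht0, zpow_mul, zpow_natCast, ht, one_zpow, mul_one]

/-- The exponent `n (3 n + 2 i + 1) / 2` in the Appell sum generating the rank counts. -/
def appellExp (i n : ℤ) : ℤ := 3 * tri n + (i + 2) * n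

theorem two_mul_appellExp (i n : ℤ) : 2 * appellExp i n = n * (3 * n + 2 * i + 1) := by
  rw [appellExp]
  linear_combination 3 * two_mul_tri n

theorem appellExp_zero (i : ℤ) : appellExp i 0 = 0 := by simp [appellExp, tri]

/-- The linear functional which evaluates the seven-dissected Appell sum; the term `r = 0` of the
sum vanishes, since it has denominator `theta (q ^ 49) 1 = 0`. -/
noncomputable def rankFunctional (q t : ℂ) (i : ℤ) (Φ : ℂ → ℂ) : ℂ :=
  7 * deriv Φ 1 - (3 - i) * Φ 1 + 7 * deriv (theta (q ^ 49)) 1 * ∑ r ∈ Finset.range 7,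
    t ^ appellExp i r * ((-1) ^ (r : ℤ) * q ^ appellExp i r *
      (Φ (q ^ (7 * (r : ℤ))) / theta (q ^ 49) (q ^ (7 * (r : ℤ)))))

theorem sum_mul_rankFunctional {q : ℝ} (hq : 0 < q) (hq1 : q < 1) (t : ℂ) (i : ℤ)
    {ι : Type*} [Fintype ι] {c : ι → ℂ} {F : ι → ℂ → ℂ} (hF : ∀ j, DifferentiableAt ℂ (F j) 1)
    (h : ∀ z ∈ annulus (q ^ 49), ∑ j, c j * F j z = 0) :
    ∑ j, c j * rankFunctional q t i (F j) = 0 := by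
  have hone := one_mem_annulus (p := q ^ 49) (by positivity) (pow_lt_one₀ hq.le hq1 (by norm_num))
  have hderiv : ∑ j, c j * deriv (F j) 1 = 0 := by
    have hsum := HasDerivAt.fun_sum (u := Finset.univ) (A := fun j z => c j * F j z)
      (A' := fun j => c j * deriv (F j) 1) (x := 1) fun j _ => (hF j).hasDerivAt.const_mul (c j)
    exact hsum.unique ((hasDerivAt_const (1 : ℂ) (0 : ℂ)).congr_of_eventuallyEq
      (((isOpen_annulus _).eventually_mem hone).mono h))
  have hvalue : ∀ r ∈ Finset.range 7, ∑ j, c j * F j ((q : ℂ) ^ (7 * (r : ℤ))) = 0 := fun r hr =>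
    h _ (zpow_mem_annulus hq hq1 (by lia) (by have := Finset.mem_range.mp hr; lia))
  have hlinear : ∑ j, c j * rankFunctional q t i (F j) = 7 * ∑ j, c j * deriv (F j) 1
      - (3 - i) * ∑ j, c j * F j 1 + 7 * deriv (theta (q ^ 49)) 1 * ∑ r ∈ Finset.range 7,
      t ^ appellExp i r * ((-1) ^ (r : ℤ) * q ^ appellExp i r *
      ((∑ j, c j * F j (q ^ (7 * (r : ℤ)))) / theta (q ^ 49) (q ^ (7 * (r : ℤ))))) := by
    simp only [rankFunctional, Finset.mul_sum, Finset.sum_div, mul_add, mul_sub,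
      Finset.sum_add_distrib, Finset.sum_sub_distrib]
    rw [Finset.sum_comm]
    congr 1
    · congr 1 <;> exact Finset.sum_congr rfl fun j _ => by ring
    · exact Finset.sum_congr rfl fun r _ => Finset.sum_congr rfl fun j _ => by ring
  rw [hlinear, hderiv, h 1 hone,
    Finset.sum_eq_zero fun r hr => by rw [hvalue r hr, zero_div, mul_zero, mul_zero]]
  ring

section ThetaMul

variable {q : ℝ} (hq : 0 < q) (hq1 : q < 1) (hχ : ∀ k : ℤ, ¬ 7 ∣ k → chi q k ≠ 0) (t : ℂ) (i : ℤ)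
include hq hq1 hχ

theorem rankFunctional_of_eq_theta_mul {Φ T : ℂ → ℂ}
    (hderiv : deriv Φ 1 = deriv (theta (q ^ 49)) 1 * T 1)
    (hmul : ∀ z ∈ annulus (q ^ 49), z ≠ 1 → Φ z = theta (q ^ 49) z * T z) :
    rankFunctional q t i Φ = 7 * deriv (theta (q ^ 49)) 1 * ∑ r ∈ Finset.range 7,
      t ^ appellExp i r * ((-1) ^ (r : ℤ) * q ^ appellExp i r * T (q ^ (7 * (r : ℤ))))
        - (3 - i) * Φ 1 := by
  have hquot : ∀ r ∈ Finset.range 6, Φ ((q : ℂ) ^ (7 * ((r + 1 : ℕ) : ℤ))) /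
      theta (q ^ 49) ((q : ℂ) ^ (7 * ((r + 1 : ℕ) : ℤ))) =
        T ((q : ℂ) ^ (7 * ((r + 1 : ℕ) : ℤ))) := fun r hr => by
    have hr := Finset.mem_range.mp hr
    have hθ := theta_zpow_ne_zero (hχ ((r + 1 : ℕ) : ℤ) (by lia))
    rw [hmul _ (zpow_mem_annulus hq hq1 (by lia) (by lia)) fun h => hθ (by rw [h, theta_one]),
      mul_div_cancel_left₀ _ hθ]
  rw [rankFunctional, hderiv, Finset.sum_range_succ' _ 6, Finset.sum_range_succ' _ 6,
    Finset.sum_congr rfl fun r hr => by rw [hquot r hr]]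
  simp only [Nat.cast_zero, appellExp_zero, mul_zero, zpow_zero, theta_one, div_zero]
  ring

theorem rankFunctional_appellProd {w : ℂ} (hw : w ≠ 0) :
    rankFunctional q t i (appellProd (q ^ 49) w) = deriv (theta (q ^ 49)) 1 * (3 - i +
      7 * ∑ r ∈ Finset.range 7, t ^ appellExp i r * ((-1) ^ (r : ℤ) * q ^ appellExp i r *
        appell (q ^ 49) w (q ^ (7 * (r : ℤ))))) := by
  have hp : 0 < q ^ 49 := by positivity
  have hp1 : q ^ 49 < 1 := pow_lt_one₀ hq.le hq1 (by norm_num)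
  rw [rankFunctional_of_eq_theta_mul hq hq1 hχ t i (T := appell (q ^ 49) w)
    (by simpa using (hasDerivAt_appellProd_one hp hp1 hw).deriv)
    fun z hz hz1 => by simpa using appellProd_of_ne hp hp1 hw hz hz1, appellProd_one]
  ring

end ThetaMul

/-- A product of three theta functions and a monomial. -/
noncomputable def thetaTriple (q : ℂ) (i b c d : ℤ) (z : ℂ) : ℂ :=
  z ^ (-(i + 2)) * (theta (q ^ 49) (q ^ (-(7 * b)) * z) * theta (q ^ 49) (q ^ (-(7 * c)) * z) *
    theta (q ^ 49) (q ^ (-(7 * d)) * z))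

/-- The signed product of three theta values arising from `thetaTriple`. -/
noncomputable def chiTriple (q : ℂ) (b c d k : ℤ) : ℂ :=
  (-1) ^ k * (chi q (k - b) * chi q (k - c) * chi q (k - d))

/-- The power of `q` relating `thetaTriple` to `chiTriple`. -/
noncomputable def tripleScale (q : ℂ) (b c d : ℤ) : ℂ :=
  q ^ (-tri (-b - 3) - tri (-c - 3) - tri (-d - 3))

/-- A monomial times a theta function of quadratic argument. -/
noncomputable def thetaDouble (q : ℂ) (i : ℤ) (z : ℂ) : ℂ :=
  z ^ i * theta (q ^ 49) (q ^ (7 * (2 * (2 * i + 1))) * z ^ 2)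

section Complex

variable {q : ℂ} (hq : q ≠ 0)
include hq

theorem thetaTriple_mul_left (i b c d : ℤ) {z : ℂ} (hz : z ≠ 0) :
    thetaTriple q i b c d (q ^ 49 * z) =
      -(q ^ (-(49 * (i + 2)) + 7 * (b + c + d)) * (z ^ 3)⁻¹) * thetaTriple q i b c d z := by
  rw [thetaTriple, thetaTriple, theta_mul_mul_left (pow_ne_zero _ hq) (zpow_ne_zero _ hq) hz,
    theta_mul_mul_left (pow_ne_zero _ hq) (zpow_ne_zero _ hq) hz,
    theta_mul_mul_left (pow_ne_zero _ hq) (zpow_ne_zero _ hq) hz, mul_zpow,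
    ← zpow_natCast q 49, ← zpow_mul, show -(49 * (i + 2)) + 7 * (b + c + d) =
      ((49 : ℕ) : ℤ) * -(i + 2) + 7 * b + 7 * c + 7 * d by push_cast; ring, zpow_add₀ hq,
    zpow_add₀ hq, zpow_add₀ hq, ← zpow_neg, ← zpow_neg, ← zpow_neg, neg_neg, neg_neg, neg_neg]
  field_simp

theorem thetaTriple_zpow {i b c d : ℤ} (h : b + c + d = 3 * (2 * i + 1)) (r : ℤ) :
    (-1) ^ r * q ^ appellExp i r * thetaTriple q i b c d (q ^ (7 * r)) =
      tripleScale q b c d * chiTriple q b c d r := by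
  have hexp : -tri (-b - 3) - tri (-c - 3) - tri (-d - 3) = appellExp i r + 7 * r * -(i + 2) +
      -tri (r - b - 3) + -tri (r - c - 3) + -tri (r - d - 3) := by
    apply mul_left_cancel₀ (two_ne_zero (α := ℤ))
    linear_combination two_mul_tri (r - b - 3) + two_mul_tri (r - c - 3) + two_mul_tri (r - d - 3)
      - two_mul_tri (-b - 3) - two_mul_tri (-c - 3) - two_mul_tri (-d - 3)
      - two_mul_appellExp i r - 2 * r * h
  rw [thetaTriple, tripleScale, chiTriple, hexp, ← zpow_add₀ hq, ← zpow_add₀ hq, ← zpow_add₀ hq,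
    ← zpow_mul, show -(7 * b) + 7 * r = 7 * (r - b) by ring,
    show -(7 * c) + 7 * r = 7 * (r - c) by ring, show -(7 * d) + 7 * r = 7 * (r - d) by ring,
    theta_zpow_eq hq, theta_zpow_eq hq, theta_zpow_eq hq, zpow_add₀ hq, zpow_add₀ hq,
    zpow_add₀ hq, zpow_add₀ hq]
  ring

theorem thetaDouble_mul_left (i : ℤ) {z : ℂ} (hz : z ≠ 0) :
    thetaDouble q i (q ^ 49 * z) = q ^ (-(7 * (11 + i))) * (z ^ 4)⁻¹ * thetaDouble q i z := by
  rw [thetaDouble, thetaDouble, show q ^ (7 * (2 * (2 * i + 1))) * (q ^ 49 * z) ^ 2 =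
    q ^ 49 * (q ^ 49 * (q ^ (7 * (2 * (2 * i + 1))) * z ^ 2)) by ring,
    theta_mul_mul (pow_ne_zero _ hq) (mul_ne_zero (zpow_ne_zero _ hq) (pow_ne_zero 2 hz)), mul_zpow,
    ← zpow_natCast q 49, ← zpow_mul, ← zpow_neg, mul_inv, ← zpow_neg, mul_pow,
    ← zpow_natCast (q ^ _) 2, ← zpow_mul, show -(7 * (11 + i)) = ((49 : ℕ) : ℤ) * i +
      -((49 : ℕ) : ℤ) + -(7 * (2 * (2 * i + 1))) * ((2 : ℕ) : ℤ) by push_cast; ring,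
    zpow_add₀ hq, zpow_add₀ hq]
  field_simp

theorem thetaDouble_zpow {i a : ℤ} (ha : a = 2 * i + 1) (r : ℤ) :
    q ^ appellExp i r * (thetaDouble q i (q ^ (7 * r)) / theta (q ^ 49) (q ^ (7 * r))) =
      q ^ (6 - tri (2 * a - 3)) * (chi q (2 * r + 2 * a) / chi q r) := by
  subst ha
  have hexp : 6 - tri (2 * (2 * i + 1) - 3) = appellExp i r + 7 * r * i +
      -tri (2 * r + 2 * (2 * i + 1) - 3) - -tri (r - 3) := by
    apply mul_left_cancel₀ (two_ne_zero (α := ℤ))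
    linear_combination two_mul_tri (2 * r + 2 * (2 * i + 1) - 3) - two_mul_tri (r - 3)
      - two_mul_tri (2 * (2 * i + 1) - 3) - two_mul_appellExp i r
  rw [thetaDouble, ← zpow_natCast (_ ^ _) 2, ← zpow_mul, ← zpow_mul, ← zpow_add₀ hq,
    show 7 * (2 * (2 * i + 1)) + 7 * r * ((2 : ℕ) : ℤ) = 7 * (2 * r + 2 * (2 * i + 1)) by
      push_cast; ring, theta_zpow_eq hq, theta_zpow_eq hq, hexp, zpow_sub₀ hq, zpow_add₀ hq,
    zpow_add₀ hq, mul_div_mul_comm]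
  ring

variable (hq1 : ‖q‖ < 1)
include hq1

theorem differentiableAt_thetaTriple (i b c d : ℤ) {z : ℂ} (hz : z ≠ 0) :
    DifferentiableAt ℂ (thetaTriple q i b c d) z := by
  have hθ (k : ℤ) := (hasDerivAt_theta_mul (pow_ne_zero 49 hq) (norm_pow_lt_one hq1 (by norm_num))
    hz (zpow_ne_zero k hq)).differentiableAt
  exact (differentiableAt_zpow.mpr (Or.inl hz)).mul (((hθ _).mul (hθ _)).mul (hθ _))

theorem hasDerivAt_thetaDouble (i : ℤ) {z : ℂ} (hz : z ≠ 0) :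
    HasDerivAt (thetaDouble q i) (i * z ^ (i - 1) *
      theta (q ^ 49) (q ^ (7 * (2 * (2 * i + 1))) * z ^ 2) + z ^ i *
        (deriv (theta (q ^ 49)) (q ^ (7 * (2 * (2 * i + 1))) * z ^ 2) *
          (q ^ (7 * (2 * (2 * i + 1))) * (2 * z)))) z := by
  refine (hasDerivAt_zpow i z (Or.inl hz)).mul (HasDerivAt.comp z (h₂ := theta (q ^ 49)) ?_ ?_)
  · exact (differentiableAt_theta (pow_ne_zero 49 hq) (norm_pow_lt_one hq1 (by norm_num))
      (mul_ne_zero (zpow_ne_zero _ hq) (pow_ne_zero 2 hz))).hasDerivAt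
  · simpa using (hasDerivAt_pow 2 z).const_mul (q ^ (7 * (2 * (2 * i + 1))))

end Complex

section Real

variable {q : ℝ} (hq : 0 < q) (hq1 : q < 1)
include hq hq1

theorem thetaDouble_isQuasiPeriodic (i : ℤ) :
    IsQuasiPeriodic (q ^ 49) 4 ((q : ℂ) ^ (7 * (11 + i)))⁻¹ (thetaDouble q i) := by
  have hq0 := ofReal_ne_zero_of_pos hq
  have hqn := norm_ofReal_lt_one hq hq1
  refine isQuasiPeriodic_of_forall (by positivity)
    (fun z hz => (hasDerivAt_thetaDouble hq0 hqn i hz).differentiableAt) fun z hz => ?_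
  rw [Complex.ofReal_pow, thetaDouble_mul_left hq0 i hz, zpow_neg, zpow_neg, zpow_natCast]

variable {i a : ℤ} (ha : a = 2 * i + 1)
include ha

theorem theta_mul_thetaTriple_isQuasiPeriodic {b c d : ℤ} (h : b + c + d = 3 * a) :
    IsQuasiPeriodic (q ^ 49) 4 ((q : ℂ) ^ (7 * (11 + i)))⁻¹
      (fun z => theta ((q : ℂ) ^ 49) z * thetaTriple q i b c d z) := by
  have hq0 := ofReal_ne_zero_of_pos hq
  have hqn := norm_ofReal_lt_one hq hq1
  refine isQuasiPeriodic_of_forall (by positivity) (fun z hz => ?_) fun z hz => ?_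
  · exact (differentiableAt_theta (pow_ne_zero _ hq0) (norm_pow_lt_one hqn (by norm_num)) hz).mul
      (differentiableAt_thetaTriple hq0 hqn _ _ _ _ hz)
  · rw [Complex.ofReal_pow, theta_mul_left (pow_ne_zero _ hq0) hz,
      thetaTriple_mul_left hq0 _ _ _ _ hz, h, ha,
      show -(49 * (i + 2)) + 7 * (3 * (2 * i + 1)) = -(7 * (11 + i)) by ring,
      zpow_neg, zpow_neg, zpow_natCast]
    field_simp

variable (hχ : ∀ k : ℤ, ¬ 7 ∣ k → chi q k ≠ 0) (t : ℂ)
include hχ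

theorem rankFunctional_theta_mul_thetaTriple {b c d : ℤ} (h : b + c + d = 3 * a) :
    rankFunctional q t i (fun z => theta (q ^ 49) z * thetaTriple q i b c d z) =
      7 * deriv (theta (q ^ 49)) 1 * (tripleScale q b c d *
        ∑ r ∈ Finset.range 7, t ^ appellExp i r * chiTriple q b c d r) := by
  have hq0 := ofReal_ne_zero_of_pos hq
  have hqn := norm_ofReal_lt_one hq hq1
  have hderiv := ((differentiableAt_theta (pow_ne_zero 49 hq0) (norm_pow_lt_one hqn (by norm_num))
    one_ne_zero).hasDerivAt.fun_mul (differentiableAt_thetaTriple hq0 hqn i b c d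
      one_ne_zero).hasDerivAt).deriv
  rw [theta_one, zero_mul, add_zero] at hderiv
  rw [rankFunctional_of_eq_theta_mul hq hq1 hχ t i hderiv fun _ _ _ => rfl, theta_one, zero_mul,
    mul_zero, sub_zero, Finset.mul_sum _ _ (tripleScale _ _ _ _)]
  congr 1
  exact Finset.sum_congr rfl fun r _ => by rw [thetaTriple_zpow hq0 (ha ▸ h), mul_left_comm]

theorem rankFunctional_thetaDouble (h7 : ¬ 7 ∣ a) :
    rankFunctional q t i (thetaDouble q i) =
      q ^ (6 - tri (2 * a - 3)) * deriv (theta (q ^ 49)) 1 *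
      (chi q (2 * a) * (3 * (chi q (3 * a) / chi q a ^ 2) - 5 * (chi q a / chi q (2 * a) ^ 2)
          - chi q (2 * a) / chi q (3 * a) ^ 2) +
        7 * ∑ r ∈ Finset.range 7,
          t ^ appellExp i r * ((-1) ^ (r : ℤ) * (chi q (2 * r + 2 * a) / chi q r))) := by
  have hq0 := ofReal_ne_zero_of_pos hq
  have hlog := chiLogDeriv_two_mul hq hq1 hχ h7 ⟨i, ha⟩
  have hθlog := mul_deriv_theta (theta_zpow_ne_zero (hχ (2 * a) (by lia)))
  have hθ := theta_zpow_eq hq0 (2 * a)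
  have hderiv := (hasDerivAt_thetaDouble hq0 (norm_ofReal_lt_one hq hq1) i one_ne_zero).deriv
  have hvalue : thetaDouble q i 1 = theta (q ^ 49) (q ^ (7 * (2 * a))) := by
    simp [thetaDouble, ha]
  have hterm (r : ℕ) : t ^ appellExp i r * ((-1) ^ (r : ℤ) * q ^ appellExp i r *
      (thetaDouble q i (q ^ (7 * (r : ℤ))) / theta (q ^ 49) (q ^ (7 * (r : ℤ))))) =
      q ^ (6 - tri (2 * a - 3)) *
        (t ^ appellExp i r * ((-1) ^ (r : ℤ) * (chi q (2 * r + 2 * a) / chi q r))) := by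
    linear_combination t ^ appellExp i r * (-1) ^ (r : ℤ) * thetaDouble_zpow hq0 ha r
  simp only [one_zpow, one_pow, mul_one, one_mul, ← ha] at hderiv
  rw [chiLogDeriv] at hlog
  rw [rankFunctional, hderiv, Finset.sum_congr rfl fun r _ => hterm r, ← Finset.mul_sum, hvalue,
    sub_eq_add_neg 6, zpow_add₀ hq0, zpow_ofNat]
  have ha' : (a : ℂ) = 2 * i + 1 := mod_cast ha
  push_cast [ha'] at hlog
  linear_combination 14 * hθlog + theta (q ^ 49) (q ^ (7 * (2 * a))) * hlog +
    (q ^ 6 * deriv (theta (q ^ 49)) 1 * (3 * (chi q (3 * a) / chi q a ^ 2)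
      - 5 * (chi q a / chi q (2 * a) ^ 2) - chi q (2 * a) / chi q (3 * a) ^ 2)) * hθ

end Real

end RankFunctional

/-! ### Dissection of the Appell sum -/

section Dissection

/-- The polynomial whose values at `chi q a`, `chi q (2 * a)`, `chi q (3 * a)` and powers of a
seventh root of unity `τ` give the seven-dissection of the Euler function, up to a factor. -/
noncomputable def eulerPoly (X Y Z τ : ℂ) : ℂ :=
  -1 + τ * (Y / X) - τ ^ 4 * (Z / Y) + τ ^ 2 * (X / Z)

/-- The contribution of `thetaDouble` to the dissection of the rank generating function. -/
noncomputable def rankPoly (X Y Z τ : ℂ) : ℂ :=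
  3 * (Y * Z / X ^ 2) + 2 * (X / Y) - Y ^ 2 / Z ^ 2 + 7 * τ ^ 3 * (X / Z) - 7 * τ ^ 6 * (Z / X)

theorem sum_range_seven_eq {M : Type*} [AddCommMonoid M] {g : ℤ → M} (hg : ∀ k, g (k + 7) = g k)
    {a : ℤ} (ha : ¬ 7 ∣ a) : ∑ r ∈ Finset.range 7, g r = g (0 * a) + g (1 * a) + g (2 * a) +
      g (3 * a) + g (-1 * a) + g (-2 * a) + g (-3 * a) := by
  have hmod (k : ℤ) : g (k * a) = g (k % 7 * (a % 7) % 7) := by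
    have hper : Function.Periodic g 7 := hg
    rw [← Int.mul_emod, Int.emod_def, ← hper.sub_int_mul_eq (k * a / 7)]
    congr 1
    simp only [Int.cast_id]
    ring
  simp only [hmod, Finset.sum_range_succ, Finset.sum_range_zero]
  have hpos : 0 < a % 7 := by lia
  have hlt : a % 7 < 7 := by lia
  interval_cases a % 7 <;> norm_num <;> abel

section RootOfUnity

variable {t : ℂ} (ht : t ^ 7 = 1) (i : ℤ)
include ht

theorem zpow_appellExp_add_seven (n : ℤ) : t ^ appellExp i (n + 7) = t ^ appellExp i n := by
  refine zpow_eq_zpow_of_modEq (by norm_num) ht (Int.modEq_iff_dvd.mpr ⟨-(3 * n + i + 11), ?_⟩)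
  push_cast
  linarith [two_mul_appellExp i n, two_mul_appellExp i (n + 7)]

variable {i} {a : ℤ} (ha : a = 2 * i + 1)
include ha

theorem zpow_appellExp_mul {k : ℤ} {x : ℕ} (h : 7 ∣ 10 * (x : ℤ) - (3 * k ^ 2 + k)) :
    t ^ appellExp i (k * a) = (t ^ (5 * a ^ 2)) ^ x := by
  rw [← zpow_natCast, ← zpow_mul]
  refine zpow_eq_zpow_of_modEq (by norm_num) ht (Int.modEq_iff_dvd.mpr ?_)
  obtain ⟨c, hc⟩ := h
  have htwo : 2 * (5 * a ^ 2 * (x : ℤ) - appellExp i (k * a)) = 7 * (c * a ^ 2) := by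
    linear_combination a ^ 2 * hc - two_mul_appellExp i (k * a) + k * a * ha
  lia

variable (h7 : ¬ 7 ∣ a) {τ : ℂ} (hτ : τ = t ^ (5 * a ^ 2))
include h7 hτ

theorem sum_zpow_appellExp_mul {g : ℤ → ℂ} (hg : ∀ k, g (k + 7) = g k) :
    ∑ r ∈ Finset.range 7, t ^ appellExp i r * g r = g (0 * a) + g (2 * a) +
      τ * (g (-2 * a) + g (-3 * a)) + τ ^ 3 * (g (3 * a) + g (-1 * a)) + τ ^ 6 * g (1 * a) := by
  rw [sum_range_seven_eq (g := fun r => t ^ appellExp i r * g r)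
      (fun k => by rw [hg, zpow_appellExp_add_seven ht]) h7,
    zpow_appellExp_mul ht ha (k := 0) (x := 0) (by norm_num),
    zpow_appellExp_mul ht ha (k := 1) (x := 6) (by norm_num),
    zpow_appellExp_mul ht ha (k := 2) (x := 0) (by norm_num),
    zpow_appellExp_mul ht ha (k := 3) (x := 3) (by norm_num),
    zpow_appellExp_mul ht ha (k := -1) (x := 3) (by norm_num),
    zpow_appellExp_mul ht ha (k := -2) (x := 1) (by norm_num),
    zpow_appellExp_mul ht ha (k := -3) (x := 1) (by norm_num), ← hτ]
  ring

end RootOfUnity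

theorem neg_one_zpow_mul_odd (k : ℤ) {a : ℤ} (ha : Odd a) : (-1 : ℂ) ^ (k * a) = (-1) ^ k := by
  rw [mul_comm, zpow_mul, ha.neg_one_zpow]

theorem chiTriple_mul (q : ℂ) (b c d k : ℤ) {a : ℤ} (ha : Odd a) :
    chiTriple q (b * a) (c * a) (d * a) (k * a) =
      (-1) ^ k * (chi q ((k - b) * a) * chi q ((k - c) * a) * chi q ((k - d) * a)) := by
  rw [chiTriple, neg_one_zpow_mul_odd k ha, sub_mul, sub_mul, sub_mul]

section Sums

variable {q : ℂ} (hq : q ≠ 0)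
include hq

theorem chi_neg_mul (k a : ℤ) : chi q (-k * a) = -chi q (k * a) := by
  rw [neg_mul, chi_neg hq]

theorem chi_seven_mul (a : ℤ) : chi q (7 * a) = 0 := by
  rw [← zero_add (7 * a), chi_add_seven_mul hq, chi_zero hq, mul_zero]

theorem chiTriple_add_seven (b c d k : ℤ) : chiTriple q b c d (k + 7) = chiTriple q b c d k := by
  rw [chiTriple, chiTriple, add_sub_right_comm, add_sub_right_comm, add_sub_right_comm,
    chi_add_seven hq, chi_add_seven hq, chi_add_seven hq, zpow_add₀ (by norm_num),
    show ((-1 : ℂ)) ^ (7 : ℤ) = -1 by norm_num]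
  ring

theorem chi_quotient_add_seven (b k : ℤ) :
    (-1) ^ (k + 7) * (chi q (2 * (k + 7) + b) / chi q (k + 7)) =
      (-1) ^ k * (chi q (2 * k + b) / chi q k) := by
  rw [show 2 * (k + 7) + b = 2 * k + b + 7 + 7 by ring, chi_add_seven hq, chi_add_seven hq,
    chi_add_seven hq, zpow_add₀ (by norm_num), show ((-1 : ℂ)) ^ (7 : ℤ) = -1 by norm_num, div_neg]
  ring

variable {t : ℂ} (ht : t ^ 7 = 1) {i a : ℤ} (ha : a = 2 * i + 1) (h7 : ¬ 7 ∣ a)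
include ht ha h7

theorem sum_chiTriple_zero_one_two :
    ∑ r ∈ Finset.range 7, t ^ appellExp i r * chiTriple q (0 * a) (1 * a) (2 * a) r = 0 := by
  have hodd : Odd a := ⟨i, ha⟩
  rw [sum_zpow_appellExp_mul ht ha h7 rfl fun k => chiTriple_add_seven hq _ _ _ k]
  simp only [chiTriple_mul _ _ _ _ _ hodd]
  norm_num [chi_neg_mul hq, chi_neg hq, chi_zero hq, chi_mul_four hq hodd, chi_mul_five hq hodd,
    chi_mul_six hq hodd, chi_seven_mul hq]
  ring

theorem sum_chiTriple_one_three_neg_one :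
    ∑ r ∈ Finset.range 7, t ^ appellExp i r * chiTriple q (1 * a) (3 * a) (-1 * a) r = 0 := by
  have hodd : Odd a := ⟨i, ha⟩
  rw [sum_zpow_appellExp_mul ht ha h7 rfl fun k => chiTriple_add_seven hq _ _ _ k]
  simp only [chiTriple_mul _ _ _ _ _ hodd]
  norm_num [chi_neg_mul hq, chi_neg hq, chi_zero hq, chi_mul_four hq hodd, chi_mul_five hq hodd,
    chi_mul_six hq hodd, chi_seven_mul hq]
  ring

variable (hχ : ∀ k : ℤ, ¬ 7 ∣ k → chi q k ≠ 0) {τ : ℂ} (hτ : τ = t ^ (5 * a ^ 2))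
include hχ hτ

theorem sum_chiTriple_zero_neg_one_four :
    ∑ r ∈ Finset.range 7, t ^ appellExp i r * chiTriple q (0 * a) (-1 * a) (4 * a) r =
      -(chi q a * chi q (2 * a) * chi q (3 * a)) *
        (τ ^ 6 * eulerPoly (chi q a) (chi q (2 * a)) (chi q (3 * a)) τ) := by
  have hodd : Odd a := ⟨i, ha⟩
  have hX := hχ a h7
  have hY := hχ (2 * a) (by lia)
  have hZ := hχ (3 * a) (by omega)
  have hτ7 : τ ^ 7 = 1 := by
    rw [hτ, ← zpow_natCast, zpow_comm, zpow_natCast, ht, one_zpow]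
  rw [sum_zpow_appellExp_mul ht ha h7 hτ fun k => chiTriple_add_seven hq _ _ _ k]
  simp only [chiTriple_mul _ _ _ _ _ hodd]
  norm_num [chi_neg_mul hq, chi_neg hq, chi_zero hq, chi_mul_four hq hodd, chi_mul_five hq hodd,
    chi_mul_six hq hodd, chi_seven_mul hq, eulerPoly]
  field_simp
  linear_combination (τ * chi q a ^ 2 * chi q (2 * a) + chi q (2 * a) ^ 2 * chi q (3 * a)
    - τ ^ 3 * chi q a * chi q (3 * a) ^ 2) * hτ7

theorem sum_chi_quotient :
    ∑ r ∈ Finset.range 7, t ^ appellExp i r * ((-1) ^ (r : ℤ) *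
      (chi q (2 * r + 2 * a) / chi q r)) = chi q a / chi q (2 * a) +
        τ ^ 3 * (chi q a / chi q (3 * a)) - τ ^ 6 * (chi q (3 * a) / chi q a) := by
  have hodd : Odd a := ⟨i, ha⟩
  have hY := hχ (2 * a) (by lia)
  have hZ := hχ (3 * a) (by omega)
  have height : chi q (8 * a) = -chi q a := by
    rw [show 8 * a = a + 7 * a by ring, chi_add_seven_mul_odd hq hodd]
  rw [sum_zpow_appellExp_mul (g := fun k => (-1) ^ k * (chi q (2 * k + 2 * a) / chi q k))
    ht ha h7 hτ fun k => chi_quotient_add_seven hq _ k]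
  simp only [neg_one_zpow_mul_odd _ hodd, ← mul_assoc 2 _ a, ← add_mul]
  norm_num [chi_neg_mul hq, chi_neg hq, chi_zero hq, chi_mul_four hq hodd, chi_mul_five hq hodd,
    chi_mul_six hq hodd, ← add_one_mul, height, hY, hZ]
  ring

end Sums

section Real

variable {q : ℝ} (hq : 0 < q) (hq1 : q < 1) (hχ : ∀ k : ℤ, ¬ 7 ∣ k → chi q k ≠ 0)
  {i a : ℤ} (ha : a = 2 * i + 1)
include hq hq1 hχ ha

theorem sum_tripleScale_mul_chiTriple_eq_zero {ι : Type*} [Fintype ι] {C : ι → ℂ} {b c d : ι → ℤ}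
    (hbcd : ∀ j, b j + c j + d j = 3 * a) (h : ∀ z ∈ annulus (q ^ 49),
      ∑ j, C j * (theta (q ^ 49) z * thetaTriple q i (b j) (c j) (d j) z) = 0)
    {k : ℤ} (hk : ¬ 7 ∣ k) :
    ∑ j, C j * (tripleScale q (b j) (c j) (d j) * chiTriple q (b j) (c j) (d j) k) = 0 := by
  have hq0 := ofReal_ne_zero_of_pos hq
  have hper : Function.Periodic (fun k => ∑ j, C j * (tripleScale q (b j) (c j) (d j) *
      chiTriple q (b j) (c j) (d j) k)) 7 := fun k => by simp only [chiTriple_add_seven hq0]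
  rw [← hper.sub_int_mul_eq (k / 7), Int.cast_id, show k - k / 7 * 7 = k % 7 by lia]
  have hr : ¬ 7 ∣ k % 7 := by lia
  refine mul_left_cancel₀ (theta_zpow_ne_zero (hχ _ hr)) ?_
  have hz := h _ (zpow_mem_annulus hq hq1 (k := k % 7) (by lia) (by lia))
  rw [mul_zero, ← mul_zero ((-1) ^ (k % 7) * (q : ℂ) ^ appellExp i (k % 7)), ← hz, Finset.mul_sum,
    Finset.mul_sum]
  exact Finset.sum_congr rfl fun j _ => by
    rw [← thetaTriple_zpow hq0 (ha ▸ hbcd j)]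
    ring

variable (h7 : ¬ 7 ∣ a)
include h7

theorem eq_zero_of_thetaTriple_relation {c₁ c₂ c₃ : ℂ}
    (h : ∀ z ∈ annulus (q ^ 49),
      c₁ * (theta (q ^ 49) z * thetaTriple q i (0 * a) (-1 * a) (4 * a) z) +
      c₂ * (theta (q ^ 49) z * thetaTriple q i (0 * a) (1 * a) (2 * a) z) +
      c₃ * (theta (q ^ 49) z * thetaTriple q i (1 * a) (3 * a) (-1 * a) z) = 0) :
    c₁ = 0 ∧ c₂ = 0 ∧ c₃ = 0 := by
  have hq0 := ofReal_ne_zero_of_pos hq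
  have hodd : Odd a := ⟨i, ha⟩
  have hX := hχ a h7
  have hY := hχ (2 * a) (by lia)
  have hZ := hχ (3 * a) (by omega)
  have hscale (b c d : ℤ) : tripleScale q b c d ≠ 0 := zpow_ne_zero _ hq0
  have hrel {k : ℤ} (hk : ¬ 7 ∣ k * a) := sum_tripleScale_mul_chiTriple_eq_zero hq hq1 hχ ha
    (C := ![c₁, c₂, c₃]) (b := ![0 * a, 0 * a, 1 * a]) (c := ![-1 * a, 1 * a, 3 * a])
    (d := ![4 * a, 2 * a, -1 * a]) (fun j => by fin_cases j <;> simp <;> ring)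
    (fun z hz => by simpa [Fin.sum_univ_three] using h z hz) hk
  simp only [Fin.sum_univ_three, Matrix.cons_val, chiTriple_mul _ _ _ _ _ hodd] at hrel
  have h₁ : c₁ = 0 := by
    have := hrel (k := 1) (by simpa)
    norm_num [chi_neg_mul hq0, chi_neg hq0, chi_zero hq0, hX, hY, hZ, hscale] at this
    exact this
  have h₃ : c₃ = 0 := by
    have := hrel (k := 2) (by lia)
    norm_num [chi_neg_mul hq0, chi_neg hq0, chi_zero hq0, hX, hY, hZ, hscale, h₁] at this
    exact this
  have h₂ : c₂ = 0 := by
    have := hrel (k := 3) (by omega)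
    norm_num [chi_neg_mul hq0, chi_neg hq0, chi_zero hq0, hX, hY, hZ, hscale, h₁, h₃] at this
    exact this
  exact ⟨h₁, h₂, h₃⟩

end Real

/-- Five functions on the annulus sharing a quasi-periodicity factor of degree four, hence linearly
dependent: the Appell sum cleared of denominators, and theta products expressing it. -/
noncomputable def dissectionFamily (q : ℂ) (i a : ℤ) : Fin 5 → ℂ → ℂ :=
  ![appellProd (q ^ 49) (q ^ (7 * (11 + i))),
    fun z => theta (q ^ 49) z * thetaTriple q i (0 * a) (-1 * a) (4 * a) z,
    fun z => theta (q ^ 49) z * thetaTriple q i (0 * a) (1 * a) (2 * a) z,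
    fun z => theta (q ^ 49) z * thetaTriple q i (1 * a) (3 * a) (-1 * a) z,
    thetaDouble q i]

section Relation

variable {q : ℝ} (hq : 0 < q) (hq1 : q < 1) {i a : ℤ} (ha : a = 2 * i + 1)
include hq hq1 ha

theorem dissectionFamily_isQuasiPeriodic (j : Fin 5) :
    IsQuasiPeriodic (q ^ 49) 4 ((q : ℂ) ^ (7 * (11 + i)))⁻¹ (dissectionFamily q i a j) := by
  have hp1 := pow_lt_one₀ hq.le hq1 (show 49 ≠ 0 by norm_num)
  fin_cases j
  · simpa [dissectionFamily] using appellProd_isQuasiPeriodic (p := q ^ 49) (by positivity) hp1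
      (zpow_ne_zero (7 * (11 + i)) (ofReal_ne_zero_of_pos hq))
  · exact theta_mul_thetaTriple_isQuasiPeriodic hq hq1 ha (by ring)
  · exact theta_mul_thetaTriple_isQuasiPeriodic hq hq1 ha (by ring)
  · exact theta_mul_thetaTriple_isQuasiPeriodic hq hq1 ha (by ring)
  · exact thetaDouble_isQuasiPeriodic hq hq1 i

variable (hχ : ∀ k : ℤ, ¬ 7 ∣ k → chi q k ≠ 0) (h7 : ¬ 7 ∣ a)
include hχ h7

theorem exists_dissectionFamily_relation :
    ∃ c : Fin 5 → ℂ, c 0 ≠ 0 ∧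
      ∀ z ∈ annulus (q ^ 49), ∑ j, c j * dissectionFamily q i a j z = 0 := by
  have hp : 0 < q ^ 49 := by positivity
  have hp1 := pow_lt_one₀ hq.le hq1 (show 49 ≠ 0 by norm_num)
  obtain ⟨c, hc, h⟩ := exists_linear_relation hp hp1 (by norm_num)
    (inv_ne_zero (zpow_ne_zero _ (ofReal_ne_zero_of_pos hq)))
    (dissectionFamily_isQuasiPeriodic hq hq1 ha)
  refine ⟨c, fun h0 => hc ?_, h⟩
  have h4 : c 4 = 0 := by
    have hθ := theta_zpow_ne_zero (hχ (2 * a) (by lia))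
    simpa [Fin.sum_univ_five, dissectionFamily, h0, theta_one, thetaDouble, hθ, ← ha] using
      h 1 (one_mem_annulus hp hp1)
  obtain ⟨h1, h2, h3⟩ := eq_zero_of_thetaTriple_relation hq hq1 hχ ha h7 (c₁ := c 1) (c₂ := c 2)
    (c₃ := c 3) fun z hz => by simpa [Fin.sum_univ_five, h0, h4, dissectionFamily] using h z hz
  funext j
  fin_cases j <;> assumption

theorem exists_rank_dissection (hθ : deriv (theta ((q : ℂ) ^ 49)) 1 ≠ 0) :
    ∃ α γ : ℂ, ∀ t τ : ℂ, t ^ 7 = 1 → τ = t ^ (5 * a ^ 2) →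
      3 - i + 7 * ∑ r ∈ Finset.range 7, t ^ appellExp i r * ((-1) ^ (r : ℤ) * q ^ appellExp i r *
        appell (q ^ 49) (q ^ (7 * (11 + i))) (q ^ (7 * (r : ℤ)))) =
      α * (τ ^ 6 * eulerPoly (chi q a) (chi q (2 * a)) (chi q (3 * a)) τ) +
        γ * rankPoly (chi q a) (chi q (2 * a)) (chi q (3 * a)) τ := by
  have hq0 := ofReal_ne_zero_of_pos hq
  have hone := one_mem_annulus (p := q ^ 49) (by positivity) (pow_lt_one₀ hq.le hq1 (by norm_num))
  obtain ⟨c, hc0, h⟩ := exists_dissectionFamily_relation hq hq1 ha hχ h7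
  refine ⟨c 1 / c 0 * (7 * tripleScale q (0 * a) (-1 * a) (4 * a) *
    (chi q a * chi q (2 * a) * chi q (3 * a))), -(c 4 / c 0 * q ^ (6 - tri (2 * a - 3))),
    fun t τ ht hτ => ?_⟩
  have hsum := sum_mul_rankFunctional hq hq1 t i (fun j => (dissectionFamily_isQuasiPeriodic hq hq1
    ha j).differentiableOn.differentiableAt ((isOpen_annulus _).mem_nhds hone)) h
  simp only [Fin.sum_univ_five, dissectionFamily, Matrix.cons_val] at hsum
  rw [rankFunctional_appellProd hq hq1 hχ t i (zpow_ne_zero _ hq0),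
    rankFunctional_theta_mul_thetaTriple hq hq1 ha hχ t (by ring),
    rankFunctional_theta_mul_thetaTriple hq hq1 ha hχ t (by ring),
    rankFunctional_theta_mul_thetaTriple hq hq1 ha hχ t (by ring),
    rankFunctional_thetaDouble hq hq1 ha hχ t h7,
    sum_chiTriple_zero_neg_one_four hq0 ht ha h7 hχ hτ, sum_chiTriple_zero_one_two hq0 ht ha h7,
    sum_chiTriple_one_three_neg_one hq0 ht ha h7, sum_chi_quotient hq0 ht ha h7 hχ hτ] at hsum
  have hY := hχ (2 * a) (by lia)
  have hcancel : chi q (2 * a) * (5 * (chi q a / chi q (2 * a) ^ 2)) =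
      5 * (chi q a / chi q (2 * a)) := by field_simp
  have hc1 : c 1 = c 0 * (c 1 / c 0) := (mul_div_cancel₀ _ hc0).symm
  have hc4 : c 4 = c 0 * (c 4 / c 0) := (mul_div_cancel₀ _ hc0).symm
  apply mul_left_cancel₀ (mul_ne_zero hc0 hθ)
  rw [hc1, hc4] at hsum
  rw [rankPoly]
  linear_combination hsum + (c 0 * (c 4 / c 0) * q ^ (6 - tri (2 * a - 3)) *
    deriv (theta (q ^ 49)) 1) * hcancel

end Relation

end Dissection

/-! ### The seven-dissections of the rank and Euler series -/

section Series

theorem hasSum_int_of_residues {M : Type*} [AddCommMonoid M] [TopologicalSpace M] [ContinuousAdd M]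
    {N : ℕ} {f : ℤ → M} {g : ℕ → M} (hN : N ≠ 0)
    (h : ∀ r < N, HasSum (fun m : ℤ => f (N * m + r)) (g r)) :
    HasSum f (∑ r ∈ Finset.range N, g r) := by
  have hN' : (0 : ℤ) < N := by lia
  have hresidue : ∀ r ∈ Finset.range N,
      HasSum (fun n : ℤ => if n % N = r then f n else 0) (g r) := by
    intro r hr
    have hrN := Finset.mem_range.mp hr
    have hinj : Function.Injective fun m : ℤ => N * m + (r : ℤ) := fun m n h => by
      simpa [hN] using h
    refine (hinj.hasSum_iff fun n hn => if_neg fun h => hn ⟨n / N, ?_⟩).mp ?_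
    · rw [← h]
      exact Int.mul_ediv_add_emod n N
    · refine (h r hrN).congr_fun fun m => if_pos ?_
      rw [Int.mul_add_emod_self_left, Int.emod_eq_of_lt (by lia) (by lia)]
  refine (hasSum_sum hresidue).congr_fun fun n => ?_
  have hnonneg := Int.emod_nonneg n hN'.ne'
  have hlt := Int.emod_lt_of_pos n hN'
  rw [Finset.sum_eq_single_of_mem (n % N).toNat (Finset.mem_range.mpr (by lia)) fun r _ hne =>
    if_neg (by lia), if_pos (by lia)]

/-- The bilateral series `∑ (-1)ⁿ x ^ (n (3 n + 2 i + 1) / 2) / (1 - x ^ (7 n))`; the term `n = 0`,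
with vanishing denominator, is counted as zero. -/
noncomputable def rankSeries (i : ℤ) (x : ℂ) : ℂ :=
  ∑' n : ℤ, (-1) ^ n * x ^ appellExp i n * (1 - x ^ (7 * n))⁻¹

/-- Euler's pentagonal number series `∑ (-1)ⁿ x ^ (n (3 n + 1) / 2)`. -/
noncomputable def eulerSeries (x : ℂ) : ℂ := ∑' n : ℤ, (-1) ^ n * x ^ appellExp 0 n

theorem appellExp_seven_mul_add (i m r : ℤ) :
    appellExp i (7 * m + r) = appellExp i r + 49 * 3 * tri m + 7 * (11 + i + 3 * r) * m := by
  linarith [two_mul_appellExp i (7 * m + r), two_mul_appellExp i r, two_mul_tri m]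

section RootOfUnity

variable {q t : ℂ} (hq : q ≠ 0) (ht : t ^ 7 = 1)
include hq ht

theorem zpow_appellExp_seven_mul_add (i m r : ℤ) :
    (-1) ^ (7 * m + r) * (t * q) ^ appellExp i (7 * m + r) =
      t ^ appellExp i r * ((-1) ^ r * q ^ appellExp i r) *
        thetaTerm ((q ^ 49) ^ 3) (q ^ (7 * (11 + i)) * (q ^ (7 * r)) ^ 3) m := by
  have hroot : t ^ appellExp i (7 * m + r) = t ^ appellExp i r := by
    refine zpow_eq_zpow_of_modEq (by norm_num) ht (Int.modEq_iff_dvd.mpr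
      ⟨-(7 * 3 * tri m + (11 + i + 3 * r) * m), ?_⟩)
    push_cast [appellExp_seven_mul_add]
    ring
  have hsign : (-1 : ℂ) ^ (7 * m + r) = (-1) ^ m * (-1) ^ r := by
    rw [zpow_add₀ (by norm_num), zpow_mul]
    norm_num
  have harg : q ^ (7 * (11 + i)) * (q ^ (7 * r)) ^ 3 = q ^ (7 * (11 + i + 3 * r)) := by
    rw [← zpow_natCast (q ^ (7 * r)), ← zpow_mul, ← zpow_add₀ hq]
    congr 1
    push_cast
    ring
  rw [hsign, mul_zpow, hroot, thetaTerm, harg, appellExp_seven_mul_add, zpow_add₀ hq, zpow_add₀ hq,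
    ← pow_mul, ← zpow_natCast q (49 * 3), ← zpow_mul, zpow_mul q (7 * _) m]
  push_cast
  ring

theorem eulerSeries_mul_root (hq1 : ‖q‖ < 1) :
    eulerSeries (t * q) = ∑ r ∈ Finset.range 7, t ^ appellExp 0 ((r : ℤ) - 2) *
      ((-1) ^ ((r : ℤ) - 2) * q ^ appellExp 0 ((r : ℤ) - 2)) *
        cubicTheta (q ^ 49) (q ^ (7 * ((r : ℤ) - 3))) := by
  rw [eulerSeries, ← (Equiv.subRight (2 : ℤ)).tsum_eq]
  refine (hasSum_int_of_residues (by norm_num) fun r _ => ?_).tsum_eq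
  have hsum := summable_thetaTerm (p := (q ^ 49) ^ 3)
    (z := (q ^ 49) ^ 2 * (q ^ (7 * ((r : ℤ) - 3))) ^ 3) (by positivity)
    (by rw [← pow_mul]; exact norm_pow_lt_one hq1 (by norm_num)) (by positivity)
  refine (hsum.hasSum.mul_left _).congr_fun fun m => ?_
  rw [Equiv.subRight_apply, add_sub_assoc, Nat.cast_ofNat, zpow_appellExp_seven_mul_add hq ht]
  congr 2
  rw [← pow_mul, ← zpow_natCast q, ← zpow_natCast (q ^ _) 3, ← zpow_natCast (q ^ _) 3, ← zpow_mul,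
    ← zpow_mul, ← zpow_add₀ hq, ← zpow_add₀ hq]
  congr 1
  push_cast
  ring

end RootOfUnity

section Real

variable {q : ℝ} (hq : 0 < q) (hq1 : q < 1)
include hq hq1

theorem rankSeries_mul_root {t : ℂ} (ht : t ^ 7 = 1) (i : ℤ) :
    rankSeries i (t * q) = ∑ r ∈ Finset.range 7, t ^ appellExp i r * ((-1) ^ (r : ℤ) *
      q ^ appellExp i r * appell (q ^ 49) (q ^ (7 * (11 + i))) (q ^ (7 * (r : ℤ)))) := by
  have hq0 := ofReal_ne_zero_of_pos hq
  have hp : 0 < q ^ 49 := by positivity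
  have hp1 : q ^ 49 < 1 := pow_lt_one₀ hq.le hq1 (by norm_num)
  have hw : (q : ℂ) ^ (7 * (11 + i)) ≠ 0 := zpow_ne_zero _ hq0
  refine (hasSum_int_of_residues (by norm_num) fun r hr => ?_).tsum_eq
  have hz := zpow_mem_annulus hq hq1 (k := r) (by lia) (by lia)
  have hsum := (hasSum_appell hp hp1 hw hz).mul_left
    (t ^ appellExp i r * ((-1) ^ (r : ℤ) * (q : ℂ) ^ appellExp i r))
  rw [← appell_eq_add hp hp1 hw hz, Complex.ofReal_pow] at hsum
  rw [← mul_assoc]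
  refine hsum.congr_fun fun m => ?_
  rw [Nat.cast_ofNat, zpow_appellExp_seven_mul_add hq0 ht, mul_zpow, zpow_mul t 7,
    show t ^ (7 : ℤ) = 1 by exact_mod_cast ht, one_zpow, one_mul, ← zpow_natCast (q : ℂ) 49,
    ← zpow_mul _ _ m, ← zpow_add₀ hq0, mul_assoc, show 7 * (7 * m + (r : ℤ)) =
      7 * r + ((49 : ℕ) : ℤ) * m by push_cast; ring]

variable (hχ : ∀ k : ℤ, ¬ 7 ∣ k → chi q k ≠ 0) {ω : ℂ} (hω : ω ^ 2 + ω + 1 = 0)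
  (hθ : theta ((q : ℂ) ^ 49) ω ≠ 0)
include hχ hω hθ

theorem cubicTheta_add_cubicTheta {s : ℤ} (hs : 0 < s) (hs' : s < 4) :
    (q : ℂ) ^ appellExp 0 (1 - s) * cubicTheta (q ^ 49) (q ^ (7 * -s)) +
      q ^ appellExp 0 (1 + s) * cubicTheta (q ^ 49) (q ^ (7 * s)) =
      q ^ 2 * cubicTheta (q ^ 49) 1 * (chi q (2 * s) / chi q s) := by
  have hq0 := ofReal_ne_zero_of_pos hq
  have hs0 := hχ s (by lia)
  have hquintuple := quintupleTheta_eq (p := q ^ 49) (by positivity)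
    (pow_lt_one₀ hq.le hq1 (by norm_num)) hω (by rwa [Complex.ofReal_pow])
    (zpow_mem_annulus hq hq1 (k := -s) (by lia) (by lia))
  rw [quintupleTheta, Complex.ofReal_pow, oddTheta, ← zpow_natCast (_ ^ _) 2, ← zpow_mul,
    show 7 * -s * ((2 : ℕ) : ℤ) = 7 * -(2 * s) by push_cast; ring, theta_zpow_eq hq0,
    theta_zpow_eq hq0, chi_neg hq0, chi_neg hq0, ← zpow_neg, show -(7 * -s) = 7 * s by ring]
    at hquintuple
  have hadd : appellExp 0 (1 + s) = appellExp 0 (1 - s) + 7 * s := by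
    linarith [two_mul_appellExp 0 (1 + s), two_mul_appellExp 0 (1 - s)]
  have hexp : appellExp 0 (1 - s) + 7 * s + -tri (-(2 * s) - 3) = 2 + -tri (-s - 3) := by
    linarith [two_mul_tri (-(2 * s) - 3), two_mul_appellExp 0 (1 - s), two_mul_tri (-s - 3)]
  have hpow : (q : ℂ) ^ appellExp 0 (1 - s) * q ^ (7 * s) * q ^ (-tri (-(2 * s) - 3)) =
      q ^ 2 * q ^ (-tri (-s - 3)) := by
    rw [← zpow_add₀ hq0, ← zpow_add₀ hq0, hexp, zpow_add₀ hq0, zpow_ofNat]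
  have hcancel : chi q (2 * s) / chi q s * chi q s = chi q (2 * s) := div_mul_cancel₀ _ hs0
  rw [hadd, zpow_add₀ hq0]
  apply mul_right_cancel₀ (mul_ne_zero (zpow_ne_zero (-tri (-s - 3)) hq0) (neg_ne_zero.mpr hs0))
  linear_combination (q : ℂ) ^ appellExp 0 (1 - s) * hquintuple - chi q (2 * s) *
    cubicTheta (q ^ 49) 1 * hpow + q ^ 2 * cubicTheta (q ^ 49) 1 * q ^ (-tri (-s - 3)) * hcancel

theorem eulerSeries_mul_root_eq {t : ℂ} (ht : t ^ 7 = 1) :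
    eulerSeries (t * q) = q ^ 2 * cubicTheta (q ^ 49) 1 *
      (t ^ 2 * eulerPoly (chi q 1) (chi q 2) (chi q 3) (t ^ 5)) := by
  have hq0 := ofReal_ne_zero_of_pos hq
  have hpair₁ := cubicTheta_add_cubicTheta hq hq1 hχ hω hθ (s := 1) (by norm_num) (by norm_num)
  have hpair₂ := cubicTheta_add_cubicTheta hq hq1 hχ hω hθ (s := 2) (by norm_num) (by norm_num)
  have hpair₃ := cubicTheta_add_cubicTheta hq hq1 hχ hω hθ (s := 3) (by norm_num) (by norm_num)
  have h4 : chi q 4 = chi q 3 := chi_mul_four hq0 odd_one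
  have h6 : chi q 6 = chi q 1 := chi_mul_six hq0 odd_one
  have hexp : appellExp 0 (-2) = 5 ∧ appellExp 0 (-1) = 1 ∧ appellExp 0 0 = 0 ∧
    appellExp 0 1 = 2 ∧ appellExp 0 2 = 7 ∧ appellExp 0 3 = 15 ∧ appellExp 0 4 = 26 := by decide
  have ht12 : t ^ 12 = t ^ 5 := by linear_combination t ^ 5 * ht
  have ht15 : t ^ 15 = t := by linear_combination (t ^ 8 + t) * ht
  have ht22 : t ^ 22 = t := by linear_combination (t ^ 15 + t ^ 8 + t) * ht
  have ht26 : t ^ 26 = t ^ 5 := by linear_combination (t ^ 19 + t ^ 12 + t ^ 5) * ht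
  rw [eulerSeries_mul_root hq0 ht (norm_ofReal_lt_one hq hq1)]
  simp only [Finset.sum_range_succ, Finset.sum_range_zero]
  norm_num [hexp, h4, h6, zpow_neg, zpow_ofNat] at hpair₁ hpair₂ hpair₃ ⊢
  rw [eulerPoly, ht15, ht26, ht]
  linear_combination hpair₁ - t * hpair₂ + t ^ 5 * hpair₃ - q ^ 2 * cubicTheta (q ^ 49) 1 *
    (chi q 2 / chi q 1 * ht - chi q 3 / chi q 2 * ht22 + chi q 1 / chi q 3 * ht12)

end Real

theorem eulerPoly_rotate (X Y Z : ℂ) {τ : ℂ} (hτ : τ ^ 7 = 1) :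
    eulerPoly Z X (-Y) (τ ^ 2) = eulerPoly X Y Z τ := by
  rw [eulerPoly, eulerPoly, div_neg, neg_div]
  linear_combination (τ * (Y / X)) * hτ

theorem eulerPoly_chi_mul {q t : ℂ} (hq : q ≠ 0) (ht : t ^ 7 = 1) {a : ℤ}
    (ha : a = 1 ∨ a = 3 ∨ a = 5) :
    eulerPoly (chi q a) (chi q (2 * a)) (chi q (3 * a)) (t ^ (5 * a ^ 2)) =
      eulerPoly (chi q 1) (chi q 2) (chi q 3) (t ^ 5) := by
  have hadd (k : ℤ) : chi q (k + 7) = -chi q k := chi_add_seven hq k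
  have h5 : chi q 5 = chi q 2 := chi_mul_five hq odd_one
  have h6 : chi q 6 = chi q 1 := chi_mul_six hq odd_one
  have ht5 : (t ^ 5) ^ 7 = 1 := by rw [pow_right_comm, ht, one_pow]
  have ht10 : ((t ^ 5) ^ 2) ^ 7 = 1 := by rw [pow_right_comm, ht5, one_pow]
  rcases ha with rfl | rfl | rfl
  · norm_num [zpow_ofNat]
  · have hpow : t ^ (5 * 3 ^ 2 : ℤ) = (t ^ 5) ^ 2 := by
      rw [← pow_mul, ← zpow_natCast]
      exact zpow_eq_zpow_of_modEq (by norm_num) ht (by decide)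
    rw [← eulerPoly_rotate _ _ _ ht5, hpow, show (3 : ℤ) * 3 = 2 + 7 by norm_num, hadd,
      show (2 : ℤ) * 3 = 6 by norm_num, h6]
  · have hpow : t ^ (5 * 5 ^ 2 : ℤ) = ((t ^ 5) ^ 2) ^ 2 := by
      rw [← pow_mul, ← pow_mul, ← zpow_natCast]
      exact zpow_eq_zpow_of_modEq (by norm_num) ht (by decide)
    rw [← eulerPoly_rotate _ _ _ ht5, ← eulerPoly_rotate _ _ _ ht10, hpow,
      show (3 : ℤ) * 5 = 1 + 7 + 7 by norm_num, show (2 : ℤ) * 5 = 3 + 7 by norm_num, hadd, hadd,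
      hadd, h5, neg_neg]
    simp only [eulerPoly, div_neg, neg_div, neg_neg]

end Series

/-! ### Summation over the seventh roots of unity -/

section RootsOfUnity

theorem sum_pow_pow_of_isPrimitiveRoot {K : Type*} [Field K] {ξ : K} {n : ℕ}
    (hξ : IsPrimitiveRoot ξ n) (k : ℕ) :
    ∑ j ∈ Finset.range n, (ξ ^ j) ^ k = if n ∣ k then (n : K) else 0 := by
  simp only [fun j => pow_right_comm ξ j k]
  split_ifs with h
  · simp [(hξ.pow_eq_one_iff_dvd k).mpr h]
  · rw [geom_sum_eq fun hone => h ((hξ.pow_eq_one_iff_dvd k).mp hone), pow_right_comm,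
      hξ.pow_eq_one, one_pow, sub_self, zero_div]

/-- The circulant determinant of `-1 + a τ + c τ ^ 2 - b τ ^ 4` modulo `τ ^ 7 - 1`, that is, the
product of its values at the seventh roots of unity, simplified by means of `a * b * c = 1`. -/
def eulerDet (a b c : ℂ) : ℂ :=
  a ^ 7 + 7 * a ^ 5 * c + 14 * a ^ 3 * c ^ 2 - 14 * a ^ 2 * b ^ 3 - 7 * a * b ^ 5 - b ^ 7 +
    14 * b ^ 2 * c ^ 3 - 7 * b * c ^ 5 + c ^ 7 - 8

/-- The coefficients of the polynomial in `τ` whose product with `-1 + a τ + c τ ^ 2 - b τ ^ 4` is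
`eulerDet a b c` modulo `τ ^ 7 - 1`, simplified by means of `a * b * c = 1`. -/
def eulerAdj (a b c : ℂ) : Fin 7 → ℂ :=
  ![-a ^ 5 * c + 3 * a ^ 3 * b - 4 * a ^ 3 * c ^ 2 + 4 * a ^ 2 * b ^ 3 + a * b ^ 5 - 3 * a * c ^ 3 +
      3 * b ^ 3 * c - 4 * b ^ 2 * c ^ 3 + b * c ^ 5 + 8,
    2 * a ^ 4 * b + a ^ 4 * c ^ 2 + a ^ 3 * b ^ 3 + 3 * a ^ 2 * c ^ 3 + 3 * a + b ^ 5 * c +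
      2 * b ^ 2 - 6 * b * c ^ 2 + c ^ 4,
    a ^ 5 * b - a ^ 3 * c ^ 3 + 2 * a ^ 2 + 6 * a * b ^ 2 - 2 * a * c ^ 4 + b ^ 4 -
      3 * b ^ 3 * c ^ 2 + b ^ 2 * c ^ 4 + 3 * c,
    -a ^ 3 + 6 * a ^ 2 * b ^ 2 + a ^ 2 * c ^ 4 + 5 * a * b ^ 4 + b ^ 6 - b ^ 2 * c -
      4 * b * c ^ 3 + c ^ 5,
    a ^ 4 + 3 * a ^ 3 * b ^ 2 + a ^ 2 * b ^ 4 + 6 * a ^ 2 * c - a * c ^ 5 - 2 * b ^ 4 * c +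
      b ^ 3 * c ^ 3 - 3 * b + 2 * c ^ 2,
    a ^ 5 + a ^ 4 * b ^ 2 + 4 * a ^ 3 * c - a * c ^ 2 + b ^ 3 + 6 * b ^ 2 * c ^ 2 - 5 * b * c ^ 4 +
      c ^ 6,
    a ^ 6 + 5 * a ^ 4 * c + a ^ 2 * b + 6 * a ^ 2 * c ^ 2 - 4 * a * b ^ 3 - b ^ 5 + b ^ 4 * c ^ 2 -
      c ^ 3]

theorem eulerDet_rotate (a b c : ℂ) : eulerDet c (-a) (-b) = eulerDet a b c := by
  simp only [eulerDet]
  ring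

set_option maxHeartbeats 1000000 in
-- the identity is a combination of `h` and `hτ` with large coefficients
theorem sum_eulerAdj_mul {a b c τ : ℂ} (h : a * b * c = 1) (hτ : τ ^ 7 = 1) :
    (∑ k, eulerAdj a b c k * τ ^ (k : ℕ)) * (-1 + τ * a - τ ^ 4 * b + τ ^ 2 * c) =
      eulerDet a b c := by
  simp only [Fin.sum_univ_seven, eulerAdj, eulerDet, Matrix.cons_val]
  norm_num
  grind

set_option maxHeartbeats 1000000 in
-- the identity is a combination of `h` and `hK` with large coefficients
theorem eulerAdj_klein {a b c : ℂ} (h : a * b * c = 1) (hK : b ^ 3 * c + b ^ 2 * c ^ 3 = 1) :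
    eulerAdj a b c 0 * (3 * (a ^ 2 * b) + 2 * (b * c) - a ^ 2 * c ^ 2) +
      eulerAdj a b c 4 * (7 * c) - eulerAdj a b c 1 * (7 * (a * b)) = 0 := by
  have hb : b * c ≠ 0 := fun h0 => by simp [mul_assoc, h0] at h
  have ha : a = b ^ 2 + b * c ^ 2 := mul_right_cancel₀ hb (by linear_combination h - hK)
  subst ha
  simp only [eulerAdj, Matrix.cons_val]
  grind

theorem eulerDet_chi_mul {q : ℂ} (hq : q ≠ 0) {a : ℤ} (ha : a = 1 ∨ a = 3 ∨ a = 5) :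
    eulerDet (chi q (2 * a) / chi q a) (chi q (3 * a) / chi q (2 * a))
      (chi q a / chi q (3 * a)) =
      eulerDet (chi q 2 / chi q 1) (chi q 3 / chi q 2) (chi q 1 / chi q 3) := by
  have hadd (k : ℤ) : chi q (k + 7) = -chi q k := chi_add_seven hq k
  have h5 : chi q 5 = chi q 2 := chi_mul_five hq odd_one
  have h6 : chi q 6 = chi q 1 := chi_mul_six hq odd_one
  rcases ha with rfl | rfl | rfl
  · norm_num
  · rw [show (3 : ℤ) * 3 = 2 + 7 by norm_num, hadd, show (2 : ℤ) * 3 = 6 by norm_num, h6,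
      ← eulerDet_rotate (chi q 2 / chi q 1), neg_div, div_neg]
  · rw [show (3 : ℤ) * 5 = 1 + 7 + 7 by norm_num, show (2 : ℤ) * 5 = 3 + 7 by norm_num, hadd, hadd,
      hadd, h5, neg_neg, ← eulerDet_rotate (chi q 2 / chi q 1),
      ← eulerDet_rotate (chi q 1 / chi q 3), neg_neg, neg_div, div_neg]

section Quotient

variable {X Y Z : ℂ} (hX : X ≠ 0) (hY : Y ≠ 0) (hZ : Z ≠ 0)
include hX hY hZ

theorem eulerPoly_ne_zero (hdet : eulerDet (Y / X) (Z / Y) (X / Z) ≠ 0) {τ : ℂ}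
    (hτ : τ ^ 7 = 1) : eulerPoly X Y Z τ ≠ 0 := by
  intro h
  have hadj := sum_eulerAdj_mul (a := Y / X) (b := Z / Y) (c := X / Z) (by field_simp) hτ
  rw [← eulerPoly, h, mul_zero] at hadj
  exact hdet hadj.symm

theorem rankPoly_div_eulerPoly (hdet : eulerDet (Y / X) (Z / Y) (X / Z) ≠ 0) {τ : ℂ}
    (hτ : τ ^ 7 = 1) :
    rankPoly X Y Z τ / eulerPoly X Y Z τ = (eulerDet (Y / X) (Z / Y) (X / Z))⁻¹ *
      ∑ k, eulerAdj (Y / X) (Z / Y) (X / Z) k *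
        ((3 * (Y * Z / X ^ 2) + 2 * (X / Y) - Y ^ 2 / Z ^ 2) * τ ^ (k : ℕ) +
          7 * (X / Z) * τ ^ (k + 3 : ℕ) - 7 * (Z / X) * τ ^ (k + 6 : ℕ)) := by
  have hadj := sum_eulerAdj_mul (a := Y / X) (b := Z / Y) (c := X / Z) (by field_simp) hτ
  rw [← eulerPoly] at hadj
  have hmul : rankPoly X Y Z τ * ∑ k, eulerAdj (Y / X) (Z / Y) (X / Z) k * τ ^ (k : ℕ) =
      ∑ k, eulerAdj (Y / X) (Z / Y) (X / Z) k *
        ((3 * (Y * Z / X ^ 2) + 2 * (X / Y) - Y ^ 2 / Z ^ 2) * τ ^ (k : ℕ) +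
          7 * (X / Z) * τ ^ (k + 3 : ℕ) - 7 * (Z / X) * τ ^ (k + 6 : ℕ)) := by
    rw [Finset.mul_sum]
    refine Finset.sum_congr rfl fun k _ => ?_
    rw [rankPoly]
    ring
  rw [← hmul, div_eq_iff (eulerPoly_ne_zero hX hY hZ hdet hτ), mul_assoc, mul_assoc, hadj,
    mul_comm (rankPoly _ _ _ _), inv_mul_cancel_left₀ hdet]

-- Only the powers of `τ` divisible by `7` survive the summation, and `eulerAdj_klein` says that
-- their coefficients cancel.
theorem sum_rankPoly_div_eulerPoly (hdet : eulerDet (Y / X) (Z / Y) (X / Z) ≠ 0)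
    (hklein : Z ^ 3 * X - Y ^ 3 * Z + X ^ 3 * Y = 0) {ξ : ℂ} (hξ : IsPrimitiveRoot ξ 7) :
    ∑ j ∈ Finset.range 7, rankPoly X Y Z (ξ ^ j) / eulerPoly X Y Z (ξ ^ j) = 0 := by
  have hcancel := eulerAdj_klein (a := Y / X) (b := Z / Y) (c := X / Z) (by field_simp)
    (by field_simp; linear_combination hklein)
  have hroot (j : ℕ) : (ξ ^ j) ^ 7 = 1 := by rw [pow_right_comm, hξ.pow_eq_one, one_pow]
  simp only [fun j => rankPoly_div_eulerPoly hX hY hZ hdet (hroot j), ← Finset.mul_sum]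
  refine mul_eq_zero_of_right _ ?_
  rw [Finset.sum_comm]
  simp only [← Finset.mul_sum, Finset.sum_sub_distrib, Finset.sum_add_distrib,
    sum_pow_pow_of_isPrimitiveRoot hξ, Fin.sum_univ_seven]
  norm_num
  have hYZX : Y * Z / X ^ 2 = (Y / X) ^ 2 * (Z / Y) := by field_simp
  have hXY : X / Y = Z / Y * (X / Z) := by field_simp
  have hYZ : Y ^ 2 / Z ^ 2 = (Y / X) ^ 2 * (X / Z) ^ 2 := by field_simp
  have hZX : Z / X = Y / X * (Z / Y) := by field_simp
  rw [hYZX, hXY, hYZ, hZX]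
  linear_combination 7 * hcancel

end Quotient

end RootsOfUnity

/-! ### Equidistribution defects -/

section Defect

theorem tri_natCast (n : ℕ) : tri n = n.choose 2 := by
  rw [tri, Nat.choose_two_right]
  cases n with
  | zero => simp
  | succ n => push_cast [Nat.add_sub_cancel]; simp

theorem summable_lambertSeries {x : ℂ} {t : ℕ} (ht : 0 < t) (c : ℕ) (hx1 : ‖x‖ < 1) :
    Summable fun k => rankTerm c x k / (1 - x ^ (t * (k + 1))) := by
  refine .of_norm_bounded ((summable_rankTerm c hx1).norm.mul_right (1 - ‖x‖)⁻¹) fun k => ?_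
  have hpow : ‖x ^ (t * (k + 1))‖ ≤ ‖x‖ := by
    rw [norm_pow]
    exact pow_le_of_le_one (norm_nonneg x) hx1.le (by positivity)
  have hsub := norm_sub_norm_le 1 (x ^ (t * (k + 1)))
  rw [norm_one] at hsub
  rw [norm_div, div_eq_mul_inv]
  gcongr
  linarith

theorem neg_one_zpow_mul_zpow_appellExp_succ (x : ℂ) {i : ℤ} {c : ℕ} (hc : (c : ℤ) = i + 1)
    (k : ℕ) : (-1) ^ ((k : ℤ) + 1) * x ^ appellExp i (k + 1) = -rankTerm c x k := by
  have hexp : appellExp i (k + 1) = ((k + 1) * c + 3 * (k + 1).choose 2 + (k + 1) : ℕ) := by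
    push_cast [appellExp, ← tri_natCast]
    linear_combination -((k : ℤ) + 1) * hc
  rw [hexp, zpow_natCast, zpow_add_one₀ (by norm_num), zpow_natCast, rankTerm]
  ring

section Series

variable {x : ℂ} (hx : x ≠ 0)
include hx

theorem neg_one_zpow_mul_zpow_appellExp_neg_succ {i : ℤ} {c d : ℕ} (hc : (c : ℤ) = d - i) (k : ℕ) :
    (-1) ^ (-((k : ℤ) + 1)) * x ^ appellExp i (-(k + 1)) * x ^ (d * (k + 1)) = -rankTerm c x k := by
  have hexp : appellExp i (-(k + 1)) + (d * (k + 1) : ℕ) =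
      ((k + 1) * c + 3 * (k + 1).choose 2 + (k + 1) : ℕ) := by
    have htri := two_mul_tri ((k + 1 : ℕ) : ℤ)
    have hneg := two_mul_appellExp i (-(k + 1))
    push_cast [← tri_natCast] at htri ⊢
    linarith [congr_arg (fun y => ((k : ℤ) + 1) * y) hc]
  rw [mul_assoc, ← zpow_natCast x, ← zpow_add₀ hx, hexp, neg_one_zpow_neg,
    zpow_add_one₀ (by norm_num), zpow_natCast, zpow_natCast, rankTerm]
  ring

theorem eulerSeries_eq (hx1 : ‖x‖ < 1) :
    eulerSeries x = 1 - ∑' k, rankTerm 1 x k - ∑' k, rankTerm 0 x k := by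
  have hpos : HasSum (fun k : ℕ => (-1) ^ ((k : ℤ) + 1) * x ^ appellExp 0 (k + 1))
      (-∑' k, rankTerm 1 x k) :=
    (summable_rankTerm 1 hx1).hasSum.neg.congr_fun fun k =>
      neg_one_zpow_mul_zpow_appellExp_succ x (by norm_num) k
  have hneg : HasSum (fun k : ℕ => (-1) ^ (-((k : ℤ) + 1)) * x ^ appellExp 0 (-(k + 1)))
      (-∑' k, rankTerm 0 x k) :=
    (summable_rankTerm 0 hx1).hasSum.neg.congr_fun fun k => by
      simpa using neg_one_zpow_mul_zpow_appellExp_neg_succ hx (i := 0) (c := 0) (d := 0) (by simp) k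
  rw [eulerSeries, (HasSum.of_add_one_of_neg_add_one
    (f := fun n : ℤ => (-1) ^ n * x ^ appellExp 0 n) hpos hneg).tsum_eq, appellExp_zero, zpow_zero,
    zpow_zero]
  ring

theorem partitionGF_mul_eulerSeries (hx1 : ‖x‖ < 1 / 2) : partitionGF x * eulerSeries x = 1 := by
  rw [eulerSeries_eq hx (by linarith), partitionGF_mul_one_sub hx1]

theorem rankSeries_eq (hx1 : ‖x‖ < 1) {i : ℕ} (hi : i ≤ 7) :
    rankSeries i x = lambertSeries 7 (7 - i) x - lambertSeries 7 (i + 1) x := by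
  have hpos : HasSum (fun k : ℕ => (-1) ^ ((k : ℤ) + 1) * x ^ appellExp i (k + 1) *
      (1 - x ^ (7 * ((k : ℤ) + 1)))⁻¹) (-lambertSeries 7 (i + 1) x) :=
    (summable_lambertSeries (by norm_num) (i + 1) hx1).hasSum.neg.congr_fun fun k => by
      rw [neg_one_zpow_mul_zpow_appellExp_succ x (c := i + 1) (by simp), neg_mul, div_eq_mul_inv]
      norm_cast
  have hneg : HasSum (fun k : ℕ => (-1) ^ (-((k : ℤ) + 1)) * x ^ appellExp i (-(k + 1)) *
      (1 - x ^ (7 * (-((k : ℤ) + 1))))⁻¹) (lambertSeries 7 (7 - i) x) :=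
    (summable_lambertSeries (by norm_num) (7 - i) hx1).hasSum.congr_fun fun k => by
      have hterm := neg_one_zpow_mul_zpow_appellExp_neg_succ hx (i := i) (c := 7 - i) (d := 7)
        (by lia) k
      have hinv : x ^ (7 * (-((k : ℤ) + 1))) = (x ^ (7 * (k + 1)))⁻¹ := by
        rw [mul_neg, zpow_neg]
        norm_cast
      have hpow : x ^ (7 * (k + 1)) ≠ 0 := pow_ne_zero _ hx
      have hsub : 1 - (x ^ (7 * (k + 1)))⁻¹ = -(1 - x ^ (7 * (k + 1))) / x ^ (7 * (k + 1)) := by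
        rw [neg_sub, sub_div, div_self hpow, one_div]
      rw [hinv, hsub, inv_div, div_neg]
      linear_combination -(1 - x ^ (7 * (k + 1)))⁻¹ * hterm
  rw [rankSeries, (HasSum.of_add_one_of_neg_add_one (f := fun n : ℤ =>
    (-1) ^ n * x ^ appellExp i n * (1 - x ^ (7 * n))⁻¹) hpos hneg).tsum_eq]
  simp only [mul_zero, zpow_zero, sub_self, inv_zero]
  ring

end Series

/-- The defect in the linear relation between `p(n)` and the counts `sumRankGe 7 (i + 1) n` and
`sumRankGe 7 (7 - i) n` which holds when the rank is equidistributed modulo `7`. -/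
def rankDefect (i n : ℕ) : ℤ :=
  (3 - i) * Fintype.card (Nat.Partition n) - 7 * (sumRankGe 7 (i + 1) n - sumRankGe 7 (7 - i) n)

theorem hasSum_rankDefect {i : ℕ} (hi : i < 7) {x : ℂ} (hx : x ≠ 0) (hx1 : ‖x‖ < 1 / 2) :
    HasSum (fun n => (rankDefect i n : ℂ) * x ^ n)
      (partitionGF x * (3 - i + 7 * rankSeries i x)) := by
  have hsum := ((summable_partitionGF hx1).hasSum.mul_left (3 - i : ℂ)).sub
    (((hasSum_sumRankGe (t := 7) (c := i + 1) (by norm_num) (by lia) hx1).sub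
      (hasSum_sumRankGe (t := 7) (c := 7 - i) (by norm_num) (by lia) hx1)).mul_left 7)
  have hgf : partitionGF x * (3 - i + 7 * rankSeries i x) = (3 - i) * partitionGF x -
      7 * (partitionGF x * lambertSeries 7 (i + 1) x -
        partitionGF x * lambertSeries 7 (7 - i) x) := by
    rw [rankSeries_eq hx (by linarith) hi.le]
    ring
  rw [hgf]
  refine hsum.congr_fun fun n => ?_
  push_cast [rankDefect]
  ring

/-- The conditions on `q` under which the theta values that occur as denominators in the
seven-dissections do not vanish. They hold for all small positive `q`. -/
structure IsGeneric (q : ℝ) : Prop where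
  pos : 0 < q
  lt_half : q < 1 / 2
  chi_ne_zero : ∀ k : ℤ, ¬ 7 ∣ k → chi q k ≠ 0
  deriv_theta_one_ne_zero : deriv (theta ((q : ℂ) ^ 49)) 1 ≠ 0
  exists_theta_ne_zero : ∃ ω : ℂ, ω ^ 2 + ω + 1 = 0 ∧ theta ((q : ℂ) ^ 49) ω ≠ 0
  eulerDet_ne_zero :
    eulerDet (chi q 2 / chi q 1) (chi q 3 / chi q 2) (chi q 1 / chi q 3) ≠ 0

namespace IsGeneric

variable {q : ℝ} (h : IsGeneric q)
include h

theorem mul_root_ne_zero {t : ℂ} (ht : t ^ 7 = 1) : t * q ≠ 0 :=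
  mul_ne_zero (ne_zero_of_norm_eq_one (Complex.norm_eq_one_of_pow_eq_one ht (by norm_num)))
    (ofReal_ne_zero_of_pos h.pos)

theorem norm_mul_root_lt {t : ℂ} (ht : t ^ 7 = 1) : ‖t * q‖ < 1 / 2 := by
  rw [norm_mul, Complex.norm_eq_one_of_pow_eq_one ht (by norm_num), one_mul, Complex.norm_real,
    Real.norm_of_nonneg h.pos.le]
  exact h.lt_half

variable {i : ℕ} (hi : i < 3)
include hi

theorem eulerPoly_chi_ne_zero {a : ℤ} (ha : a = 2 * i + 1) {τ : ℂ} (hτ : τ ^ 7 = 1) :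
    eulerPoly (chi q a) (chi q (2 * a)) (chi q (3 * a)) τ ≠ 0 :=
  eulerPoly_ne_zero (h.chi_ne_zero _ (by lia)) (h.chi_ne_zero _ (by lia))
    (h.chi_ne_zero _ (by lia))
    ((eulerDet_chi_mul (ofReal_ne_zero_of_pos h.pos) (by lia)).trans_ne h.eulerDet_ne_zero) hτ

theorem exists_partitionGF_mul_rankSeries {a : ℤ} (ha : a = 2 * i + 1) :
    ∃ α γ : ℂ, ∀ t τ : ℂ, t ^ 7 = 1 → τ = t ^ (5 * a ^ 2) →
      t ^ 2 * (partitionGF (t * q) * (3 - i + 7 * rankSeries i (t * q))) =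
        α * τ ^ 6 + γ * (rankPoly (chi q a) (chi q (2 * a)) (chi q (3 * a)) τ /
          eulerPoly (chi q a) (chi q (2 * a)) (chi q (3 * a)) τ) := by
  have hq0 := ofReal_ne_zero_of_pos h.pos
  have hq1 : q < 1 := by linarith [h.lt_half]
  obtain ⟨ω, hω, hθ⟩ := h.exists_theta_ne_zero
  obtain ⟨α, γ, hαγ⟩ := exists_rank_dissection h.pos hq1 ha h.chi_ne_zero (by lia)
    h.deriv_theta_one_ne_zero
  set K := (q : ℂ) ^ 2 * cubicTheta (q ^ 49) 1
  refine ⟨α / K, γ / K, fun t τ ht hτ => ?_⟩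
  have hinv := partitionGF_mul_eulerSeries (h.mul_root_ne_zero ht) (h.norm_mul_root_lt ht)
  rw [eulerSeries_mul_root_eq h.pos hq1 h.chi_ne_zero hω hθ ht,
    ← eulerPoly_chi_mul hq0 ht (a := a) (by lia), ← hτ] at hinv
  have hrank := hαγ t τ ht hτ
  rw [← rankSeries_mul_root h.pos hq1 ht, Int.cast_natCast] at hrank
  have hK : K ≠ 0 := fun hK => by simp [K, hK] at hinv
  have hE : eulerPoly (chi q a) (chi q (2 * a)) (chi q (3 * a)) τ ≠ 0 :=
    h.eulerPoly_chi_ne_zero hi ha (by rw [hτ, ← zpow_natCast, zpow_comm]; norm_cast; simp [ht])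
  rw [hrank]
  field_simp
  linear_combination (α * (τ ^ 6 * eulerPoly (chi q a) (chi q (2 * a)) (chi q (3 * a)) τ) +
    γ * rankPoly (chi q a) (chi q (2 * a)) (chi q (3 * a)) τ) * hinv

theorem sum_partitionGF_mul_rankSeries {ζ : ℂ} (hζ : IsPrimitiveRoot ζ 7) :
    ∑ j ∈ Finset.range 7, (ζ ^ j) ^ 2 *
      (partitionGF (ζ ^ j * q) * (3 - i + 7 * rankSeries i (ζ ^ j * q))) = 0 := by
  obtain ⟨a, ha⟩ : ∃ a : ℤ, a = 2 * i + 1 := ⟨_, rfl⟩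
  obtain ⟨α, γ, hαγ⟩ := h.exists_partitionGF_mul_rankSeries hi ha
  have hξ : IsPrimitiveRoot (ζ ^ (5 * a ^ 2)) 7 := hζ.zpow_of_gcd_eq_one _ (by
    obtain rfl | rfl | rfl : a = 1 ∨ a = 3 ∨ a = 5 := by lia
    all_goals decide)
  have hterm (j : ℕ) := hαγ (ζ ^ j) ((ζ ^ (5 * a ^ 2)) ^ j)
    (by rw [pow_right_comm, hζ.pow_eq_one, one_pow])
    (by rw [← zpow_natCast, ← zpow_natCast, zpow_comm])
  have hdet := eulerDet_chi_mul (ofReal_ne_zero_of_pos h.pos) (a := a) (by lia)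
  simp only [hterm, Finset.sum_add_distrib, ← Finset.mul_sum]
  rw [sum_pow_pow_of_isPrimitiveRoot hξ, sum_rankPoly_div_eulerPoly (h.chi_ne_zero _ (by lia))
    (h.chi_ne_zero _ (by lia)) (h.chi_ne_zero _ (by lia)) (hdet.trans_ne h.eulerDet_ne_zero)
    (chi_klein_mul h.pos (by linarith [h.lt_half]) (h.chi_ne_zero 2 (by norm_num)) (by lia)) hξ]
  norm_num

theorem hasSum_rankDefect_progression :
    HasSum (fun n => if 7 ∣ n + 2 then (rankDefect i n : ℂ) * (q : ℂ) ^ n else 0) 0 := by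
  obtain ⟨ζ, hζ⟩ : ∃ ζ : ℂ, IsPrimitiveRoot ζ 7 :=
    ⟨_, Complex.isPrimitiveRoot_exp 7 (by norm_num)⟩
  have hroot (j : ℕ) : (ζ ^ j) ^ 7 = 1 := by rw [pow_right_comm, hζ.pow_eq_one, one_pow]
  have hsum := hasSum_sum fun j (_ : j ∈ Finset.range 7) =>
    ((hasSum_rankDefect (by lia : i < 7) (h.mul_root_ne_zero (hroot j))
      (h.norm_mul_root_lt (hroot j))).mul_left ((ζ ^ j) ^ 2)).mul_left (7⁻¹ : ℂ)
  rw [← Finset.mul_sum, h.sum_partitionGF_mul_rankSeries hi hζ, mul_zero] at hsum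
  refine hsum.congr_fun fun n => ?_
  have hterm (j : ℕ) : 7⁻¹ * ((ζ ^ j) ^ 2 * ((rankDefect i n : ℂ) * (ζ ^ j * q) ^ n)) =
      7⁻¹ * (rankDefect i n * (q : ℂ) ^ n) * (ζ ^ j) ^ (n + 2) := by ring
  simp only [hterm, ← Finset.mul_sum, sum_pow_pow_of_isPrimitiveRoot hζ]
  split_ifs <;> push_cast <;> ring

end IsGeneric

end Defect

/-! ### The limit as `q` tends to zero -/

section Limit

open Filter Topology

theorem tendsto_tsum_mul_zpow {c : ℤ → ℂ} {e : ℤ → ℤ} (he : ∀ n, 0 ≤ e n)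
    (hs : Summable fun n => ‖c n‖ * (1 / 2 : ℝ) ^ e n) :
    Tendsto (fun q : ℝ => ∑' n, c n * (q : ℂ) ^ e n) (𝓝[>] 0) (𝓝 (∑' n, c n * 0 ^ e n)) := by
  refine tendsto_tsum_of_dominated_convergence hs (fun n => Tendsto.const_mul _ ?_) ?_
  · obtain ⟨m, hm⟩ := Int.eq_ofNat_of_zero_le (he n)
    simp only [hm, zpow_natCast]
    have hcont : Continuous fun q : ℝ => (q : ℂ) ^ m := by fun_prop
    simpa using (hcont.tendsto 0).mono_left nhdsWithin_le_nhds
  · filter_upwards [Ioo_mem_nhdsGT one_half_pos] with q hq n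
    rw [norm_mul, norm_zpow, Complex.norm_real, Real.norm_of_nonneg hq.1.le]
    gcongr
    exact zpow_le_zpow_left₀ (he n) hq.1.le hq.2.le

theorem tri_pos {n : ℤ} (h0 : n ≠ 0) (h1 : n ≠ 1) : 0 < tri n := by
  have htri := two_mul_tri n
  rcases lt_or_gt_of_ne h0 with hneg | hpos
  · nlinarith
  · nlinarith [mul_pos hpos (show 0 < n - 1 by lia)]

theorem tri_nonneg (n : ℤ) : 0 ≤ tri n := by
  by_cases h0 : n = 0
  · simp [h0, tri]
  by_cases h1 : n = 1
  · simp [h1, tri]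
  exact (tri_pos h0 h1).le

theorem tri_mul_add_mul_pos {r n : ℤ} (hr : 0 < r) (hr7 : r < 7) (hn : n ≠ 0) :
    0 < 49 * tri n + 7 * r * n := by
  have htri := two_mul_tri n
  rcases lt_or_gt_of_ne hn with hneg | hpos
  · nlinarith [mul_pos_of_neg_of_neg hneg (show 7 * n - 7 + 2 * r < 0 by lia)]
  · nlinarith [mul_pos hpos (show 0 < 7 * n - 7 + 2 * r by lia)]

theorem tendsto_theta_zpow {r : ℤ} (hr : 0 < r) (hr7 : r < 7) :
    Tendsto (fun q : ℝ => theta ((q : ℂ) ^ 49) (q ^ (7 * r))) (𝓝[>] 0) (𝓝 1) := by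
  have hexp : ∀ n, 0 ≤ 49 * tri n + 7 * r * n := fun n => by
    rcases eq_or_ne n 0 with rfl | hn
    · simp [tri]
    · exact (tri_mul_add_mul_pos hr hr7 hn).le
  have hsum : Summable fun n => ‖(-1 : ℂ) ^ n‖ * (1 / 2 : ℝ) ^ (49 * tri n + 7 * r * n) := by
    refine (summable_zpow_tri (ρ := (1 / 2) ^ 49) (r := (1 / 2) ^ (7 * r)) (by positivity)
      (by norm_num) (by positivity)).congr fun n => ?_
    rw [norm_zpow, norm_neg, norm_one, one_zpow, one_mul, zpow_add₀ (by norm_num), zpow_mul _ 49,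
      zpow_mul _ (7 * r)]
    norm_cast
  have hlim := tendsto_tsum_mul_zpow hexp hsum
  rw [tsum_eq_single 0 fun n hn => by
    rw [zero_zpow _ (tri_mul_add_mul_pos hr hr7 hn).ne', mul_zero]] at hlim
  simp only [tri, zero_mul, mul_zero, add_zero, zpow_zero, mul_one, Int.zero_ediv] at hlim
  refine hlim.congr' ?_
  filter_upwards [self_mem_nhdsWithin] with q hq
  have hq0 := ofReal_ne_zero_of_pos hq
  refine tsum_congr fun n => ?_
  rw [thetaTerm, zpow_add₀ hq0, zpow_mul, zpow_mul _ (7 * r), ← mul_assoc]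
  norm_cast

theorem tendsto_theta {w : ℂ} (hw : ‖w‖ = 1) :
    Tendsto (fun q : ℝ => theta ((q : ℂ) ^ 49) w) (𝓝[>] 0) (𝓝 (1 - w)) := by
  have hsum : Summable fun n => ‖(-1) ^ n * w ^ n‖ * (1 / 2 : ℝ) ^ (49 * tri n) := by
    refine (summable_zpow_tri (ρ := (1 / 2) ^ 49) (r := 1) (by positivity)
      (by norm_num) (by positivity)).congr fun n => ?_
    rw [norm_mul, norm_zpow, norm_zpow, norm_neg, norm_one, one_zpow, one_mul, hw, one_zpow,
      one_mul, zpow_mul, mul_one]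
    norm_cast
  have hlim := tendsto_tsum_mul_zpow (fun n => by have := tri_nonneg n; lia) hsum
  rw [tsum_eq_sum (s := {0, 1}) fun n hn => by
    simp only [Finset.mem_insert, Finset.mem_singleton, not_or] at hn
    have := tri_pos hn.1 hn.2
    rw [zero_zpow _ (by lia), mul_zero]] at hlim
  have hval : ∑ n ∈ ({0, 1} : Finset ℤ), (-1) ^ n * w ^ n * 0 ^ (49 * tri n) = 1 - w := by
    simp [tri, sub_eq_add_neg]
  rw [hval] at hlim
  refine hlim.congr fun q => tsum_congr fun n => ?_
  rw [thetaTerm, zpow_mul]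
  norm_cast
  ring

theorem hasSum_deriv_theta_one {p : ℂ} (hp : p ≠ 0) (hp1 : ‖p‖ < 1) :
    HasSum (fun n : ℤ => (-1) ^ n * p ^ tri n * n) (deriv (theta p) 1) := by
  have hρ := norm_pos_iff.mpr hp
  have hderiv := Complex.hasSum_deriv_of_summable_norm (F := fun n z => thetaTerm p z n) (z := 1)
    (U := {z | 1 / 2 < ‖z‖ ∧ ‖z‖ < 2})
    ((summable_zpow_tri hρ hp1 one_half_pos).add (summable_zpow_tri hρ hp1 two_pos))
    (fun n z hz => ?_) ?_ (fun n z hz => ?_) (by norm_num)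
  · refine hderiv.congr_fun fun n => ?_
    simp [thetaTerm]
  · have hz0 : z ≠ 0 := norm_pos_iff.mp (one_half_pos.trans hz.1)
    simp only [thetaTerm]
    exact ((differentiableAt_zpow.mpr (Or.inl hz0)).const_mul _).differentiableWithinAt
  · exact (isOpen_lt continuous_const continuous_norm).inter
      (isOpen_lt continuous_norm continuous_const)
  · rw [norm_thetaTerm, ← mul_add]
    gcongr
    exact zpow_le_zpow_add_zpow one_half_pos hz.1.le hz.2.le n

theorem abs_le_two_zpow_add (n : ℤ) : |(n : ℝ)| ≤ 2 ^ n + (1 / 2) ^ n := by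
  have hbound (m : ℕ) : (m : ℝ) ≤ 2 ^ m + (1 / 2) ^ m :=
    le_add_of_le_of_nonneg (by exact_mod_cast Nat.lt_two_pow_self.le) (by positivity)
  obtain ⟨m, rfl | rfl⟩ := n.eq_nat_or_neg
  · simpa using hbound m
  · simpa [add_comm] using hbound m

theorem tendsto_deriv_theta_one :
    Tendsto (fun q : ℝ => deriv (theta ((q : ℂ) ^ 49)) 1) (𝓝[>] 0) (𝓝 (-1)) := by
  have hsum : Summable fun n : ℤ => ‖(-1 : ℂ) ^ n * n‖ * (1 / 2 : ℝ) ^ (49 * tri n) := by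
    refine .of_nonneg_of_le (fun n => by positivity) (fun n => ?_)
      ((summable_zpow_tri (ρ := (1 / 2) ^ 49) (r := 2) (by positivity) (by norm_num) two_pos).add
        (summable_zpow_tri (ρ := (1 / 2) ^ 49) (r := 1 / 2) (by positivity) (by norm_num)
          one_half_pos))
    rw [norm_mul, norm_zpow, norm_neg, norm_one, one_zpow, one_mul, Complex.norm_intCast,
      zpow_mul, ← mul_add, mul_comm]
    norm_cast
    gcongr
    exact_mod_cast abs_le_two_zpow_add n
  have hlim := tendsto_tsum_mul_zpow (fun n => by have := tri_nonneg n; lia) hsum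
  rw [tsum_eq_single 1 fun n hn => by
    rcases eq_or_ne n 0 with rfl | h0
    · simp
    · have := tri_pos h0 hn
      rw [zero_zpow _ (by lia), mul_zero]] at hlim
  have hval : (-1 : ℂ) ^ (1 : ℤ) * ((1 : ℤ) : ℂ) * 0 ^ (49 * tri 1) = -1 := by simp [tri]
  rw [hval] at hlim
  refine hlim.congr' ?_
  filter_upwards [Ioo_mem_nhdsGT one_pos] with q hq
  rw [← (hasSum_deriv_theta_one (pow_ne_zero 49 (ofReal_ne_zero_of_pos hq.1))
    (norm_pow_lt_one (norm_ofReal_lt_one hq.1 hq.2) (by norm_num))).tsum_eq]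
  refine tsum_congr fun n => ?_
  rw [zpow_mul]
  norm_cast
  ring

theorem chi_ne_zero_of_residues {q : ℂ} (hq : q ≠ 0)
    (h : ∀ r ∈ Finset.Ioo (0 : ℤ) 7, theta (q ^ 49) (q ^ (7 * r)) ≠ 0) {k : ℤ} (hk : ¬ 7 ∣ k) :
    chi q k ≠ 0 := by
  rw [← Int.emod_add_mul_ediv k 7, chi_add_seven_mul hq]
  exact mul_ne_zero (zpow_ne_zero _ (by norm_num))
    (mul_ne_zero (zpow_ne_zero _ hq) (h _ (by rw [Finset.mem_Ioo]; lia)))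

theorem pow_mul_eulerDet {q : ℂ} (hq : q ≠ 0) (a b c : ℂ) :
    q ^ 14 * eulerDet (a / q ^ 2) (b / q) (c * q ^ 3) =
      a ^ 7 + 7 * a ^ 5 * c * q ^ 7 + 14 * a ^ 3 * c ^ 2 * q ^ 14 - 14 * a ^ 2 * b ^ 3 * q ^ 7 -
        7 * a * b ^ 5 * q ^ 7 - b ^ 7 * q ^ 7 + 14 * b ^ 2 * c ^ 3 * q ^ 21 -
        7 * b * c ^ 5 * q ^ 28 + c ^ 7 * q ^ 35 - 8 * q ^ 14 := by
  rw [eulerDet]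
  field_simp

theorem tendsto_pow_mul_eulerDet {a b c : ℝ → ℂ} (ha : Tendsto a (𝓝[>] 0) (𝓝 1))
    (hb : Tendsto b (𝓝[>] 0) (𝓝 1)) (hc : Tendsto c (𝓝[>] 0) (𝓝 1)) :
    Tendsto (fun q : ℝ => (q : ℂ) ^ 14 * eulerDet (a q / q ^ 2) (b q / q) (c q * q ^ 3))
      (𝓝[>] 0) (𝓝 1) := by
  have hq : Tendsto (fun q : ℝ => (q : ℂ)) (𝓝[>] 0) (𝓝 0) := by
    simpa using (Complex.continuous_ofReal.tendsto 0).mono_left nhdsWithin_le_nhds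
  have hcont : Continuous fun v : ℂ × ℂ × ℂ × ℂ =>
      v.2.1 ^ 7 + 7 * v.2.1 ^ 5 * v.2.2.2 * v.1 ^ 7 + 14 * v.2.1 ^ 3 * v.2.2.2 ^ 2 * v.1 ^ 14 -
        14 * v.2.1 ^ 2 * v.2.2.1 ^ 3 * v.1 ^ 7 - 7 * v.2.1 * v.2.2.1 ^ 5 * v.1 ^ 7 -
        v.2.2.1 ^ 7 * v.1 ^ 7 + 14 * v.2.2.1 ^ 2 * v.2.2.2 ^ 3 * v.1 ^ 21 -
        7 * v.2.2.1 * v.2.2.2 ^ 5 * v.1 ^ 28 + v.2.2.2 ^ 7 * v.1 ^ 35 - 8 * v.1 ^ 14 := by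
    fun_prop
  have hlim := (hcont.tendsto (0, 1, 1, 1)).comp
    (hq.prodMk_nhds (ha.prodMk_nhds (hb.prodMk_nhds hc)))
  norm_num at hlim
  refine hlim.congr' ?_
  filter_upwards [self_mem_nhdsWithin] with q hq0
  rw [pow_mul_eulerDet (ofReal_ne_zero_of_pos hq0)]
  rfl

theorem eventually_eulerDet_ne_zero : ∀ᶠ q : ℝ in 𝓝[>] 0,
    eulerDet (chi q 2 / chi q 1) (chi q 3 / chi q 2) (chi q 1 / chi q 3) ≠ 0 := by
  have h1 := tendsto_theta_zpow (r := 1) (by norm_num) (by norm_num)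
  have h2 := tendsto_theta_zpow (r := 2) (by norm_num) (by norm_num)
  have h3 := tendsto_theta_zpow (r := 3) (by norm_num) (by norm_num)
  have hlim := tendsto_pow_mul_eulerDet (by simpa using h2.div h1 one_ne_zero)
    (by simpa using h3.div h2 one_ne_zero) (by simpa using h1.div h3 one_ne_zero)
  filter_upwards [hlim.eventually_ne one_ne_zero, self_mem_nhdsWithin] with q hne hq
  have hq0 := ofReal_ne_zero_of_pos hq
  have ht1 : tri (1 - 3) = (3 : ℕ) := by decide
  have ht2 : tri (2 - 3) = 1 := by decide
  have ht3 : tri (3 - 3) = 0 := by decide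
  have ha (x y : ℂ) : (q : ℂ) * y / (q ^ 3 * x) = y / x / q ^ 2 := by field_simp
  have hb (y z : ℂ) : z / ((q : ℂ) * y) = z / y / q := by field_simp
  have hc (x z : ℂ) : (q : ℂ) ^ 3 * x / z = x / z * q ^ 3 := by field_simp
  rw [chi, chi, chi, ht1, ht2, ht3, zpow_zero, one_mul, zpow_one, zpow_natCast, ha, hb, hc]
  exact right_ne_zero_of_mul hne

theorem eventually_isGeneric : ∀ᶠ q : ℝ in 𝓝[>] 0, IsGeneric q := by
  obtain ⟨ω, hω⟩ : ∃ ω : ℂ, IsPrimitiveRoot ω 3 :=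
    ⟨_, Complex.isPrimitiveRoot_exp 3 (by norm_num)⟩
  have hω_sum : ω ^ 2 + ω + 1 = 0 := by
    have hgeom := hω.geom_sum_eq_zero (by norm_num)
    simp only [Finset.sum_range_succ, Finset.sum_range_zero] at hgeom
    linear_combination hgeom
  have hθω := (tendsto_theta (hω.norm'_eq_one (by norm_num))).eventually_ne
    (sub_ne_zero.mpr (hω.ne_one (by norm_num)).symm)
  have hθ : ∀ᶠ q : ℝ in 𝓝[>] 0, ∀ r ∈ Finset.Ioo (0 : ℤ) 7,
      theta ((q : ℂ) ^ 49) (q ^ (7 * r)) ≠ 0 := by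
    rw [eventually_all_finset]
    intro r hr
    rw [Finset.mem_Ioo] at hr
    exact (tendsto_theta_zpow hr.1 hr.2).eventually_ne one_ne_zero
  filter_upwards [hθω, hθ, eventually_eulerDet_ne_zero,
    tendsto_deriv_theta_one.eventually_ne (neg_ne_zero.mpr one_ne_zero),
    Ioo_mem_nhdsGT one_half_pos] with q hθωq hθq hdet hderiv hq
  exact {
    pos := hq.1
    lt_half := hq.2
    chi_ne_zero := fun _ => chi_ne_zero_of_residues (ofReal_ne_zero_of_pos hq.1) hθq
    deriv_theta_one_ne_zero := hderiv
    exists_theta_ne_zero := ⟨ω, hω_sum, hθωq⟩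
    eulerDet_ne_zero := hdet }

theorem coeff_zero_eq_zero_of_eventually_hasSum {b : ℕ → ℂ}
    (h : ∀ᶠ q : ℝ in 𝓝[>] 0, HasSum (fun n => b n * (q : ℂ) ^ n) 0) : b 0 = 0 := by
  obtain ⟨ρ, hs, hρ⟩ := (h.and self_mem_nhdsWithin).exists
  have hlim : Tendsto (fun q : ℝ => ∑' n, b n * (q : ℂ) ^ n) (𝓝[>] 0)
      (𝓝 (∑' n, b n * 0 ^ n)) := by
    refine tendsto_tsum_of_dominated_convergence hs.summable.norm (fun n => ?_) ?_
    · have hcont : Continuous fun q : ℝ => b n * (q : ℂ) ^ n := by fun_prop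
      simpa using (hcont.tendsto 0).mono_left nhdsWithin_le_nhds
    · filter_upwards [Ioo_mem_nhdsGT hρ] with q hq n
      rw [norm_mul, norm_mul, norm_pow, norm_pow, Complex.norm_real, Complex.norm_real,
        Real.norm_of_nonneg hq.1.le, Real.norm_of_nonneg (le_of_lt hρ)]
      gcongr
      exacts [hq.1.le, hq.2.le]
  rw [tsum_eq_single 0 fun n hn => by rw [zero_pow hn, mul_zero], pow_zero, mul_one] at hlim
  exact tendsto_nhds_unique hlim
    (tendsto_const_nhds.congr' (h.mono fun q hq => hq.tsum_eq.symm))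

theorem coeff_eq_zero_of_eventually_hasSum {b : ℕ → ℂ}
    (h : ∀ᶠ q : ℝ in 𝓝[>] 0, HasSum (fun n => b n * (q : ℂ) ^ n) 0) (n : ℕ) : b n = 0 := by
  induction n using Nat.strong_induction_on with
  | _ n ih =>
    suffices hshift : ∀ᶠ q : ℝ in 𝓝[>] 0, HasSum (fun k => b (k + n) * (q : ℂ) ^ k) 0 by
      simpa using coeff_zero_eq_zero_of_eventually_hasSum hshift
    filter_upwards [h, self_mem_nhdsWithin] with q hs hq
    have hqn := pow_ne_zero n (ofReal_ne_zero_of_pos hq)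
    rw [← hasSum_nat_add_iff' n, Finset.sum_eq_zero fun m hm => by
      rw [ih m (Finset.mem_range.mp hm), zero_mul], sub_zero] at hs
    simpa [pow_add, ← mul_assoc, mul_inv_cancel_right₀ hqn] using hs.mul_right ((q : ℂ) ^ n)⁻¹

theorem rankDefect_eq_zero {i : ℕ} (hi : i < 3) (n : ℕ) : rankDefect i (7 * n + 5) = 0 := by
  have hcoeff := coeff_eq_zero_of_eventually_hasSum
    (b := fun n => if 7 ∣ n + 2 then (rankDefect i n : ℂ) else 0)
    (eventually_isGeneric.mono fun q hq => by
      simpa only [ite_mul, zero_mul] using hq.hasSum_rankDefect_progression hi) (7 * n + 5)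
  rw [if_pos (by lia)] at hcoeff
  exact_mod_cast hcoeff

theorem seven_mul_card_rank_modEq (n : ℕ) {k : ℕ} (hk : k < 7) :
    7 * (Finset.univ.filter fun π : Nat.Partition (7 * n + 5) => π.rank ≡ k [ZMOD 7]).card =
      Fintype.card (Nat.Partition (7 * n + 5)) := by
  refine card_rank_modEq_of_sumRankGe (t := 7) (fun c hc hc7 => ?_) hk
  obtain ⟨i, rfl⟩ := Nat.exists_eq_add_of_le' hc
  have hdefect := rankDefect_eq_zero (show i < 3 by lia) n
  rw [rankDefect] at hdefect
  rw [show 7 + 1 - (i + 1) = 7 - i by lia]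
  push_cast
  linear_combination 2 * hdefect

end Limit

end DysonRank

/-- Dyson's conjecture mod 7 (Atkin–Swinnerton-Dyer): for `0 ≤ k ≤ 6`,
`N(k,7,7n+5) = p(7n+5)/7`, where `N(k,t,m)` counts partitions of `m` whose rank is
congruent to `k` modulo `t`. -/
theorem rank_equidistribution_mod_seven (n : ℕ) (k : ℤ) (hk₀ : 0 ≤ k) (hk₁ : k ≤ 6) :
    (Nat.card {π : Nat.Partition (7 * n + 5) // π.rank ≡ k [ZMOD 7]} : ℚ) =
      (Nat.card (Nat.Partition (7 * n + 5)) : ℚ) / 7 := by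
  lift k to ℕ using hk₀
  have hcard := DysonRank.seven_mul_card_rank_modEq n (show k < 7 by lia)
  rw [Nat.card_eq_fintype_card, Nat.card_eq_fintype_card, Fintype.card_subtype, ← hcard]
  push_cast
  ring
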